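/- arXiv:1610.05804 — 2 statements merged into one kernel-verified Lean document; each statement's English description precedes it below -/
import Mathlib

section
/- Let q ≥ 3 be an integer and χ a non-principal quadratic Dirichlet character modulo q. Then there exists a prime p ≤ q⁴ with χ(p) = 1. -/
open Finset

theorem two_mul_pow_le_geom_sum_mul {t : ℝ} (h0 : 0 ≤ t) (h1 : t ≤ 1) (n : ℕ) :
    2 * n * t ^ n ≤ (∑ i ∈ range n, t ^ i) * (1 + t ^ n) := by
  induction n with
  | zero => simp
  | succ n ih =>
    have hg : (∑ i ∈ range n, t ^ i) * (1 - t) = 1 - t ^ n := geom_sum_mul_neg t n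
    rw [geom_sum_succ]
    set s := ∑ i ∈ range n, t ^ i
    have hp : 0 ≤ t ^ (2 * n + 1) - t ^ (2 * n + 2) :=
      sub_nonneg.2 (pow_le_pow_of_le_one h0 h1 (by omega))
    have key : (t * s + 1) * (1 + t ^ (n + 1)) - 2 * (n + 1) * t ^ (n + 1) =
        t * (s * (1 + t ^ n) - 2 * n * t ^ n) + (1 - t ^ (n + 1)) ^ 2 +
          (t ^ (2 * n + 1) - t ^ (2 * n + 2)) := by
      linear_combination -t ^ (n + 1) * hg
    have := mul_nonneg h0 (sub_nonneg.2 ih)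
    push_cast
    nlinarith [sq_nonneg (1 - t ^ (n + 1))]

theorem mul_pow_le_geom_sum_mul_geom_sum_succ {t : ℝ} (h0 : 0 ≤ t) (h1 : t ≤ 1) (n : ℕ) :
    n * (n + 1) * t ^ n ≤ (∑ i ∈ range n, t ^ i) * ∑ i ∈ range (n + 1), t ^ i := by
  induction n with
  | zero => simp
  | succ n ih =>
    have h := two_mul_pow_le_geom_sum_mul h0 h1 (n + 1)
    have hs : ∑ i ∈ range (n + 1 + 1), t ^ i =
        t * (∑ i ∈ range n, t ^ i) + 1 + t ^ (n + 1) := by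
      rw [sum_range_succ, geom_sum_succ]
    rw [hs]
    have := mul_le_mul_of_nonneg_left ih h0
    push_cast at h ⊢
    calc _ = t * (n * (n + 1) * t ^ n) + 2 * (n + 1) * t ^ (n + 1) := by ring
      _ ≤ _ := add_le_add this h
      _ = _ := by ring

/-- The coefficient comparing `1 / n` with the Lambert kernel `(1 - t) t ^ n / (1 - t ^ n)`. -/
noncomputable def lambertGap (t : ℝ) (n : ℕ) : ℝ := 1 / n - (1 - t) * t ^ n / (1 - t ^ n)

theorem lambertGap_eq {t : ℝ} (h1 : t < 1) (n : ℕ) :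
    lambertGap t n = 1 / n - t ^ n / ∑ i ∈ range n, t ^ i := by
  rw [lambertGap, ← geom_sum_mul_neg, mul_comm (1 - t) (t ^ n),
    mul_div_mul_right _ _ (sub_ne_zero.2 h1.ne')]

theorem lambertGap_one {t : ℝ} (h1 : t < 1) : lambertGap t 1 = 1 - t := by
  simp [lambertGap_eq h1]

theorem geom_sum_pos_of_nonneg {t : ℝ} (h0 : 0 ≤ t) (n : ℕ) :
    0 < ∑ i ∈ range (n + 1), t ^ i := by
  rw [geom_sum_succ]
  positivity

theorem lambertGap_nonneg {t : ℝ} (h0 : 0 ≤ t) (h1 : t < 1) (n : ℕ) :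
    0 ≤ lambertGap t (n + 1) := by
  rw [lambertGap_eq h1, sub_nonneg, div_le_div_iff₀ (geom_sum_pos_of_nonneg h0 n) (by positivity),
    one_mul]
  calc t ^ (n + 1) * (n + 1 : ℕ) = ∑ _i ∈ range (n + 1), t ^ (n + 1) := by
        simp [mul_comm]
    _ ≤ _ := sum_le_sum fun i hi =>
        pow_le_pow_of_le_one h0 h1.le (mem_range.1 hi).le

theorem lambertGap_succ_le {t : ℝ} (h0 : 0 ≤ t) (h1 : t < 1) (n : ℕ) :
    lambertGap t (n + 2) ≤ lambertGap t (n + 1) := by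
  have hs := geom_sum_pos_of_nonneg h0 n
  have hs' := geom_sum_pos_of_nonneg h0 (n + 1)
  have key := mul_pow_le_geom_sum_mul_geom_sum_succ h0 h1.le (n + 1)
  rw [lambertGap_eq h1, lambertGap_eq h1]
  have hstep : ∑ i ∈ range (n + 1 + 1), t ^ i = t * ∑ i ∈ range (n + 1), t ^ i + 1 :=
    geom_sum_succ
  have hdiff : t ^ (n + 1) / (∑ i ∈ range (n + 1), t ^ i) -
      t ^ (n + 2) / (∑ i ∈ range (n + 2), t ^ i) =
      t ^ (n + 1) / ((∑ i ∈ range (n + 1), t ^ i) * ∑ i ∈ range (n + 2), t ^ i) := by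
    rw [div_sub_div _ _ hs.ne' hs'.ne', show n + 2 = n + 1 + 1 from rfl, hstep]
    congr 1
    ring
  have hdiff' : 1 / ((n + 1 : ℕ) : ℝ) - 1 / ((n + 2 : ℕ) : ℝ) =
      1 / (((n + 1 : ℕ) : ℝ) * ((n + 1 : ℕ) + 1)) := by
    push_cast
    field_simp
    ring
  have : t ^ (n + 1) / ((∑ i ∈ range (n + 1), t ^ i) * ∑ i ∈ range (n + 2), t ^ i) ≤
      1 / (((n + 1 : ℕ) : ℝ) * ((n + 1 : ℕ) + 1)) := by
    rw [div_le_div_iff₀ (mul_pos hs hs') (by positivity)]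
    linarith
  linarith

/-- Abel's inequality. -/
theorem abs_sum_mul_le_of_antitone {b c : ℕ → ℝ} (hb : Antitone b) (hb0 : ∀ n, 0 ≤ b n) {Q : ℝ}
    (hc : ∀ n, |∑ i ∈ range n, c i| ≤ Q) (N : ℕ) :
    |∑ i ∈ range N, c i * b i| ≤ Q * b 0 := by
  have key : |∑ i ∈ range N, c i * b i - (∑ i ∈ range N, c i) * b N| ≤ Q * (b 0 - b N) := by
    induction N with
    | zero => simp
    | succ N ih =>
      have e : ∑ i ∈ range (N + 1), c i * b i - (∑ i ∈ range (N + 1), c i) * b (N + 1) =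
          (∑ i ∈ range N, c i * b i - (∑ i ∈ range N, c i) * b N) +
            (∑ i ∈ range (N + 1), c i) * (b N - b (N + 1)) := by
        rw [sum_range_succ, sum_range_succ]
        ring
      have hd : 0 ≤ b N - b (N + 1) := sub_nonneg.2 (hb N.le_succ)
      rw [e]
      refine (abs_add_le _ _).trans ?_
      rw [abs_mul, abs_of_nonneg hd]
      nlinarith [mul_le_mul_of_nonneg_right (hc (N + 1)) hd]
  have h2 : |(∑ i ∈ range N, c i) * b N| ≤ Q * b N := by
    rw [abs_mul, abs_of_nonneg (hb0 N)]
    exact mul_le_mul_of_nonneg_right (hc N) (hb0 N)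
  calc _ = |(∑ i ∈ range N, c i * b i - (∑ i ∈ range N, c i) * b N) +
        (∑ i ∈ range N, c i) * b N| := by ring_nf
    _ ≤ _ := (abs_add_le _ _).trans (by linarith)

theorem sum_Ioc_sum_divisors (N : ℕ) (g : ℕ → ℕ → ℝ) :
    ∑ n ∈ Ioc 0 N, ∑ d ∈ n.divisors, g d n =
      ∑ d ∈ Ioc 0 N, ∑ k ∈ Ioc 0 (N / d), g d (d * k) := by
  rw [sum_sigma', sum_sigma']
  refine sum_bij' (fun x _ => ⟨x.2, x.1 / x.2⟩) (fun y _ => ⟨y.1 * y.2, y.1⟩) ?_ ?_ ?_ ?_ ?_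
  · rintro ⟨n, d⟩ h
    simp only [mem_sigma, mem_Ioc, Nat.mem_divisors] at h ⊢
    obtain ⟨⟨h0, hN⟩, hd, -⟩ := h
    have hd0 := Nat.pos_of_dvd_of_pos hd h0
    exact ⟨⟨hd0, (Nat.le_of_dvd h0 hd).trans hN⟩,
      Nat.div_pos (Nat.le_of_dvd h0 hd) hd0, Nat.div_le_div_right hN⟩
  · rintro ⟨d, k⟩ h
    simp only [mem_sigma, mem_Ioc, Nat.mem_divisors] at h ⊢
    obtain ⟨⟨h0, hN⟩, hk, hk'⟩ := h
    rw [Nat.le_div_iff_mul_le h0, mul_comm] at hk'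
    exact ⟨⟨by positivity, hk'⟩, dvd_mul_right _ _, by positivity⟩
  · rintro ⟨n, d⟩ h
    simp only [mem_sigma, mem_Ioc, Nat.mem_divisors] at h
    simp [Nat.mul_div_cancel' h.2.1]
  · rintro ⟨d, k⟩ h
    simp only [mem_sigma, mem_Ioc] at h
    simp [Nat.mul_div_cancel_left _ h.1.1]
  · rintro ⟨n, d⟩ h
    simp only [mem_sigma, mem_Ioc, Nat.mem_divisors] at h
    simp [Nat.mul_div_cancel' h.2.1]

/-- A truncated Lambert series, rescaled by `1 - t`, is close to `∑ c n / n`. -/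
theorem abs_sum_div_sub_lambert_le {c : ℕ → ℝ} (hc1 : ∀ n, |c n| ≤ 1) {Q : ℝ}
    (hc : ∀ n, |∑ i ∈ range n, c (i + 1)| ≤ Q) {t : ℝ} (h0 : 0 ≤ t) (h1 : t < 1) (N : ℕ) :
    |∑ d ∈ Ioc 0 N, c d / d - (1 - t) * ∑ n ∈ Ioc 0 N, (∑ d ∈ n.divisors, c d) * t ^ n| ≤
      Q * (1 - t) + N * t ^ N := by
  have hF : ∑ n ∈ Ioc 0 N, (∑ d ∈ n.divisors, c d) * t ^ n =
      ∑ d ∈ Ioc 0 N, ∑ k ∈ Ioc 0 (N / d), c d * t ^ (d * k) := by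
    simp_rw [sum_mul]
    exact sum_Ioc_sum_divisors N fun d n => c d * t ^ n
  have hterm : ∀ d ∈ Ioc 0 N, c d / d - (1 - t) * ∑ k ∈ Ioc 0 (N / d), c d * t ^ (d * k) =
      c d * lambertGap t d + c d * ((1 - t) * t ^ (d * (N / d + 1)) / (1 - t ^ d)) := by
    intro d hd
    have hd0 : d ≠ 0 := (mem_Ioc.1 hd).1.ne'
    have hne : 1 - t ^ d ≠ 0 := (sub_pos.2 (pow_lt_one₀ h0 h1 hd0)).ne'
    have hgeom : ∑ k ∈ Ioc 0 (N / d), t ^ (d * k) =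
        (t ^ d - t ^ (d * (N / d + 1))) / (1 - t ^ d) := by
      rw [eq_div_iff hne]
      induction N / d with
      | zero => simp
      | succ m ih =>
        rw [sum_Ioc_succ_top (Nat.zero_le m), add_mul, ih]
        ring
    rw [← mul_sum, hgeom, lambertGap]
    ring
  have hgap : |∑ d ∈ Ioc 0 N, c d * lambertGap t d| ≤ Q * (1 - t) := by
    have := abs_sum_mul_le_of_antitone (b := fun n => lambertGap t (n + 1))
      (c := fun n => c (n + 1)) (antitone_nat_of_succ_le (lambertGap_succ_le h0 h1))
      (lambertGap_nonneg h0 h1) hc N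
    rw [← lambertGap_one h1]
    convert this using 2
    rw [range_eq_Ico, sum_Ico_add' (fun n => c n * lambertGap t n) 0 N 1]
    rfl
  have hrest : |∑ d ∈ Ioc 0 N, c d * ((1 - t) * t ^ (d * (N / d + 1)) / (1 - t ^ d))| ≤
      N * t ^ N := by
    refine (abs_sum_le_sum_abs _ _).trans ?_
    calc _ ≤ ∑ _d ∈ Ioc 0 N, t ^ N := sum_le_sum fun d hd => ?_
      _ = _ := by simp
    have hd0 : 0 < d := (mem_Ioc.1 hd).1
    have hpos : 0 < 1 - t ^ d := sub_pos.2 (pow_lt_one₀ h0 h1 hd0.ne')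
    have ht : 0 ≤ 1 - t := by linarith
    rw [abs_mul]
    have hle : |(1 - t) * t ^ (d * (N / d + 1)) / (1 - t ^ d)| ≤ t ^ N := by
      rw [abs_of_nonneg (by positivity), div_le_iff₀ hpos, mul_comm]
      refine mul_le_mul ?_ ?_ ht (by positivity)
      · exact pow_le_pow_of_le_one h0 h1.le (Nat.lt_mul_div_succ N hd0).le
      · exact sub_le_sub_left (pow_le_of_le_one h0 h1.le hd0.ne') 1
    exact (mul_le_mul (hc1 d) hle (abs_nonneg _) zero_le_one).trans (by rw [one_mul])
  rw [hF, mul_sum, ← sum_sub_distrib, sum_congr rfl hterm, sum_add_distrib]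
  exact (abs_add_le _ _).trans (add_le_add hgap hrest)

namespace DirichletCharacter

variable {q : ℕ}

theorem sum_range_eq_zero [NeZero q] {χ : DirichletCharacter ℝ q} (hχ : χ ≠ 1) :
    ∑ i ∈ range q, χ i = 0 := by
  rw [← MulChar.sum_eq_zero_of_ne_one hχ]
  refine sum_bij' (fun i _ => (i : ZMod q)) (fun a _ => a.val) ?_ ?_ ?_ ?_ ?_
  · simp
  · intro a _
    exact mem_range.2 a.val_lt
  · intro i hi
    exact ZMod.val_cast_of_lt (mem_range.1 hi)
  · intro a _
    exact ZMod.natCast_zmod_val a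
  · simp

theorem abs_sum_range_le [NeZero q] {χ : DirichletCharacter ℝ q} (hχ : χ ≠ 1)
    (h1 : ∀ n : ℕ, |χ n| ≤ 1) (N : ℕ) :
    |∑ i ∈ range N, χ i| ≤ q / 2 := by
  have triv : ∀ (m k : ℕ), |∑ i ∈ range m, χ ((k + i : ℕ) : ZMod q)| ≤ m := fun m k =>
    (abs_sum_le_sum_abs _ _).trans ((sum_le_sum fun i _ => h1 (k + i)).trans (by simp))
  induction N using Nat.strong_induction_on with
  | _ N ih =>
    rcases le_total q N with h | h
    · obtain ⟨m, rfl⟩ := Nat.exists_eq_add_of_le h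
      rw [sum_range_add, sum_range_eq_zero hχ, zero_add]
      simpa using ih m (by have := NeZero.pos q; omega)
    · obtain ⟨m, hm⟩ := Nat.exists_eq_add_of_le h
      have hz := sum_range_eq_zero hχ
      have hq : (q : ℝ) = N + m := by exact_mod_cast hm
      have e : ∑ i ∈ range q, χ i = ∑ i ∈ range N, χ i +
          ∑ i ∈ range m, χ ((N + i : ℕ) : ZMod q) := by
        conv_lhs => rw [show range q = range (N + m) by rw [← hm]]
        exact sum_range_add (fun i : ℕ => χ (i : ZMod q)) N m
      have a := triv N 0
      have b := triv m N
      simp only [zero_add] at a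
      rw [abs_le] at a b ⊢
      constructor <;> linarith

theorem abs_sum_range_succ_le (hq : 1 < q) {χ : DirichletCharacter ℝ q} (hχ : χ ≠ 1)
    (h1 : ∀ n : ℕ, |χ n| ≤ 1) (N : ℕ) :
    |∑ i ∈ range N, χ ((i + 1 : ℕ) : ZMod q)| ≤ q / 2 := by
  have : NeZero q := ⟨by omega⟩
  have : Fact (1 < q) := ⟨hq⟩
  have h := abs_sum_range_le hχ h1 (N + 1)
  rw [sum_range_succ', Nat.cast_zero, MulChar.map_zero, add_zero] at h
  exact h

/-- The Dirichlet convolution of the constant function `1` with a real character. -/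
noncomputable def realZetaMul (χ : DirichletCharacter ℝ q) : ArithmeticFunction ℝ :=
  ArithmeticFunction.zeta * toArithmeticFunction (χ ·)

theorem isMultiplicative_realZetaMul (χ : DirichletCharacter ℝ q) :
    χ.realZetaMul.IsMultiplicative :=
  ArithmeticFunction.isMultiplicative_zeta.natCast.mul <| isMultiplicative_toArithmeticFunction χ

theorem realZetaMul_apply (χ : DirichletCharacter ℝ q) (n : ℕ) :
    χ.realZetaMul n = ∑ d ∈ n.divisors, χ d := by
  rw [realZetaMul, ArithmeticFunction.coe_zeta_mul_apply]
  refine sum_congr rfl fun d hd => ?_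
  simp [toArithmeticFunction, (Nat.pos_of_mem_divisors hd).ne']

theorem realZetaMul_prime_pow (χ : DirichletCharacter ℝ q) {p : ℕ} (hp : p.Prime) (k : ℕ) :
    χ.realZetaMul (p ^ k) = ∑ i ∈ range (k + 1), χ p ^ i := by
  simp [realZetaMul_apply, Nat.sum_divisors_prime_pow hp]

theorem realZetaMul_eq_prod (χ : DirichletCharacter ℝ q) {n : ℕ} (hn : n ≠ 0) :
    χ.realZetaMul n = ∏ p ∈ n.primeFactors, ∑ i ∈ range (n.factorization p + 1), χ p ^ i := by
  rw [χ.isMultiplicative_realZetaMul.multiplicative_factorization _ hn]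
  exact prod_congr rfl fun p hp => realZetaMul_prime_pow χ (Nat.prime_of_mem_primeFactors hp) _

theorem geom_sum_neg_one_nonneg (k : ℕ) : (0 : ℝ) ≤ ∑ i ∈ range k, (-1) ^ i := by
  rw [neg_one_geom_sum]
  split_ifs <;> simp

theorem geom_sum_zero_eq_one (k : ℕ) : ∑ i ∈ range (k + 1), (0 : ℝ) ^ i = 1 := by
  simp [geom_sum_succ]

theorem realZetaMul_nonneg {χ : DirichletCharacter ℝ q}
    (hquad : ∀ n : ℕ, χ n = -1 ∨ χ n = 0 ∨ χ n = 1) (n : ℕ) : 0 ≤ χ.realZetaMul n := by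
  rcases eq_or_ne n 0 with rfl | hn
  · simp
  rw [realZetaMul_eq_prod χ hn]
  refine prod_nonneg fun p _ => ?_
  rcases hquad p with h | h | h <;> rw [h]
  · exact geom_sum_neg_one_nonneg _
  · rw [geom_sum_zero_eq_one]; exact zero_le_one
  · simp; positivity

theorem one_le_realZetaMul_sq {χ : DirichletCharacter ℝ q}
    (hquad : ∀ n : ℕ, χ n = -1 ∨ χ n = 0 ∨ χ n = 1) {m : ℕ} (hm : m ≠ 0) :
    1 ≤ χ.realZetaMul (m ^ 2) := by
  rw [realZetaMul_eq_prod χ (pow_ne_zero 2 hm)]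
  calc (1 : ℝ) = ∏ p ∈ (m ^ 2).primeFactors, 1 := by simp
    _ ≤ _ := prod_le_prod (fun _ _ => zero_le_one) fun p _ => ?_
  rcases hquad p with h | h | h <;> rw [h]
  · rw [neg_one_geom_sum, if_neg]
    simp
  · rw [geom_sum_zero_eq_one]
  · simp

theorem realZetaMul_le_one {χ : DirichletCharacter ℝ q}
    (hquad : ∀ n : ℕ, χ n = -1 ∨ χ n = 0 ∨ χ n = 1) {n : ℕ} (hn : n ≠ 0)
    (hp : ∀ p ∈ n.primeFactors, χ p ≠ 1) : χ.realZetaMul n ≤ 1 := by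
  rw [realZetaMul_eq_prod χ hn]
  refine prod_le_one (fun p _ => ?_) fun p hpn => ?_ <;> rcases hquad p with h | h | h
  · exact h ▸ geom_sum_neg_one_nonneg _
  · rw [h, geom_sum_zero_eq_one]; exact zero_le_one
  · rw [h]; simp; positivity
  · rw [h, neg_one_geom_sum]; split_ifs <;> simp
  · rw [h, geom_sum_zero_eq_one]
  · exact absurd h (hp p hpn)

/-- If no prime factor `p` of `n` has `χ p = 1`, then the convolution at `n` vanishes unless `n` is
a square times a divisor of the modulus. -/
theorem exists_eq_mul_sq_of_realZetaMul_ne_zero {χ : DirichletCharacter ℝ q}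
    (hquad : ∀ n : ℕ, χ n = -1 ∨ χ n = 0 ∨ χ n = 1) {n : ℕ} (hn : n ≠ 0)
    (hp : ∀ p ∈ n.primeFactors, χ p ≠ 1) (hne : χ.realZetaMul n ≠ 0) :
    ∃ d m : ℕ, d ∣ q ∧ d * m ^ 2 = n := by
  obtain ⟨a, b, hab, ha⟩ := Nat.sq_mul_squarefree n
  refine ⟨a, b, ?_, by rw [mul_comm, hab]⟩
  have ha0 : a ≠ 0 := ha.ne_zero
  have hb0 : b ^ 2 ≠ 0 := by
    rintro h
    exact hn (by rw [← hab, h, zero_mul])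
  rw [← Nat.prod_primeFactors_of_squarefree ha]
  refine prod_primes_dvd q (fun p h => (Nat.prime_of_mem_primeFactors h).prime) fun p h => ?_
  have hpp := Nat.prime_of_mem_primeFactors h
  have hpn : p ∈ n.primeFactors := by
    rw [← hab, Nat.primeFactors_mul hb0 ha0]
    exact mem_union_right _ h
  have hχ0 : χ p = 0 := by
    rcases hquad p with h' | h' | h'
    · refine absurd ?_ hne
      rw [realZetaMul_eq_prod χ hn]
      refine prod_eq_zero hpn ?_
      have hfa : a.factorization p = 1 := le_antisymm (ha.natFactorization_le_one p)
        ((hpp.dvd_iff_one_le_factorization ha0).1 (Nat.dvd_of_mem_primeFactors h))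
      rw [h', neg_one_geom_sum, if_pos]
      rw [← hab, Nat.factorization_mul hb0 ha0, Nat.factorization_pow]
      simp only [Finsupp.add_apply, Finsupp.smul_apply, smul_eq_mul, hfa]
      exact ⟨b.factorization p + 1, by ring⟩
    · exact h'
    · exact absurd h' (hp p hpn)
  by_contra hpq
  have hu : IsUnit (p : ZMod q) := (ZMod.isUnit_iff_coprime p q).2 ((hpp.coprime_iff_not_dvd).2 hpq)
  exact (hu.map χ).ne_zero hχ0

theorem sum_realZetaMul_mul_pow_le {χ : DirichletCharacter ℝ q} (hq : q ≠ 0)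
    (hquad : ∀ n : ℕ, χ n = -1 ∨ χ n = 0 ∨ χ n = 1) {N : ℕ}
    (hp : ∀ p : ℕ, p.Prime → p ≤ N → χ p ≠ 1) {s : ℝ} (hs : 0 ≤ s) :
    ∑ n ∈ Ioc 0 N, χ.realZetaMul n * s ^ n ≤
      ∑ d ∈ q.divisors, ∑ m ∈ Ioc 0 N, s ^ (d * m ^ 2) := by
  have hp' : ∀ n ∈ Ioc 0 N, ∀ p ∈ n.primeFactors, χ p ≠ 1 := fun n hn p h =>
    hp p (Nat.prime_of_mem_primeFactors h)
      ((Nat.le_of_mem_primeFactors h).trans (mem_Ioc.1 hn).2)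
  have hle : ∀ n ∈ Ioc 0 N, χ.realZetaMul n * s ^ n ≤
      ∑ x ∈ q.divisors ×ˢ Ioc 0 N with x.1 * x.2 ^ 2 = n, s ^ (x.1 * x.2 ^ 2) := by
    intro n hn
    have hn0 : n ≠ 0 := (mem_Ioc.1 hn).1.ne'
    have hnn : ∀ x ∈ (q.divisors ×ˢ Ioc 0 N).filter (fun x => x.1 * x.2 ^ 2 = n),
      0 ≤ s ^ (x.1 * x.2 ^ 2) := fun _ _ => pow_nonneg hs _
    by_cases h0 : χ.realZetaMul n = 0
    · rw [h0, zero_mul]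
      exact sum_nonneg hnn
    obtain ⟨d, m, hd, hdm⟩ := exists_eq_mul_sq_of_realZetaMul_ne_zero hquad hn0 (hp' n hn) h0
    have hd0 : 0 < d := Nat.pos_of_dvd_of_pos hd (Nat.pos_of_ne_zero hq)
    have hm0 : 0 < m := by
      rcases Nat.eq_zero_or_pos m with rfl | h
      · exact absurd (by simpa using hdm.symm) hn0
      · exact h
    have hmN : m ≤ N := by
      have : n ≤ N := (mem_Ioc.1 hn).2
      nlinarith
    refine le_trans ?_ (single_le_sum hnn (a := (d, m)) ?_)
    · rw [hdm]
      exact mul_le_of_le_one_left (pow_nonneg hs _) (realZetaMul_le_one hquad hn0 (hp' n hn))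
    · simp [hd, hq, hm0, hmN, hdm]
  refine (sum_le_sum hle).trans ?_
  rw [← sum_product']
  exact sum_fiberwise_le_sum_of_sum_fiber_nonneg fun _ _ => sum_nonneg fun _ _ => pow_nonneg hs _

theorem sum_pow_sq_le_sum_realZetaMul {χ : DirichletCharacter ℝ q}
    (hquad : ∀ n : ℕ, χ n = -1 ∨ χ n = 0 ∨ χ n = 1) {M N : ℕ} (hMN : M ^ 2 ≤ N) {t : ℝ}
    (ht : 0 ≤ t) :
    ∑ m ∈ Ioc 0 M, t ^ (m ^ 2) ≤ ∑ n ∈ Ioc 0 N, χ.realZetaMul n * t ^ n := by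
  have hinj : Set.InjOn (fun m : ℕ => m ^ 2) (Ioc 0 M) :=
    (Nat.pow_left_injective two_ne_zero).injOn
  calc ∑ m ∈ Ioc 0 M, t ^ (m ^ 2) ≤ ∑ m ∈ Ioc 0 M, χ.realZetaMul (m ^ 2) * t ^ (m ^ 2) :=
        sum_le_sum fun m hm => le_mul_of_one_le_left (pow_nonneg ht _)
          (one_le_realZetaMul_sq hquad (mem_Ioc.1 hm).1.ne')
    _ = ∑ n ∈ (Ioc 0 M).image (fun m : ℕ => m ^ 2), χ.realZetaMul n * t ^ n :=
        (sum_image (f := fun n => χ.realZetaMul n * t ^ n) hinj).symm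
    _ ≤ _ := sum_le_sum_of_subset_of_nonneg ?_ fun n _ _ =>
        mul_nonneg (realZetaMul_nonneg hquad n) (pow_nonneg ht _)
  intro n hn
  obtain ⟨m, hm, rfl⟩ := mem_image.1 hn
  rw [mem_Ioc] at hm ⊢
  exact ⟨by have := hm.1; positivity, (Nat.pow_le_pow_left hm.2 2).trans hMN⟩

end DirichletCharacter

theorem sum_exp_neg_mul_sq_le {a : ℝ} (ha : 0 < a) (M : ℕ) :
    ∑ m ∈ Ioc 0 M, Real.exp (-a * (m : ℝ) ^ 2) ≤ 1 / √a := by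
  have anti : AntitoneOn (fun x : ℝ => Real.exp (-a * x ^ 2)) (Set.Icc 0 (M : ℝ)) := by
    intro x hx y _ hxy
    refine Real.exp_le_exp.2 ?_
    have : x ^ 2 ≤ y ^ 2 := pow_le_pow_left₀ hx.1 hxy 2
    nlinarith
  have h := anti.sum_range_le_integral (integrable_exp_neg_mul_sq ha).integrableOn
    fun _ _ => (Real.exp_pos _).le
  rw [integral_gaussian_Ioi, range_eq_Ico,
    sum_Ico_add' (fun n : ℕ => Real.exp (-a * (n : ℝ) ^ 2)) 0 M 1] at h
  refine h.trans ?_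
  rw [Real.sqrt_div' _ ha.le, div_div, mul_comm, ← div_div]
  gcongr
  have : √Real.pi ≤ 2 := by
    rw [Real.sqrt_le_left two_pos.le]
    linarith [Real.pi_le_four]
  linarith

theorem sum_Ioc_inv_sqrt_le (n : ℕ) : ∑ d ∈ Ioc 0 n, 1 / √(d : ℝ) ≤ 2 * √n := by
  induction n with
  | zero => simp
  | succ n ih =>
    rw [sum_Ioc_succ_top (Nat.zero_le n)]
    have hb : 0 < √((n + 1 : ℕ) : ℝ) := Real.sqrt_pos.2 (by positivity)
    have ha := Real.sqrt_nonneg (n : ℝ)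
    have hb2 := Real.sq_sqrt (Nat.cast_nonneg (α := ℝ) (n + 1))
    have ha2 := Real.sq_sqrt (Nat.cast_nonneg (α := ℝ) n)
    have : 1 / √((n + 1 : ℕ) : ℝ) ≤ 2 * √((n + 1 : ℕ) : ℝ) - 2 * √(n : ℝ) := by
      rw [div_le_iff₀ hb]
      push_cast at *
      nlinarith [sq_nonneg (√((n : ℝ) + 1) - √(n : ℝ))]
    linarith

theorem sum_divisors_inv_sqrt_le (q : ℕ) :
    ∑ d ∈ q.divisors, 1 / √(d : ℝ) ≤ 3 * √√(q : ℝ) := by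
  rcases Nat.eq_zero_or_pos q with rfl | hq
  · simp
  set r := Nat.sqrt q with hr
  have hrq : (r : ℝ) ≤ √q := Real.nat_sqrt_le_real_sqrt
  have hqr : √(q : ℝ) ≤ r + 1 := Real.real_sqrt_le_nat_sqrt_succ
  have hpos : 0 < √(q : ℝ) := Real.sqrt_pos.2 (by exact_mod_cast hq)
  have hpos' : 0 < √√(q : ℝ) := Real.sqrt_pos.2 hpos
  rw [← sum_filter_add_sum_filter_not q.divisors (fun d => d ≤ r)]
  have h1 : ∑ d ∈ q.divisors with d ≤ r, 1 / √(d : ℝ) ≤ 2 * √√(q : ℝ) := by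
    refine (sum_le_sum_of_subset_of_nonneg (t := Ioc 0 r) ?_ fun _ _ _ => by positivity).trans
      ((sum_Ioc_inv_sqrt_le r).trans (by gcongr))
    intro d hd
    rw [mem_filter] at hd
    exact mem_Ioc.2 ⟨Nat.pos_of_mem_divisors hd.1, hd.2⟩
  have hcard : #{d ∈ q.divisors | ¬ d ≤ r} ≤ r := by
    refine (card_le_card_of_injOn (t := Ioc 0 r) (fun d => q / d) ?_ ?_).trans (by simp)
    · intro d hd
      simp only [coe_filter, Set.mem_ofPred_eq, Nat.mem_divisors, not_le] at hd
      obtain ⟨⟨⟨e, he⟩, -⟩, hd⟩ := hd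
      have hd0 : 0 < d := by omega
      have he0 : 0 < e := by
        rcases Nat.eq_zero_or_pos e with rfl | h
        · omega
        · exact h
      simp only [he, Nat.mul_div_cancel_left _ hd0, coe_Ioc, Set.mem_Ioc]
      refine ⟨he0, ?_⟩
      by_contra! hlt
      have := Nat.lt_succ_sqrt q
      rw [← hr] at this
      have := Nat.mul_le_mul (Nat.succ_le_of_lt hd) (Nat.succ_le_of_lt hlt)
      omega
    · intro d hd e he h
      simp only [coe_filter, Set.mem_ofPred_eq, Nat.mem_divisors] at hd he
      exact (Nat.div_eq_iff_eq_of_dvd_dvd hq.ne' hd.1.1 he.1.1).1 h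
  have h2 : ∑ d ∈ q.divisors with ¬ d ≤ r, 1 / √(d : ℝ) ≤ √√(q : ℝ) := by
    calc _ ≤ ∑ d ∈ q.divisors with ¬ d ≤ r, 1 / √√(q : ℝ) := by
          refine sum_le_sum fun d hd => ?_
          rw [mem_filter, not_le] at hd
          have : (r : ℝ) + 1 ≤ d := by exact_mod_cast hd.2
          gcongr
          linarith
      _ = #{d ∈ q.divisors | ¬ d ≤ r} * (1 / √√(q : ℝ)) := by simp
      _ ≤ √q * (1 / √√(q : ℝ)) := by
          gcongr
          exact le_trans (by exact_mod_cast hcard) hrq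
      _ = √√(q : ℝ) := by
          rw [mul_one_div, div_eq_iff hpos'.ne', Real.mul_self_sqrt hpos.le]
  linarith

theorem sum_divisors_sum_pow_mul_sq_le (q N : ℕ) {δ : ℝ} (h0 : 0 < δ) (h1 : δ ≤ 1) :
    ∑ d ∈ q.divisors, ∑ m ∈ Ioc 0 N, (1 - δ) ^ (d * m ^ 2) ≤ 3 * √√(q : ℝ) / √δ := by
  have hd : ∀ d ∈ q.divisors, ∑ m ∈ Ioc 0 N, (1 - δ) ^ (d * m ^ 2) ≤ 1 / √(d : ℝ) * (1 / √δ) := by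
    intro d hd
    have hd0 : (0 : ℝ) < d := by exact_mod_cast Nat.pos_of_mem_divisors hd
    rw [one_div_mul_one_div, ← Real.sqrt_mul hd0.le]
    refine le_trans (sum_le_sum fun m _ => ?_) (sum_exp_neg_mul_sq_le (mul_pos hd0 h0) N)
    calc (1 - δ) ^ (d * m ^ 2) ≤ Real.exp (-δ) ^ (d * m ^ 2) :=
          pow_le_pow_left₀ (by linarith) (Real.one_sub_le_exp_neg δ) _
      _ = _ := by
          rw [← Real.exp_nat_mul]
          push_cast
          ring_nf
  refine (sum_le_sum hd).trans ?_
  rw [← sum_mul, mul_one_div]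
  gcongr
  exact sum_divisors_inv_sqrt_le q

theorem sum_Ioc_one_sub_pow_sq_ge {ε : ℝ} (h1 : ε ≤ 1) (M : ℕ) :
    M - ε * (M * (M + 1) * (2 * M + 1) / 6) ≤ ∑ m ∈ Ioc 0 M, (1 - ε) ^ (m ^ 2) := by
  induction M with
  | zero => simp
  | succ M ih =>
    rw [sum_Ioc_succ_top (Nat.zero_le M)]
    have := one_add_mul_le_pow (a := -ε) (by linarith) ((M + 1) ^ 2)
    rw [← sub_eq_add_neg] at this
    push_cast at this ⊢
    linarith

theorem all_any_coprime_factorial :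
    (List.range 572).all (fun j => (List.range 63).any fun k =>
      Nat.beq (Nat.gcd ((k + 1) * (j + 4) + 1) (Nat.factorial 190)) 1) = true := by
  decide +kernel

theorem exists_prime_eq_mul_add_one {q : ℕ} (h4 : 4 ≤ q) (hq : q < 576) :
    ∃ k < 63, ((k + 1) * q + 1).Prime := by
  have hall := all_any_coprime_factorial
  simp only [List.all_eq_true, List.any_eq_true, List.mem_range, Nat.beq_eq] at hall
  obtain ⟨k, hk, h⟩ := hall (q - 4) (by omega)
  rw [Nat.sub_add_cancel h4] at h
  refine ⟨k, hk, ?_⟩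
  by_contra hp
  set p := (k + 1) * q + 1 with hpdef
  have hlt : p < 191 ^ 2 := by nlinarith
  have hp2 : 2 ≤ p := by nlinarith
  have hsq := Nat.minFac_sq_le_self (by omega : 0 < p) hp
  have hsmall : p.minFac < 191 := lt_of_pow_lt_pow_left₀ 2 (by omega) (hsq.trans_lt hlt)
  have hdvd := Nat.dvd_factorial p.minFac_pos (Nat.le_of_lt_succ hsmall)
  exact (Nat.minFac_prime (by omega : p ≠ 1)).one_lt.ne'
    (Nat.eq_one_of_dvd_coprimes h p.minFac_dvd hdvd)

theorem pow_mul_exp_neg_le {y : ℝ} (hy : 24 ≤ y) :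
    y ^ 10 * Real.exp (-(9 / 4 * y)) ≤ 1 / 2000 := by
  have h := Real.pow_div_factorial_le_exp (9 / 4 * y) (by positivity) 26
  rw [Real.exp_neg, ← div_eq_mul_inv, div_le_iff₀ (Real.exp_pos _)]
  have h16 : (24 : ℝ) ^ 16 ≤ y ^ 16 := pow_le_pow_left₀ (by norm_num) hy 16
  have hmul := mul_le_mul_of_nonneg_left h16 (show (0 : ℝ) ≤ y ^ 10 by positivity)
  have hfac : (9 / 4 * y) ^ 26 / (Nat.factorial 26 : ℝ) =
      (9 / 4) ^ 26 / (Nat.factorial 26 : ℝ) * (y ^ 10 * y ^ 16) := by ring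
  have hnum : (2000 : ℝ) ≤ (9 / 4) ^ 26 / (Nat.factorial 26 : ℝ) * 24 ^ 16 := by
    norm_num [Nat.factorial]
  have hc : (0 : ℝ) ≤ (9 / 4) ^ 26 / (Nat.factorial 26 : ℝ) := by positivity
  have h10 : (0 : ℝ) ≤ y ^ 10 := by positivity
  rw [hfac] at h
  nlinarith [mul_le_mul_of_nonneg_left hmul hc, mul_le_mul_of_nonneg_left hnum h10]

theorem exists_prime_le_of_576_le {q : ℕ} (hq : 576 ≤ q) {χ : DirichletCharacter ℝ q} (hχ : χ ≠ 1)
    (hquad : ∀ n : ℕ, χ n = -1 ∨ χ n = 0 ∨ χ n = 1) :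
    ∃ p : ℕ, p.Prime ∧ p ≤ q ^ 4 ∧ χ p = 1 := by
  by_contra! hno
  have habs : ∀ n : ℕ, |χ n| ≤ 1 := fun n => by
    rcases hquad n with h | h | h <;> simp [h]
  set y : ℝ := √(q : ℝ) with hy
  have hyq : (q : ℝ) = y ^ 2 := (Real.sq_sqrt (Nat.cast_nonneg q)).symm
  have hq' : (576 : ℝ) ≤ q := by exact_mod_cast hq
  have hy24 : 24 ≤ y := Real.le_sqrt_of_sq_le (by linarith)
  have hy0 : 0 < y := by linarith
  set ε : ℝ := 1 / (4 * y ^ 4) with hε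
  set δ : ℝ := 9 / 4 / y ^ 7 with hδ
  have hε0 : 0 < ε := by positivity
  have hδ0 : 0 < δ := by positivity
  have hδε : δ ≤ ε := by
    rw [hδ, hε, div_div, div_le_div_iff₀ (by positivity) (by positivity)]
    have h9 : 9 ≤ y ^ 3 := by nlinarith [pow_le_pow_left₀ (by norm_num) hy24 3]
    have : 0 ≤ y ^ 4 := by positivity
    nlinarith
  have hε1 : ε < 1 := by
    rw [hε, div_lt_one (by positivity)]
    nlinarith [pow_le_pow_left₀ (by norm_num) hy24 4]
  set N := q ^ 4 with hN
  have hNy : (N : ℝ) = y ^ 8 := by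
    rw [hN]
    push_cast
    rw [hyq]
    ring
  have hpart := DirichletCharacter.abs_sum_range_succ_le (by omega) hχ habs
  have hlow := abs_sum_div_sub_lambert_le (c := fun n => χ n) habs hpart
    (t := 1 - ε) (by linarith) (by linarith) N
  have hhigh := abs_sum_div_sub_lambert_le (c := fun n => χ n) habs hpart
    (t := 1 - δ) (by linarith) (by linarith) N
  simp only [← DirichletCharacter.realZetaMul_apply, sub_sub_cancel] at hlow hhigh
  have hF := DirichletCharacter.sum_pow_sq_le_sum_realZetaMul (M := 2 * q) (N := N) hquad
    (by rw [hN]; nlinarith [Nat.pow_le_pow_left hq 2, Nat.zero_le (q ^ 2)])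
    (t := 1 - ε) (by linarith)
  have hF' := (sum_Ioc_one_sub_pow_sq_ge hε1.le (2 * q)).trans hF
  have hG := (DirichletCharacter.sum_realZetaMul_mul_pow_le (by omega) hquad (N := N)
    (fun p hp hpN => hno p hp hpN) (s := 1 - δ) (by linarith)).trans
    (sum_divisors_sum_pow_mul_sq_le q N hδ0 (by linarith))
  set F := ∑ n ∈ Ioc 0 N, χ.realZetaMul n * (1 - ε) ^ n
  set G := ∑ n ∈ Ioc 0 N, χ.realZetaMul n * (1 - δ) ^ n
  have htail : (N : ℝ) * (1 - δ) ^ N ≤ 1 / 2000 / y ^ 2 := by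
    rw [le_div_iff₀ (by positivity)]
    refine le_trans ?_ (pow_mul_exp_neg_le hy24)
    have : (1 - δ) ^ N ≤ Real.exp (-(9 / 4 * y)) := by
      calc (1 - δ) ^ N ≤ Real.exp (-δ) ^ N :=
            pow_le_pow_left₀ (by linarith) (Real.one_sub_le_exp_neg δ) _
        _ = _ := by
            rw [← Real.exp_nat_mul, hNy, hδ]
            congr 1
            field_simp
    rw [hNy]
    calc _ = y ^ 10 * (1 - δ) ^ N := by ring
      _ ≤ _ := by gcongr
  have htail' : (N : ℝ) * (1 - ε) ^ N ≤ 1 / 2000 / y ^ 2 := by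
    refine le_trans ?_ htail
    have : 0 ≤ 1 - ε := by linarith
    gcongr
  have hδG : δ * G ≤ 9 / 2 / y ^ 3 := by
    calc δ * G ≤ δ * (3 * √y / √δ) := by gcongr
      _ = 3 * (√y * √δ) := by
          have := Real.mul_self_sqrt hδ0.le
          have := (Real.sqrt_pos.2 hδ0).ne'
          field_simp
          linarith
      _ = 3 * √((3 / 2 / y ^ 3) ^ 2) := by
          rw [← Real.sqrt_mul hy0.le, hδ]
          congr 2
          field_simp
          norm_num
      _ = _ := by
          rw [Real.sqrt_sq (by positivity)]
          ring
  have hεF : (5 / 24 - 1 / (8 * y ^ 2) - 1 / (48 * y ^ 4)) / y ^ 2 ≤ ε * F - ε * (y ^ 2 / 2) := by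
    have := mul_le_mul_of_nonneg_left hF' hε0.le
    push_cast at this
    rw [hyq] at this
    refine le_trans (le_of_eq ?_) (sub_le_sub_right this _)
    rw [hε]
    field_simp
    ring
  have hcomb : ε * F - ε * (y ^ 2 / 2) ≤
      δ * G + y ^ 2 / 2 * δ + 2 * (1 / 2000 / y ^ 2) := by
    rw [abs_le] at hlow hhigh
    rw [hyq] at hlow hhigh
    linarith [hlow.1, hhigh.2]
  have hmain : (5 / 24 - 1 / (8 * y ^ 2) - 1 / (48 * y ^ 4)) / y ^ 2 ≤
      (9 / 2 / y + 9 / 8 / y ^ 3 + 1 / 1000) / y ^ 2 := by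
    refine (hεF.trans hcomb).trans ?_
    have : y ^ 2 / 2 * δ = 9 / 8 / y ^ 3 / y ^ 2 := by
      rw [hδ]
      field_simp
      norm_num
    rw [this, add_div, add_div]
    have : 9 / 2 / y ^ 3 = 9 / 2 / y / y ^ 2 := by
      field_simp
    have : 2 * (1 / 2000 / y ^ 2) = 1 / 1000 / y ^ 2 := by ring
    linarith
  rw [div_le_div_iff_of_pos_right (by positivity)] at hmain
  have b1 : 9 / 2 / y ≤ 9 / 2 / 24 := by gcongr
  have b3 : 9 / 8 / y ^ 3 ≤ 9 / 8 / 24 ^ 3 := by gcongr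
  have b2 : 1 / (8 * y ^ 2) ≤ 1 / (8 * 24 ^ 2) := by gcongr
  have b4 : 1 / (48 * y ^ 4) ≤ 1 / (48 * 24 ^ 4) := by gcongr
  norm_num at b1 b2 b3 b4 hmain
  linarith

theorem stmt_13 (q : ℕ) (hq : 3 ≤ q) (χ : DirichletCharacter ℝ q) (hχ : χ ≠ 1)
    (hquad : ∀ n : ℕ, χ n = -1 ∨ χ n = 0 ∨ χ n = 1) :
    ∃ p : ℕ, p.Prime ∧ p ≤ q ^ 4 ∧ χ p = 1 := by
  rcases lt_or_ge q 576 with hlt | hge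
  · obtain rfl | hq4 := hq.eq_or_lt
    · refine ⟨7, by norm_num, by norm_num, ?_⟩
      rw [show ((7 : ℕ) : ZMod 3) = 1 from rfl, map_one]
    obtain ⟨k, hk, hp⟩ := exists_prime_eq_mul_add_one hq4 hlt
    refine ⟨_, hp, ?_, by simp⟩
    have hcube : 4 ^ 3 ≤ q ^ 3 := Nat.pow_le_pow_left hq4 3
    nlinarith
  · exact exists_prime_le_of_576_le hge hχ hquad
end

section
/- Let x ≥ 10^16 and let q be a positive integer with q ≤ x^{1/16}. Then for every residue class a modulo q with gcd(a,q) = 1, there exist primes p₁, p₂, p₃ (not necessarily distinct), each at most x^{1/3}, such that p₁p₂p₃ ≡ a (mod q). -/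
open Finset
open scoped Pointwise ArithmeticFunction.vonMangoldt

/-- A subset of density more than `2 / 5` in a finite abelian group whose threefold product set is
not everything lies in one coset of a subgroup of index two. -/
theorem exists_index_two_of_mul_mul_ne_univ {G : Type*} [CommGroup G] [Fintype G] [DecidableEq G]
    (A : Finset G) (hA : 2 * Fintype.card G < 5 * #A) (h : A * A * A ≠ univ) :
    ∃ H : Subgroup G, H.index = 2 ∧ ((∀ b ∈ A, b ∈ H) ∨ ∀ b ∈ A, b ∉ H) := by
  classical
  obtain ⟨g, hg⟩ : ∃ g, g ∉ A * A * A := by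
    by_contra! h'
    exact h (eq_univ_iff_forall.2 h')
  have hpos : 0 < Fintype.card G := Fintype.card_pos
  have disj : ∀ (B : Finset G) (x : G), x ∉ B * A → #B + #A ≤ Fintype.card G := by
    intro B x hx
    have h1 : Disjoint B (A⁻¹.image (x * ·)) := by
      rw [Finset.disjoint_left]
      intro b hb hb'
      obtain ⟨c, hc, rfl⟩ := mem_image.1 hb'
      refine hx (mem_mul.2 ⟨_, hb, c⁻¹, by simpa using hc, by group⟩)
    have h2 := card_le_univ (B ∪ A⁻¹.image (x * ·))
    rw [card_union_of_disjoint h1, card_image_of_injective _ (mul_right_injective x),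
      card_inv] at h2
    exact h2
  have hAA := disj _ g hg
  have hd : (#(A * A) : ℚ) < (3 / 2 : ℚ) * #A := by
    have : 2 * #(A * A) < 3 * #A := by omega
    have : (2 : ℚ) * #(A * A) < 3 * #A := by exact_mod_cast this
    linarith
  have hne : A.Nonempty := by
    rw [← card_pos]; omega
  obtain ⟨a, ha⟩ := hne
  obtain ⟨H, hF, hH, hsub⟩ := Finset.doubling_lt_three_halves hd
  have hcos := (hsub a ha).1
  have hmem : ∀ b ∈ A, a⁻¹ * b ∈ H := by
    intro b hb
    have := hcos hb
    rwa [Set.mem_smul_set_iff_inv_smul_mem] at this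
  have hcard : #A ≤ Nat.card H := by
    have : A.image (a⁻¹ * ·) ⊆ univ.filter (· ∈ H) := by
      intro c hc
      obtain ⟨b, hb, rfl⟩ := mem_image.1 hc
      simpa using hmem b hb
    have := card_le_card this
    rw [card_image_of_injective _ (mul_right_injective _)] at this
    rwa [Nat.card_eq_fintype_card, Fintype.card_subtype]
  have hlt : 2 * Nat.card H < 3 * #A := by
    rw [Nat.card_eq_fintype_card]
    have : (2 : ℚ) * Fintype.card H < 3 * #A := by linarith
    exact_mod_cast this
  have hidx : Nat.card H * H.index = Fintype.card G := by
    rw [Subgroup.card_mul_index, Nat.card_eq_fintype_card]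
  have hne1 : H.index ≠ 1 := by
    intro h1
    rw [h1, mul_one] at hidx
    have : ∃ x, x ∉ A * A := by
      by_contra! h'
      rw [eq_univ_iff_forall.2 h', card_univ] at hAA
      omega
    obtain ⟨x, hx⟩ := this
    have := disj _ x hx
    omega
  have hidx2 : H.index = 2 := by
    have h0 : H.index ≠ 0 := by
      intro h0; rw [h0] at hidx; omega
    have : H.index < 3 := by
      by_contra! h3
      nlinarith [Nat.mul_le_mul_left (Nat.card H) h3]
    omega
  refine ⟨H, hidx2, ?_⟩
  by_cases haH : a ∈ H
  · left
    intro b hb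
    simpa using H.mul_mem haH (hmem b hb)
  · right
    intro b hb hbH
    apply haH
    have := H.mul_mem hbH (H.inv_mem (hmem b hb))
    simpa using this

theorem exists_two_pow_dvd_sq_sub (k : ℕ) (n : ℤ) (hn : 8 ∣ n - 1) :
    ∃ y : ℤ, 2 ^ k ∣ y ^ 2 - n := by
  suffices h : ∃ y : ℤ, Odd y ∧ 2 ^ (k + 3) ∣ y ^ 2 - n by
    obtain ⟨y, -, hy⟩ := h
    exact ⟨y, (pow_dvd_pow 2 (by omega)).trans hy⟩
  induction k with
  | zero => exact ⟨1, odd_one, by rw [← dvd_neg]; norm_num; simpa using hn⟩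
  | succ k ih =>
    obtain ⟨y, hy, c, hc⟩ := ih
    rcases Int.even_or_odd c with ⟨e, he⟩ | ⟨e, he⟩
    · exact ⟨y, hy, e, by rw [hc, he]; ring⟩
    · obtain ⟨s, hs⟩ := hy
      refine ⟨y + 2 ^ (k + 2), ?_, e + s + 1 + 2 ^ k, ?_⟩
      · rw [Int.odd_add]
        exact ⟨fun _ => (Int.even_pow.2 ⟨even_two, by omega⟩), fun _ => ⟨s, hs⟩⟩
      · have h1 : (y + 2 ^ (k + 2)) ^ 2 - n
          = (y ^ 2 - n) + 2 ^ (k + 3) * y + 2 ^ (2 * k + 4) := by ring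
        rw [h1, hc, he, hs]; ring

theorem hom_two_pow_eq_of_dvd {k : ℕ} (χ : (ZMod (2 ^ k))ˣ →* ℤˣ) {m n : ℕ}
    (hm : m.Coprime (2 ^ k)) (hn : n.Coprime (2 ^ k)) (h : (8 : ℤ) ∣ m * n - 1) :
    χ (ZMod.unitOfCoprime m hm) = χ (ZMod.unitOfCoprime n hn) := by
  obtain ⟨y, hy⟩ := exists_two_pow_dvd_sq_sub k _ h
  have h1 : ((y : ZMod (2 ^ k))) ^ 2 = m * n := by
    have := (ZMod.intCast_zmod_eq_zero_iff_dvd (y ^ 2 - m * n) (2 ^ k)).2 (by exact_mod_cast hy)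
    push_cast at this
    exact sub_eq_zero.1 this
  have h2 : IsUnit (y : ZMod (2 ^ k)) := by
    rw [← isUnit_pow_iff two_ne_zero, h1]
    exact ((ZMod.unitOfCoprime m hm).isUnit).mul ((ZMod.unitOfCoprime n hn).isUnit)
  obtain ⟨u, hu⟩ := h2
  have h3 : u ^ 2 = ZMod.unitOfCoprime m hm * ZMod.unitOfCoprime n hn := by
    apply Units.ext
    simp [hu, h1]
  have h4 := congrArg χ h3
  rw [map_pow, map_mul, Int.units_sq] at h4
  rw [eq_comm, mul_eq_one_iff_eq_inv] at h4
  rw [h4, Int.units_inv_eq_self]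

/-- `χ` agrees with the Legendre symbols of `d` on all odd primes not dividing `q`. -/
def IsLegendre (q : ℕ) (χ : (ZMod q)ˣ →* ℤˣ) (d : ℤ) : Prop :=
  ∀ (p : ℕ) [Fact p.Prime] (hp : p.Coprime q), p ≠ 2 →
    (χ (ZMod.unitOfCoprime p hp) : ℤ) = legendreSym p d

theorem exists_isLegendre_two_pow {k : ℕ} (χ : (ZMod (2 ^ k))ˣ →* ℤˣ) :
    ∃ d : ℤ, d ≠ 0 ∧ d.natAbs ≤ 2 ∧ IsLegendre (2 ^ k) χ d := by
  have h3 : Nat.Coprime 3 (2 ^ k) := Nat.Coprime.pow_right _ (by norm_num)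
  have h5 : Nat.Coprime 5 (2 ^ k) := Nat.Coprime.pow_right _ (by norm_num)
  have h7 : Nat.Coprime 7 (2 ^ k) := Nat.Coprime.pow_right _ (by norm_num)
  have e7 : χ (ZMod.unitOfCoprime 7 h7) = χ (ZMod.unitOfCoprime 3 h3) *
      χ (ZMod.unitOfCoprime 5 h5) := by
    rw [← map_mul]
    have h15 : Nat.Coprime 15 (2 ^ k) := Nat.Coprime.pow_right _ (by norm_num)
    rw [hom_two_pow_eq_of_dvd χ h7 h15 (by norm_num)]
    congr 1
    apply Units.ext
    simp only [ZMod.coe_unitOfCoprime, Units.val_mul]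
    norm_num
  have key : ∀ (p : ℕ) [Fact p.Prime] (hp : p.Coprime (2 ^ k)), p ≠ 2 →
      (p % 8 = 1 ∧ χ (ZMod.unitOfCoprime p hp) = 1) ∨
      (p % 8 = 3 ∧ χ (ZMod.unitOfCoprime p hp) = χ (ZMod.unitOfCoprime 3 h3)) ∨
      (p % 8 = 5 ∧ χ (ZMod.unitOfCoprime p hp) = χ (ZMod.unitOfCoprime 5 h5)) ∨
      (p % 8 = 7 ∧ χ (ZMod.unitOfCoprime p hp) =
        χ (ZMod.unitOfCoprime 3 h3) * χ (ZMod.unitOfCoprime 5 h5)) := by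
    intro p hpp hp hp2
    have hodd : p % 2 = 1 := hpp.out.eq_two_or_odd.resolve_left hp2
    have : p % 8 = 1 ∨ p % 8 = 3 ∨ p % 8 = 5 ∨ p % 8 = 7 := by omega
    rcases this with h | h | h | h
    · refine Or.inl ⟨h, ?_⟩
      rw [hom_two_pow_eq_of_dvd χ hp (Nat.coprime_one_left (2 ^ k)) (by omega)]
      rw [← map_one χ]
      congr 1
      apply Units.ext
      simp
    · exact Or.inr (Or.inl ⟨h, hom_two_pow_eq_of_dvd χ hp h3 (by omega)⟩)
    · exact Or.inr (Or.inr (Or.inl ⟨h, hom_two_pow_eq_of_dvd χ hp h5 (by omega)⟩))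
    · refine Or.inr (Or.inr (Or.inr ⟨h, ?_⟩))
      rw [← e7]
      exact hom_two_pow_eq_of_dvd χ hp h7 (by omega)
  rcases Int.units_eq_one_or (χ (ZMod.unitOfCoprime 3 h3)) with c3 | c3 <;>
  rcases Int.units_eq_one_or (χ (ZMod.unitOfCoprime 5 h5)) with c5 | c5
  · refine ⟨1, by norm_num, by norm_num, fun p _ hp hp2 => ?_⟩
    rw [legendreSym.at_one]
    rcases key p hp hp2 with ⟨h, e⟩ | ⟨h, e⟩ | ⟨h, e⟩ | ⟨h, e⟩ <;> simp [e, c3, c5]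
  · refine ⟨-2, by norm_num, by norm_num, fun p _ hp hp2 => ?_⟩
    rw [legendreSym.at_neg_two hp2, ZMod.χ₈'_nat_eq_if_mod_eight]
    have : p % 2 ≠ 0 := by have := key p hp hp2; omega
    rcases key p hp hp2 with ⟨h, e⟩ | ⟨h, e⟩ | ⟨h, e⟩ | ⟨h, e⟩ <;> simp [e, c3, c5, h, this]
  · refine ⟨-1, by norm_num, by norm_num, fun p _ hp hp2 => ?_⟩
    rw [legendreSym.at_neg_one hp2, ZMod.χ₄_nat_eq_if_mod_four]
    have : p % 2 ≠ 0 := by have := key p hp hp2; omega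
    rcases key p hp hp2 with ⟨h, e⟩ | ⟨h, e⟩ | ⟨h, e⟩ | ⟨h, e⟩ <;> simp [e, c3, c5, this] <;> omega
  · refine ⟨2, by norm_num, by norm_num, fun p _ hp hp2 => ?_⟩
    rw [legendreSym.at_two hp2, ZMod.χ₈_nat_eq_if_mod_eight]
    have : p % 2 ≠ 0 := by have := key p hp hp2; omega
    rcases key p hp hp2 with ⟨h, e⟩ | ⟨h, e⟩ | ⟨h, e⟩ | ⟨h, e⟩ <;> simp [e, c3, c5, h, this]

theorem exists_isLegendre_odd_prime_pow {r k : ℕ} (hr : r.Prime) (hr2 : r ≠ 2) (hk : 0 < k)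
    (χ : (ZMod (r ^ k))ˣ →* ℤˣ) :
    ∃ d : ℤ, d ≠ 0 ∧ (d.natAbs = 1 ∨ d.natAbs = r) ∧ IsLegendre (r ^ k) χ d := by
  have := Fact.mk hr
  have : NeZero (r ^ k) := ⟨pow_ne_zero _ hr.ne_zero⟩
  by_cases hχ : χ = 1
  · refine ⟨1, one_ne_zero, by simp, fun p _ hp _ => ?_⟩
    rw [legendreSym.at_one, hχ]; simp
  obtain ⟨g, hg⟩ := (ZMod.isCyclic_units_of_prime_pow r hr hr2 k).exists_generator
  have hdvd : r ∣ r ^ k := dvd_pow_self r hk.ne'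
  let ψ : (ZMod (r ^ k))ˣ →* ℤˣ :=
    (Units.map (quadraticChar (ZMod r)).toMonoidHom).comp (ZMod.unitsMap hdvd)
  have hchar : ringChar (ZMod r) ≠ 2 := by rwa [ZMod.ringChar_zmod_n]
  have hψ : ψ ≠ 1 := by
    intro h
    obtain ⟨a, ha⟩ := quadraticChar_exists_neg_one' hchar
    obtain ⟨b, hb⟩ := ZMod.unitsMap_surjective hdvd a
    have := congrArg (fun f : (ZMod (r ^ k))ˣ →* ℤˣ => ((f b : ℤˣ) : ℤ)) h
    simp [ψ, hb, ha] at this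
  have hext : ∀ f : (ZMod (r ^ k))ˣ →* ℤˣ, f ≠ 1 → f g = -1 := by
    intro f hf
    refine (Int.units_eq_one_or (f g)).resolve_left fun h => hf ?_
    ext u
    obtain ⟨n, rfl⟩ := hg u
    simp [h]
  have heq : χ = ψ := by
    refine MonoidHom.ext fun u => ?_
    obtain ⟨n, rfl⟩ := hg u
    simp [hext χ hχ, hext ψ hψ]
  refine ⟨ZMod.χ₄ r * r, ?_, ?_, fun p hpp hp hp2 => ?_⟩
  · refine mul_ne_zero ?_ (by exact_mod_cast hr.ne_zero)
    rw [ZMod.χ₄_nat_eq_if_mod_four]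
    have := hr.eq_two_or_odd.resolve_left hr2
    split_ifs <;> simp
    omega
  · right
    rw [ZMod.χ₄_nat_eq_if_mod_four]
    have := hr.eq_two_or_odd.resolve_left hr2
    split_ifs <;> simp
    omega
  · have hne : ringChar (ZMod r) ≠ p := by
      rw [ZMod.ringChar_zmod_n]
      rintro rfl
      exact hr.one_lt.ne' ((Nat.coprime_pow_right_iff hk _ _).1 hp |> (Nat.coprime_self _).1)
    have := quadraticChar_odd_prime hchar hp2 hne
    rw [heq]
    simp only [ψ, legendreSym]
    rw [ZMod.card] at this
    push_cast
    rw [← this]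
    simp [ZMod.unitsMap, ZMod.coe_unitOfCoprime]

theorem exists_isLegendre (q : ℕ) : q ≠ 0 → ∀ χ : (ZMod q)ˣ →* ℤˣ,
    ∃ d : ℤ, d ≠ 0 ∧ d.natAbs ≤ q ∧ (∀ r : ℕ, r.Prime → (r : ℤ) ∣ d → r ∣ q) ∧
      IsLegendre q χ d := by
  induction q using Nat.recOnPosPrimePosCoprime with
  | zero => intro h; exact absurd rfl h
  | one =>
    intro _ χ
    refine ⟨1, one_ne_zero, by simp, fun r hr h => by exact_mod_cast h, fun p _ hp _ => ?_⟩
    rw [legendreSym.at_one, Subsingleton.elim (ZMod.unitOfCoprime p hp) 1, map_one, Units.val_one]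
  | prime_pow r k hr hk =>
    intro _ χ
    by_cases h2 : r = 2
    · subst h2
      obtain ⟨d, h0, hd, h⟩ := exists_isLegendre_two_pow χ
      refine ⟨d, h0, hd.trans (Nat.le_self_pow hk.ne' 2), fun s hs hsd => ?_, h⟩
      have : s ≤ 2 := (Nat.le_of_dvd (by omega) (Int.natCast_dvd.1 hsd)).trans hd
      have : s = 2 := by have := hs.two_le; omega
      subst this
      exact dvd_pow_self 2 hk.ne'
    · obtain ⟨d, h0, hd, h⟩ := exists_isLegendre_odd_prime_pow hr h2 hk χ
      refine ⟨d, h0, ?_, fun s hs hsd => ?_, h⟩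
      · have := Nat.le_self_pow hk.ne' r
        have := hr.pos
        omega
      · have := Int.natCast_dvd.1 hsd
        rcases hd with hd | hd
        · rw [hd] at this
          exact absurd (Nat.dvd_one.1 this) hs.ne_one
        · rw [hd] at this
          exact this.trans (dvd_pow_self r hk.ne')
  | coprime a b ha hb hab iha ihb =>
    intro _ χ
    let e : (ZMod (a * b))ˣ ≃* (ZMod a)ˣ × (ZMod b)ˣ :=
      (Units.mapEquiv (ZMod.chineseRemainder hab).toMulEquiv).trans MulEquiv.prodUnits
    let χ' : (ZMod a)ˣ × (ZMod b)ˣ →* ℤˣ := χ.comp e.symm.toMonoidHom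
    obtain ⟨d₁, h01, hd1, hr1, h1⟩ := iha (by omega) (χ'.comp (MonoidHom.inl _ _))
    obtain ⟨d₂, h02, hd2, hr2, h2⟩ := ihb (by omega) (χ'.comp (MonoidHom.inr _ _))
    refine ⟨d₁ * d₂, mul_ne_zero h01 h02, ?_, fun r hr hrd => ?_, fun p hpp hp hp2 => ?_⟩
    · rw [Int.natAbs_mul]; exact Nat.mul_le_mul hd1 hd2
    · rcases (Nat.prime_iff_prime_int.1 hr).dvd_or_dvd hrd with h | h
      · exact (hr1 r hr h).mul_right b
      · exact (hr2 r hr h).mul_left a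
    · have hpa : p.Coprime a := hp.coprime_mul_right_right
      have hpb : p.Coprime b := hp.coprime_mul_left_right
      rw [legendreSym.mul, ← h1 p hpa hp2, ← h2 p hpb hp2, ← Units.val_mul]
      simp only [MonoidHom.comp_apply, ← map_mul]
      have he : e (ZMod.unitOfCoprime p hp) =
          (ZMod.unitOfCoprime p hpa, ZMod.unitOfCoprime p hpb) := by
        ext <;> simp [e, MulEquiv.prodUnits]
      have : ZMod.unitOfCoprime p hp = e.symm ((MonoidHom.inl _ _) (ZMod.unitOfCoprime p hpa) *
          (MonoidHom.inr _ _) (ZMod.unitOfCoprime p hpb)) := by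
        rw [MulEquiv.eq_symm_apply, he]
        simp
      rw [this]
      rfl

/-- A subgroup of index two of `(ZMod q)ˣ` contains the class of a small prime. -/
theorem exists_prime_mem_of_index_two {q : ℕ} (hq : q ≠ 0) {H : Subgroup (ZMod q)ˣ}
    (hH : H.index = 2) : ∃ p : ℕ, p.Prime ∧ p ≤ (2 * q * (1 + q)) ^ 2 + q ∧
      ∃ hp : p.Coprime q, ZMod.unitOfCoprime p hp ∈ H := by
  classical
  let χ : (ZMod q)ˣ →* ℤˣ :=
    { toFun := fun u => if u ∈ H then 1 else -1
      map_one' := by simp [H.one_mem]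
      map_mul' := fun u v => by
        by_cases hu : u ∈ H <;> by_cases hv : v ∈ H <;>
          simp [Subgroup.mul_mem_iff_of_index_two hH, hu, hv] }
  obtain ⟨d, hd0, hdq, hdr, hleg⟩ := exists_isLegendre q hq χ
  let m : ℕ := ∏ r ∈ (2 * q).primeFactors.filter (fun r : ℕ => ¬ (r : ℤ) ∣ d), r
  have hmle : m ≤ 2 * q := by
    refine Nat.le_of_dvd (by omega) (dvd_trans ?_ (Nat.prod_primeFactors_dvd (2 * q)))
    exact Finset.prod_dvd_prod_of_subset _ _ _ (Finset.filter_subset _ _)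
  have hm1 : 1 ≤ m := Nat.one_le_iff_ne_zero.2 <| Finset.prod_ne_zero_iff.2 fun r hr =>
    (Nat.prime_of_mem_primeFactors (Finset.mem_filter.1 hr).1).ne_zero
  let m' : ℕ := m * (1 + d.natAbs)
  have hm' : 1 + d.natAbs ≤ m' := Nat.le_mul_of_pos_left _ hm1
  let n : ℤ := (m' : ℤ) ^ 2 - d
  have hn : 1 < n := by
    have h1 : ((1 + d.natAbs : ℕ) : ℤ) ≤ m' := by exact_mod_cast hm'
    have h2 : 0 < |d| := abs_pos.2 hd0
    have h3 : d ≤ |d| := le_abs_self d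
    rw [Nat.cast_add, Int.natCast_natAbs] at h1
    push_cast at h1
    simp only [n]
    nlinarith
  have hp : (n.natAbs.minFac).Prime := Nat.minFac_prime (by omega)
  have hpn : ((n.natAbs.minFac : ℕ) : ℤ) ∣ n := Int.natCast_dvd.2 (Nat.minFac_dvd _)
  set p := n.natAbs.minFac
  have hdiv : ¬ p ∣ 2 * q := by
    intro h
    have hpmem : p ∈ (2 * q).primeFactors := Nat.mem_primeFactors.2 ⟨hp, h, by omega⟩
    have hpp : Prime (p : ℤ) := Nat.prime_iff_prime_int.1 hp
    by_cases hd : (p : ℤ) ∣ d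
    · have h1 : (p : ℤ) ∣ m' := by
        have : (p : ℤ) ∣ (m' : ℤ) ^ 2 := by
          have := dvd_add hpn hd
          simpa [n] using this
        exact hpp.dvd_of_dvd_pow this
      rcases hp.dvd_mul.1 (Int.natCast_dvd_natCast.1 h1) with h2 | h2
      · obtain ⟨r, hr, hpr⟩ := (Prime.dvd_finsetProd_iff hp.prime _).1 h2
        obtain ⟨hr1, hr2⟩ := Finset.mem_filter.1 hr
        have : p = r := (Nat.prime_dvd_prime_iff_eq hp (Nat.prime_of_mem_primeFactors hr1)).1 hpr
        exact hr2 (this ▸ hd)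
      · have := (Nat.dvd_add_left (Int.natCast_dvd.1 hd)).1 h2
        exact hp.one_lt.ne' (Nat.dvd_one.1 this)
    · have h1 : p ∣ m := Finset.dvd_prod_of_mem _ (Finset.mem_filter.2 ⟨hpmem, hd⟩)
      have h2 : (p : ℤ) ∣ (m' : ℤ) ^ 2 :=
        dvd_pow (Int.natCast_dvd_natCast.2 (h1.mul_right _)) two_ne_zero
      apply hd
      have := dvd_sub h2 hpn
      simpa [n] using this
  have hpq : p.Coprime q := (Nat.Prime.coprime_iff_not_dvd hp).2 fun h => hdiv (h.mul_left 2)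
  have hp2 : p ≠ 2 := fun h => hdiv (h ▸ dvd_mul_right 2 q)
  refine ⟨p, hp, ?_, hpq, ?_⟩
  · have h1 : p ≤ n.natAbs := Nat.minFac_le (by omega)
    have h2 : m' ≤ 2 * q * (1 + q) := Nat.mul_le_mul hmle (by omega)
    have h3 : n.natAbs ≤ m' ^ 2 + d.natAbs := by
      have := Int.natAbs_sub_le ((m' : ℤ) ^ 2) d
      rwa [Int.natAbs_pow, Int.natAbs_natCast] at this
    have h4 := Nat.pow_le_pow_left h2 2
    omega
  · have := Fact.mk hp
    have h1 := hleg p hpq hp2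
    have hdp : ¬ (p : ℤ) ∣ d := fun h => hdiv ((hdr p hp h).mul_left 2)
    have hdz : (d : ZMod p) ≠ 0 := by rwa [Ne, ZMod.intCast_zmod_eq_zero_iff_dvd]
    have h2 : legendreSym p d = 1 := by
      rw [legendreSym.eq_one_iff p hdz]
      have := (ZMod.intCast_zmod_eq_zero_iff_dvd n p).2 hpn
      simp only [n] at this
      push_cast at this
      exact ⟨m', by rw [← sq]; exact (sub_eq_zero.1 this).symm⟩
    rw [h2] at h1
    by_contra h3
    simp [χ, h3] at h1

/-- Some prime up to `q` has its class outside a given subgroup of index two of `(ZMod q)ˣ`. -/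
theorem exists_prime_notMem_of_index_two {q : ℕ} (hq : q ≠ 0) {H : Subgroup (ZMod q)ˣ}
    (hH : H.index = 2) : ∃ p : ℕ, p.Prime ∧ p ≤ q ∧
      ∃ hp : p.Coprime q, ZMod.unitOfCoprime p hp ∉ H := by
  by_contra! hall
  have key : ∀ n : ℕ, n ≤ q → ∀ hn : n.Coprime q, ZMod.unitOfCoprime n hn ∈ H := by
    intro n
    induction n using Nat.recOnMul with
    | zero =>
      intro _ hn
      rw [Nat.coprime_zero_left] at hn
      subst hn
      rw [Subsingleton.elim (ZMod.unitOfCoprime _ _) 1]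
      exact H.one_mem
    | one =>
      intro _ hn
      have : ZMod.unitOfCoprime 1 hn = 1 := Units.ext (by simp)
      rw [this]
      exact H.one_mem
    | prime p hp => exact fun h hn => hall p hp h hn
    | mul a b iha ihb =>
      intro h hn
      rcases Nat.eq_zero_or_pos (a * b) with h0 | h0
      · have : q = 1 := by rw [h0] at hn; simpa using hn
        subst this
        rw [Subsingleton.elim (ZMod.unitOfCoprime _ _) 1]
        exact H.one_mem
      have ha : a.Coprime q := hn.coprime_mul_right
      have hb : b.Coprime q := hn.coprime_mul_left
      have : ZMod.unitOfCoprime (a * b) hn = ZMod.unitOfCoprime a ha * ZMod.unitOfCoprime b hb :=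
        Units.ext (by simp)
      rw [this]
      have hpa := Nat.pos_of_mul_pos_right h0
      have hpb := Nat.pos_of_mul_pos_left h0
      exact H.mul_mem (iha ((Nat.le_mul_of_pos_right a (by positivity)).trans h) ha)
        (ihb ((Nat.le_mul_of_pos_left b (by positivity)).trans h) hb)
  have htop : H = ⊤ := by
    rw [eq_top_iff]
    intro u _
    have : NeZero q := ⟨hq⟩
    have h1 := key (u : ZMod q).val (ZMod.val_lt _).le (ZMod.val_coe_unit_coprime u)
    have h2 : ZMod.unitOfCoprime (u : ZMod q).val (ZMod.val_coe_unit_coprime u) = u :=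
      Units.ext (by simp)
    rwa [h2] at h1
  rw [htop, Subgroup.index_top] at hH
  omega

theorem sum_vonMangoldt_mul_div (N t : ℕ) (ht : t ≤ N) :
    ∑ n ∈ Icc 1 N, Λ n * ((t / n : ℕ) : ℝ) = Real.log (t.factorial : ℝ) := by
  induction t with
  | zero => simp
  | succ t ih =>
    have h1 : ∀ n ∈ Icc 1 N, Λ n * (((t + 1) / n : ℕ) : ℝ) =
        Λ n * ((t / n : ℕ) : ℝ) + if n ∣ t + 1 then Λ n else 0 := by
      intro n _
      rw [Nat.succ_div]
      split_ifs <;> push_cast <;> ring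
    rw [sum_congr rfl h1, sum_add_distrib, ih (by omega), ← sum_filter]
    have h2 : (Icc 1 N).filter (· ∣ t + 1) = (t + 1).divisors := by
      ext n
      simp only [mem_filter, mem_Icc, Nat.mem_divisors]
      constructor
      · rintro ⟨-, h⟩; exact ⟨h, by omega⟩
      · rintro ⟨h, -⟩
        exact ⟨⟨Nat.pos_of_dvd_of_pos h (by omega), (Nat.le_of_dvd (by omega) h).trans ht⟩, h⟩
    rw [h2, ArithmeticFunction.vonMangoldt_sum, Nat.factorial_succ, Nat.cast_mul,
      Real.log_mul (by positivity) (by positivity), add_comm]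

theorem sum_range_mul_add_comp_div {R : Type*} [CommRing R] (f : ℕ → R) (n m r : ℕ) (hr : r ≤ n) :
    ∑ t ∈ range (m * n + r), f (t / n) = n * ∑ j ∈ range m, f j + r * f m := by
  rcases Nat.eq_zero_or_pos n with rfl | hn
  · obtain rfl : r = 0 := by omega
    simp
  have step : ∀ m r, r ≤ n → ∑ t ∈ range (m * n + r), f (t / n) =
      ∑ t ∈ range (m * n), f (t / n) + r * f m := by
    intro m r
    induction r with
    | zero => simp
    | succ r ih =>
      intro h
      have : (m * n + r) / n = m := by
        rw [Nat.div_eq_iff hn]; constructor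
        · exact Nat.le_add_right _ _
        · omega
      rw [← add_assoc, sum_range_succ, ih (by omega), this]
      push_cast; ring
  have base : ∀ m, ∑ t ∈ range (m * n), f (t / n) = n * ∑ j ∈ range m, f j := by
    intro m
    induction m with
    | zero => simp
    | succ m ih => rw [Nat.succ_mul, step m n le_rfl, ih, sum_range_succ]; ring
  rw [step m r hr, base]

/-- A multiple of the integer-valued function `j ↦ ∑ d, c d * ⌊j / d⌋`, with `∑ d, c d / d = 0`. -/
def chebFun (j : ℕ) : ℤ :=
  15 * (j / 2 : ℕ) - 15 * (j / 4 : ℕ) - 15 * (j / 5 : ℕ) - 15 * (j / 6 : ℕ) + 10 * (j / 12 : ℕ)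
    + 5 * (j / 15 : ℕ) + 7 * (j / 20 : ℕ) + 6 * (j / 30 : ℕ) + 2 * (j / 60 : ℕ)

theorem chebFun_add_sixty (j : ℕ) : chebFun (j + 60) = chebFun j := by
  simp only [chebFun]; omega

theorem sum_range_chebFun_le (m : ℕ) :
    ∑ j ∈ range m, chebFun j ≤ 15 * ((m - 2 : ℕ) - (m - 5 : ℕ)) := by
  induction m using Nat.strong_induction_on with
  | _ m ih =>
    rcases lt_or_ge m 60 with h | h
    · have : ∀ m < 60, ∑ j ∈ range m, chebFun j ≤ 15 * (((m - 2 : ℕ) : ℤ) - (m - 5 : ℕ)) := by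
        decide +kernel
      exact this m h
    · obtain ⟨k, rfl⟩ := Nat.exists_eq_add_of_le h
      have h0 : ∑ j ∈ range 60, chebFun j = 0 := by decide +kernel
      rw [sum_range_add, h0, zero_add]
      simp_rw [add_comm 60, chebFun_add_sixty]
      refine (ih k (by omega)).trans ?_
      omega

/-- The trapezoidal weight. -/
def trapezoid (N n : ℕ) : ℕ := (N - 2 * n) - (N - 5 * n)

theorem sum_range_chebFun_div_le (N n : ℕ) (hn : 0 < n) :
    ∑ t ∈ range N, chebFun (t / n) ≤ 15 * (trapezoid N n : ℤ) := by
  obtain ⟨m, r, hr, rfl⟩ : ∃ m r, r < n ∧ N = m * n + r :=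
    ⟨N / n, N % n, Nat.mod_lt _ hn, (Nat.div_add_mod' N n).symm⟩
  rw [sum_range_mul_add_comp_div _ _ _ _ hr.le]
  have h1 := sum_range_chebFun_le m
  have h2 := sum_range_chebFun_le (m + 1)
  rw [sum_range_succ] at h2
  have h3 : (n : ℤ) * ∑ j ∈ range m, chebFun j + r * chebFun m =
      (n - r) * (∑ j ∈ range m, chebFun j) + r * (∑ j ∈ range m, chebFun j + chebFun m) := by
    ring
  rw [h3]
  have h4 : ∀ k : ℕ, 1 ≤ k → ((m * n + r - k * n : ℕ) : ℤ) =
      (n - r) * (m - k : ℕ) + r * (m + 1 - k : ℕ) := by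
    intro k hk
    rcases le_or_gt k m with h | h
    · obtain ⟨i, rfl⟩ := Nat.exists_eq_add_of_le h
      have e1 : (k + i) * n + r - k * n = i * n + r := by rw [add_mul]; omega
      have e2 : k + i - k = i := by omega
      have e3 : k + i + 1 - k = i + 1 := by omega
      rw [e1, e2, e3]; push_cast; ring
    · have e1 : m * n + r - k * n = 0 := by
        have := Nat.mul_le_mul_right n (show m + 1 ≤ k from h)
        rw [add_mul] at this; omega
      have e2 : m - k = 0 := by omega
      have e3 : m + 1 - k = 0 := by omega
      rw [e1, e2, e3]; simp
  have h5 : (trapezoid (m * n + r) n : ℤ) = ((m * n + r - 2 * n : ℕ) : ℤ) -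
      (m * n + r - 5 * n : ℕ) := by
    rw [trapezoid, Nat.cast_sub (by omega)]
  rw [h5, h4 2 (by omega), h4 5 (by omega)]
  have h6 : (0 : ℤ) ≤ n - r := by omega
  have h7 := mul_le_mul_of_nonneg_left h1 h6
  have h8 := mul_le_mul_of_nonneg_left h2 (Int.natCast_nonneg r)
  linarith

theorem log_add_one_bounds {y : ℝ} (hy : 0 < y) :
    Real.log (y + 1) = Real.log y + Real.log (1 + 1 / y) ∧
      y * Real.log (1 + 1 / y) ≤ 1 ∧ 1 ≤ (y + 1) * Real.log (1 + 1 / y) := by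
  refine ⟨?_, ?_, ?_⟩
  · rw [← Real.log_mul hy.ne' (by positivity)]
    congr 1
    field_simp
  · have := Real.log_le_sub_one_of_pos (show (0 : ℝ) < 1 + 1 / y by positivity)
    calc y * Real.log (1 + 1 / y) ≤ y * (1 / y) := by gcongr; linarith
      _ = 1 := by field_simp
  · have := Real.one_sub_inv_le_log_of_pos (show (0 : ℝ) < 1 + 1 / y by positivity)
    calc (1 : ℝ) = (y + 1) * (1 - (1 + 1 / y)⁻¹) := by field_simp; ring
      _ ≤ _ := by gcongr

theorem log_factorial_bounds (K : ℕ) (hK : 1 ≤ K) :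
    K * Real.log K - K ≤ Real.log (K.factorial : ℝ) ∧
      Real.log (K.factorial : ℝ) ≤ K * Real.log K - K + Real.log K + 1 := by
  induction K, hK using Nat.le_induction with
  | base => simp
  | succ K hK ih =>
    have hK0 : (0 : ℝ) < K := by exact_mod_cast hK
    obtain ⟨hu, h1, h2⟩ := log_add_one_bounds hK0
    rw [Nat.factorial_succ, Nat.cast_mul, Real.log_mul (by positivity) (by positivity)]
    push_cast
    rw [hu]
    constructor <;> nlinarith [ih.1, ih.2]

theorem sum_log_factorial_bounds (K : ℕ) (hK : 1 ≤ K) :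
    |∑ j ∈ range K, Real.log (j.factorial : ℝ) -
      (K ^ 2 * Real.log K / 2 - 3 / 4 * K ^ 2)| ≤ K * (Real.log K + 2) := by
  induction K, hK using Nat.le_induction with
  | base => norm_num
  | succ K hK ih =>
    have hK0 : (1 : ℝ) ≤ K := by exact_mod_cast hK
    obtain ⟨hu, h1, h2⟩ := log_add_one_bounds (show (0 : ℝ) < K by linarith)
    obtain ⟨l1, l2⟩ := log_factorial_bounds K hK
    have hu1 : Real.log (1 + 1 / K) ≤ 1 := by
      nlinarith [Real.log_nonneg (show (1 : ℝ) ≤ 1 + 1 / K by simp)]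
    have hL : 0 ≤ Real.log K := Real.log_nonneg hK0
    rw [sum_range_succ]
    push_cast
    rw [hu]
    set u := Real.log (1 + 1 / (K : ℝ))
    rw [abs_le] at ih ⊢
    have h3 : (K : ℝ) * (K * u) ≤ K * 1 := by gcongr
    have h4 : (K + 1 : ℝ) * 1 ≤ (K + 1) * ((K + 1) * u) := by gcongr
    constructor <;> nlinarith [ih.1, ih.2]

/-- A lower bound of Chebyshev type for a trapezoidally weighted sum of the von Mangoldt function. -/
theorem le_sum_vonMangoldt_mul_trapezoid (M : ℕ) (hM : 1 ≤ M) :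
    0.14895 * ((60 * M : ℕ) : ℝ) ^ 2 - 6 * (60 * M : ℕ) * (Real.log (60 * M : ℕ) + 2) ≤
      ∑ n ∈ Icc 1 (60 * M), Λ n * trapezoid (60 * M) n := by
  set N := 60 * M with hN
  have h1 : ∑ n ∈ Icc 1 N, Λ n * ((∑ t ∈ range N, chebFun (t / n) : ℤ) : ℝ) ≤
      15 * ∑ n ∈ Icc 1 N, Λ n * trapezoid N n := by
    rw [mul_sum]
    refine sum_le_sum fun n hn => ?_
    have := sum_range_chebFun_div_le N n (mem_Icc.1 hn).1
    have h : ((∑ t ∈ range N, chebFun (t / n) : ℤ) : ℝ) ≤ 15 * (trapezoid N n : ℝ) := by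
      exact_mod_cast this
    calc _ ≤ Λ n * (15 * (trapezoid N n : ℝ)) :=
          mul_le_mul_of_nonneg_left h ArithmeticFunction.vonMangoldt_nonneg
      _ = _ := by ring
  let τ : ℕ → ℝ := fun K => ∑ j ∈ range K, Real.log (j.factorial : ℝ)
  have hfac : ∀ d t : ℕ, t ∈ range N →
      ∑ n ∈ Icc 1 N, Λ n * ((t / n / d : ℕ) : ℝ) = Real.log ((t / d).factorial : ℝ) := by
    intro d t ht
    rw [← sum_vonMangoldt_mul_div N (t / d) ((Nat.div_le_self t d).trans (mem_range.1 ht).le)]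
    refine sum_congr rfl fun n _ => ?_
    rw [Nat.div_div_eq_div_mul, Nat.div_div_eq_div_mul, mul_comm n d]
  have hτ : ∀ d K : ℕ, d * K = N →
      ∑ t ∈ range N, ∑ n ∈ Icc 1 N, Λ n * ((t / n / d : ℕ) : ℝ) = d * τ K := by
    intro d K hd
    rw [sum_congr rfl (hfac d), ← hd, mul_comm d K]
    simpa using sum_range_mul_add_comp_div (fun j => Real.log (j.factorial : ℝ)) d K 0 (Nat.zero_le d)
  have h2 : ∑ n ∈ Icc 1 N, Λ n * ((∑ t ∈ range N, chebFun (t / n) : ℤ) : ℝ) =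
      15 * (2 * τ (30 * M)) - 15 * (4 * τ (15 * M)) - 15 * (5 * τ (12 * M))
      - 15 * (6 * τ (10 * M)) + 10 * (12 * τ (5 * M)) + 5 * (15 * τ (4 * M))
      + 7 * (20 * τ (3 * M)) + 6 * (30 * τ (2 * M)) + 2 * (60 * τ M) := by
    have e2 := hτ 2 (30 * M) (by omega)
    have e4 := hτ 4 (15 * M) (by omega)
    have e5 := hτ 5 (12 * M) (by omega)
    have e6 := hτ 6 (10 * M) (by omega)
    have e12 := hτ 12 (5 * M) (by omega)
    have e15 := hτ 15 (4 * M) (by omega)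
    have e20 := hτ 20 (3 * M) (by omega)
    have e30 := hτ 30 (2 * M) (by omega)
    have e60 := hτ 60 M (by omega)
    push_cast at e2 e4 e5 e6 e12 e15 e20 e30 e60
    rw [← e2, ← e4, ← e5, ← e6, ← e12, ← e15, ← e20, ← e30, ← e60]
    simp only [mul_sum]
    push_cast
    simp only [mul_sum]
    rw [sum_comm]
    simp only [← sum_add_distrib, ← sum_sub_distrib]
    refine sum_congr rfl fun t _ => sum_congr rfl fun n _ => ?_
    simp only [chebFun, Int.cast_add, Int.cast_sub, Int.cast_mul, Int.cast_ofNat, Int.cast_natCast]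
    ring
  have hM0 : (1 : ℝ) ≤ M := by exact_mod_cast hM
  have hb : ∀ k d : ℕ, 1 ≤ k → k * d = 60 →
      |d * τ (k * M) - ((N : ℝ) ^ 2 / d * (Real.log N - Real.log d) / 2 - 3 / 4 * ((N : ℝ) ^ 2 / d))|
        ≤ N * (Real.log N + 2) := by
    intro k d hk hkd
    have hd : 0 < d := Nat.pos_of_ne_zero (by rintro rfl; omega)
    have hd1 : (1 : ℝ) ≤ d := by exact_mod_cast hd
    have hk1 : (1 : ℝ) ≤ k := by exact_mod_cast hk
    have hNr : (N : ℝ) = d * (k * M) := by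
      rw [hN, ← hkd]; push_cast; ring
    have h := sum_log_factorial_bounds (k * M) (Nat.mul_pos hk hM)
    have hlog : Real.log N = Real.log d + Real.log (k * M) := by
      rw [hNr, Real.log_mul (by positivity) (by positivity)]
    push_cast at h
    have e : d * τ (k * M) -
        ((N : ℝ) ^ 2 / d * (Real.log N - Real.log d) / 2 - 3 / 4 * ((N : ℝ) ^ 2 / d)) =
        d * (τ (k * M) - ((k * M : ℝ) ^ 2 * Real.log (k * M) / 2 - 3 / 4 * (k * M : ℝ) ^ 2)) := by
      rw [hlog, hNr]; field_simp; ring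
    rw [e, abs_mul, abs_of_pos (by positivity : (0 : ℝ) < d)]
    calc (d : ℝ) * _ ≤ d * (k * M * (Real.log (k * M) + 2)) := by gcongr
      _ = N * (Real.log (k * M) + 2) := by rw [hNr]; ring
      _ ≤ N * (Real.log N + 2) := by
        rw [hlog]
        have := Real.log_nonneg hd1
        gcongr
        linarith
  have b2 := hb 30 2 (by norm_num) (by norm_num)
  have b4 := hb 15 4 (by norm_num) (by norm_num)
  have b5 := hb 12 5 (by norm_num) (by norm_num)
  have b6 := hb 10 6 (by norm_num) (by norm_num)
  have b12 := hb 5 12 (by norm_num) (by norm_num)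
  have b15 := hb 4 15 (by norm_num) (by norm_num)
  have b20 := hb 3 20 (by norm_num) (by norm_num)
  have b30 := hb 2 30 (by norm_num) (by norm_num)
  have b60 := hb 1 60 (by norm_num) (by norm_num)
  rw [one_mul] at b60
  push_cast at b2 b4 b5 b6 b12 b15 b20 b30 b60
  rw [abs_le] at b2 b4 b5 b6 b12 b15 b20 b30 b60
  have l4 : Real.log 4 = 2 * Real.log 2 := by
    rw [← Real.log_rpow (by norm_num)]; norm_num
  have l6 : Real.log 6 = Real.log 2 + Real.log 3 := by
    rw [← Real.log_mul (by norm_num) (by norm_num)]; norm_num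
  have l12 : Real.log 12 = Real.log 4 + Real.log 3 := by
    rw [← Real.log_mul (by norm_num) (by norm_num)]; norm_num
  have l15 : Real.log 15 = Real.log 3 + Real.log 5 := by
    rw [← Real.log_mul (by norm_num) (by norm_num)]; norm_num
  have l20 : Real.log 20 = Real.log 4 + Real.log 5 := by
    rw [← Real.log_mul (by norm_num) (by norm_num)]; norm_num
  have l30 : Real.log 30 = Real.log 6 + Real.log 5 := by
    rw [← Real.log_mul (by norm_num) (by norm_num)]; norm_num
  have l60 : Real.log 60 = Real.log 12 + Real.log 5 := by
    rw [← Real.log_mul (by norm_num) (by norm_num)]; norm_num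
  rw [l60, l12, l4] at b60
  rw [l30, l6] at b30
  rw [l20, l4] at b20
  rw [l15] at b15
  rw [l12, l4] at b12
  rw [l6] at b6
  rw [l4] at b4
  have hA : 2 * 15 * 0.14895 ≤ -(15 * Real.log 2 / 2 - 15 * (2 * Real.log 2) / 4
      - 15 * Real.log 5 / 5 - 15 * (Real.log 2 + Real.log 3) / 6
      + 10 * (2 * Real.log 2 + Real.log 3) / 12 + 5 * (Real.log 3 + Real.log 5) / 15
      + 7 * (2 * Real.log 2 + Real.log 5) / 20 + 6 * (Real.log 2 + Real.log 3 + Real.log 5) / 30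
      + 2 * (2 * Real.log 2 + Real.log 3 + Real.log 5) / 60) := by
    have := Real.log_two_gt_d9
    have := Real.log_two_lt_d9
    have := Real.log_three_gt_d9
    have := Real.log_three_lt_d9
    have := Real.log_five_gt_d9
    have := Real.log_five_lt_d9
    linarith
  have hA' := mul_le_mul_of_nonneg_left hA (sq_nonneg (N : ℝ))
  rw [h2] at h1
  linarith [b2.1, b4.2, b5.2, b6.2, b12.1, b15.1, b20.1, b30.1, b60.1]

theorem five_mul_trapezoid_le (N n : ℕ) : 5 * trapezoid N n ≤ 3 * N := by
  rw [trapezoid]; omega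

theorem trapezoid_eq_zero {N n : ℕ} (h : N ≤ 2 * n) : trapezoid N n = 0 := by
  rw [trapezoid]; omega

theorem le_log_mul_sum_prime_trapezoid (M : ℕ) (hM : 1 ≤ M) :
    0.14895 * ((60 * M : ℕ) : ℝ) ^ 2 - 6 * (60 * M : ℕ) * (Real.log (60 * M : ℕ) + 2)
      - 1.2 * (60 * M : ℕ) * √(60 * M : ℕ) * Real.log (60 * M : ℕ) ≤
      Real.log (30 * M : ℕ) * ∑ p ∈ (Icc 1 (30 * M)).filter Nat.Prime,
        (trapezoid (60 * M) p : ℝ) := by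
  have h1 := le_sum_vonMangoldt_mul_trapezoid M hM
  set N := 60 * M with hN
  have hw : ∀ n, (trapezoid N n : ℝ) ≤ 0.6 * N := by
    intro n
    have : (5 : ℝ) * trapezoid N n ≤ 3 * N := by exact_mod_cast five_mul_trapezoid_le N n
    linarith
  rw [← sum_filter_add_sum_filter_not _ Nat.Prime] at h1
  have h2 : ∑ n ∈ (Icc 1 N).filter (fun n => ¬ n.Prime), Λ n * trapezoid N n ≤
      0.6 * N * (2 * √N * Real.log N) := by
    have hN1 : (1 : ℝ) ≤ N := by exact_mod_cast (by omega : 1 ≤ N)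
    have h3 := Chebyshev.psi_sub_theta_le hN1
    rw [Chebyshev.psi_sub_theta_eq_sum_not_prime, Nat.floor_natCast] at h3
    refine le_trans ?_ (mul_le_mul_of_nonneg_left h3 (by positivity))
    rw [mul_sum]
    refine sum_le_sum_of_subset_of_nonneg ?_ ?_ |>.trans' (sum_le_sum (g := fun n => 0.6 * N * Λ n) ?_)
    · intro n hn
      simpa [Nat.lt_iff_add_one_le] using hn
    · intro n _ _
      have := ArithmeticFunction.vonMangoldt_nonneg (n := n)
      positivity
    · intro n _
      rw [mul_comm]
      exact mul_le_mul_of_nonneg_right (hw n) ArithmeticFunction.vonMangoldt_nonneg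
  have h4 : ∑ n ∈ (Icc 1 N).filter Nat.Prime, Λ n * trapezoid N n ≤
      Real.log (30 * M : ℕ) * ∑ p ∈ (Icc 1 (30 * M)).filter Nat.Prime, (trapezoid N p : ℝ) := by
    have hsub : (Icc 1 (30 * M)).filter Nat.Prime ⊆ (Icc 1 N).filter Nat.Prime := by
      apply filter_subset_filter
      apply Icc_subset_Icc_right; omega
    rw [← sum_subset hsub, mul_sum]
    · refine sum_le_sum fun p hp => ?_
      simp only [mem_filter, mem_Icc] at hp
      rw [ArithmeticFunction.vonMangoldt_apply_prime hp.2]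
      have : (0 : ℝ) < p := by exact_mod_cast hp.2.pos
      have : (p : ℝ) ≤ (30 * M : ℕ) := by exact_mod_cast hp.1.2
      gcongr
    · intro p hp hp'
      simp only [mem_filter, mem_Icc] at hp hp'
      have : ¬ p ≤ 30 * M := fun h => hp' ⟨⟨hp.1.1, h⟩, hp.2⟩
      rw [trapezoid_eq_zero (by omega)]; simp
  linarith

theorem sum_range_max_sub_zero {y : ℝ} (hy : -1 < y) {K : ℕ} (hK : y ≤ K) :
    ∑ k ∈ range K, max (y - k) 0 =
      (y ^ 2 + y + Int.fract y * (1 - Int.fract y)) / 2 := by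
  have hfl : -1 ≤ ⌊y⌋ := Int.le_floor.2 (by push_cast; exact hy.le)
  obtain ⟨m, hm⟩ := Int.eq_ofNat_of_zero_le (show 0 ≤ ⌊y⌋ + 1 by omega)
  have hy1 : y = m - 1 + Int.fract y := by
    have h : ((⌊y⌋ + 1 : ℤ) : ℝ) = m := by rw [hm]; simp
    push_cast at h
    linarith [Int.floor_add_fract y]
  have hf0 := Int.fract_nonneg y
  have hf1 := Int.fract_lt_one y
  have hsum : ∀ m : ℕ, ∑ k ∈ range m, (y - k) = m * y - m * (m - 1) / 2 := by
    intro m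
    induction m with
    | zero => simp
    | succ m ih => rw [sum_range_succ, ih]; push_cast; ring
  have hpos : ∀ k ∈ range m, max (y - k) 0 = y - k := by
    intro k hk
    have : (k : ℝ) + 1 ≤ m := by exact_mod_cast mem_range.1 hk
    exact max_eq_left (by linarith)
  have hall : ∑ k ∈ range K, max (y - k) 0 = ∑ k ∈ range m, (y - k) := by
    rw [← sum_congr rfl hpos]
    rcases le_total m K with h | h
    · symm
      refine sum_subset (range_mono h) fun k _ hk => max_eq_right ?_
      have : (m : ℝ) ≤ k := by exact_mod_cast not_lt.1 (mem_range.not.1 hk)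
      linarith
    · refine sum_subset (range_mono h) fun k _ hk => max_eq_right ?_
      have : (K : ℝ) ≤ k := by exact_mod_cast not_lt.1 (mem_range.not.1 hk)
      linarith
  rw [hall, hsum]
  set f := Int.fract y
  rw [hy1]
  ring

theorem abs_sum_trapezoid_modEq_sub_le (N a : ℕ) {D : ℕ} (hD : 0 < D) :
    |∑ n ∈ (range N).filter (· ≡ a [MOD D]), (trapezoid N n : ℝ) - 0.15 * N ^ 2 / D| ≤
      (5 * D / 8 : ℝ) := by
  set r := a % D with hr
  have hrD : r < D := Nat.mod_lt _ hD
  have hD0 : (0 : ℝ) < D := by exact_mod_cast hD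
  have hsum : ∑ n ∈ (range N).filter (· ≡ a [MOD D]), (trapezoid N n : ℝ) =
      ∑ k ∈ range N, (trapezoid N (r + k * D) : ℝ) := by
    rw [← sum_image (g := fun k => r + k * D) (f := fun n => (trapezoid N n : ℝ))]
    · refine sum_subset ?_ ?_
      · intro n hn
        simp only [mem_filter, mem_range] at hn
        refine mem_image.2 ⟨n / D, mem_range.2 ((Nat.div_le_self n D).trans_lt hn.1), ?_⟩
        have : n % D = r := hn.2
        rw [← this]; exact Nat.mod_add_div' n D
      · intro n hn hn'
        obtain ⟨k, -, rfl⟩ := mem_image.1 hn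
        have : ¬ (r + k * D < N) := fun h => hn' (mem_filter.2 ⟨mem_range.2 h, by
          simp [Nat.ModEq, hr]⟩)
        rw [trapezoid_eq_zero (by omega)]; simp
    · intro k _ l _ h
      exact Nat.eq_of_mul_eq_mul_right hD (Nat.add_left_cancel h)
  have hN0 : (0 : ℝ) ≤ N := Nat.cast_nonneg N
  have hr0 : (0 : ℝ) ≤ r := Nat.cast_nonneg r
  have hrD' : (r : ℝ) < D := by exact_mod_cast hrD
  have hD1 : (1 : ℝ) ≤ D := by exact_mod_cast hD
  set y₁ : ℝ := (N / 2 - r) / D with hy₁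
  set y₂ : ℝ := (N / 5 - r) / D with hy₂
  have hterm : ∀ k ∈ range N, (trapezoid N (r + k * D) : ℝ) =
      2 * D * max (y₁ - k) 0 - 5 * D * max (y₂ - k) 0 := by
    intro k _
    have hsub : ∀ a b : ℕ, ((a - b : ℕ) : ℝ) = max ((a : ℝ) - b) 0 := by
      intro a b
      rcases le_total a b with h | h
      · rw [Nat.sub_eq_zero_of_le h, max_eq_right (by rw [sub_nonpos]; exact_mod_cast h)]; simp
      · rw [Nat.cast_sub h, max_eq_left (by rw [sub_nonneg]; exact_mod_cast h)]
    rw [trapezoid, Nat.cast_sub (by omega), hsub, hsub, mul_max_of_nonneg _ _ (by positivity),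
      mul_max_of_nonneg _ _ (by positivity), mul_zero, mul_zero, hy₁, hy₂]
    push_cast
    congr 2 <;> field_simp <;> ring
  rw [hsum, sum_congr rfl hterm, sum_sub_distrib, ← mul_sum, ← mul_sum]
  have hlow : ∀ c : ℝ, 0 ≤ c → -1 < (c - r) / D := by
    intro c hc
    rw [lt_div_iff₀ hD0]; linarith
  have hup : ∀ c : ℝ, c ≤ N → (c - r) / D ≤ N := by
    intro c hc
    rw [div_le_iff₀ hD0]; nlinarith
  rw [sum_range_max_sub_zero (hlow _ (by positivity)) (hup _ (by linarith)),
    sum_range_max_sub_zero (hlow _ (by positivity)) (hup _ (by linarith)), ← hy₁, ← hy₂]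
  have hβ : ∀ f : ℝ, 0 ≤ f → f ≤ 1 → 0 ≤ f * (1 - f) ∧ f * (1 - f) ≤ 1 / 4 := by
    intro f h0 h1
    exact ⟨mul_nonneg h0 (by linarith), by nlinarith [sq_nonneg (f - 1 / 2)]⟩
  have h1 := hβ _ (Int.fract_nonneg y₁) (Int.fract_lt_one y₁).le
  have h2 := hβ _ (Int.fract_nonneg y₂) (Int.fract_lt_one y₂).le
  have h3 := hβ (r / D) (by positivity) (by rw [div_le_one hD0]; exact hrD'.le)
  set β₁ := Int.fract y₁ * (1 - Int.fract y₁)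
  set β₂ := Int.fract y₂ * (1 - Int.fract y₂)
  have e : 2 * D * ((y₁ ^ 2 + y₁ + β₁) / 2) - 5 * D * ((y₂ ^ 2 + y₂ + β₂) / 2) -
      0.15 * N ^ 2 / D = D * ((3 * (r / D * (1 - r / D)) + 2 * β₁ - 5 * β₂) / 2) := by
    rw [hy₁, hy₂]; field_simp; ring
  rw [e, abs_mul, abs_of_pos hD0]
  calc D * |(3 * (r / D * (1 - r / D)) + 2 * β₁ - 5 * β₂) / 2| ≤ (D : ℝ) * (5 / 8) := by
        gcongr
        rw [abs_le]; constructor <;> linarith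
    _ = 5 * D / 8 := by ring

/-- The squarefree integers up to `z` coprime to `q`. -/
def sieveSupport (q z : ℕ) : Finset ℕ := (Icc 1 z).filter fun k => Squarefree k ∧ k.Coprime q

theorem mem_sieveSupport {q z k : ℕ} :
    k ∈ sieveSupport q z ↔ (1 ≤ k ∧ k ≤ z) ∧ Squarefree k ∧ k.Coprime q := by
  simp [sieveSupport]

theorem mem_sieveSupport_of_dvd {q z k m : ℕ} (hm : m ∈ sieveSupport q z) (h : k ∣ m) :
    k ∈ sieveSupport q z := by
  rw [mem_sieveSupport] at *
  obtain ⟨⟨h1, h2⟩, h3, h4⟩ := hm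
  exact ⟨⟨Nat.pos_of_dvd_of_pos h h1, (Nat.le_of_dvd h1 h).trans h2⟩, h3.squarefree_of_dvd h,
    h4.coprime_dvd_left h⟩

theorem one_mem_sieveSupport {q z : ℕ} (hz : 1 ≤ z) : 1 ∈ sieveSupport q z := by
  simp [mem_sieveSupport, hz]

theorem pos_of_mem_sieveSupport {q z k : ℕ} (hk : k ∈ sieveSupport q z) : 0 < k :=
  (mem_sieveSupport.1 hk).1.1

/-- The denominator in the Selberg sieve. -/
noncomputable def selbergSum (q z : ℕ) : ℝ := ∑ k ∈ sieveSupport q z, 1 / (k.totient : ℝ)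

/-- The optimal diagonalised weights of the Selberg sieve. -/
noncomputable def selbergDiag (q z m : ℕ) : ℝ :=
  ArithmeticFunction.moebius m / (m.totient * selbergSum q z)

/-- The Selberg sieve weights. -/
noncomputable def selbergWeight (q z d : ℕ) : ℝ :=
  d * ∑ m ∈ (sieveSupport q z).filter (d ∣ ·),
    ArithmeticFunction.moebius (m / d) * selbergDiag q z m

theorem selbergSum_pos {q z : ℕ} (hz : 1 ≤ z) : 0 < selbergSum q z := by
  refine sum_pos (fun k hk => ?_) ⟨1, one_mem_sieveSupport hz⟩
  have := Nat.totient_pos.2 (pos_of_mem_sieveSupport hk)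
  positivity

theorem moebius_sq_of_mem_sieveSupport {q z k : ℕ} (hk : k ∈ sieveSupport q z) :
    (ArithmeticFunction.moebius k : ℝ) ^ 2 = 1 := by
  exact_mod_cast ArithmeticFunction.moebius_sq_eq_one_of_squarefree (mem_sieveSupport.1 hk).2.1

theorem selbergWeight_one {q z : ℕ} (hz : 1 ≤ z) : selbergWeight q z 1 = 1 := by
  have hG := selbergSum_pos (q := q) hz
  have h : ∀ m ∈ sieveSupport q z,
      (ArithmeticFunction.moebius (m / 1) : ℝ) * selbergDiag q z m =
        1 / m.totient * (1 / selbergSum q z) := by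
    intro m hm
    have := Nat.totient_pos.2 (pos_of_mem_sieveSupport hm)
    have h2 := moebius_sq_of_mem_sieveSupport hm
    rw [Nat.div_one, selbergDiag, ← mul_div_assoc, ← sq, h2]
    field_simp
  rw [selbergWeight, filter_true_of_mem (fun _ _ => one_dvd _), sum_congr rfl h, ← sum_mul,
    ← selbergSum, Nat.cast_one, one_mul, mul_one_div_cancel hG.ne']

theorem sum_moebius_div_eq {k m : ℕ} (hm : 0 < m) (h : k ∣ m) :
    ∑ d ∈ m.divisors.filter (k ∣ ·), (ArithmeticFunction.moebius (m / d) : ℤ) =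
      if m = k then 1 else 0 := by
  obtain ⟨e, rfl⟩ := h
  have hk : 0 < k := Nat.pos_of_mul_pos_right hm
  have he : 0 < e := Nat.pos_of_mul_pos_left hm
  have h1 : (k * e).divisors.filter (k ∣ ·) = e.divisors.image (k * ·) := by
    ext d
    simp only [mem_filter, Nat.mem_divisors, mem_image]
    constructor
    · rintro ⟨⟨h1, -⟩, c, rfl⟩
      exact ⟨c, ⟨Nat.dvd_of_mul_dvd_mul_left hk h1, he.ne'⟩, rfl⟩
    · rintro ⟨c, ⟨h1, -⟩, rfl⟩
      exact ⟨⟨Nat.mul_dvd_mul_left k h1, hm.ne'⟩, dvd_mul_right _ _⟩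
  rw [h1, sum_image fun a _ b _ h => Nat.eq_of_mul_eq_mul_left hk h]
  have h2 : ∀ c ∈ e.divisors, ArithmeticFunction.moebius (k * e / (k * c)) =
      ArithmeticFunction.moebius (e / c) := fun c _ => by rw [Nat.mul_div_mul_left _ _ hk]
  rw [sum_congr rfl h2, Nat.sum_div_divisors e (fun c => ArithmeticFunction.moebius c)]
  have h3 := ArithmeticFunction.coe_mul_zeta_apply (f := ArithmeticFunction.moebius) (x := e)
  rw [ArithmeticFunction.moebius_mul_coe_zeta, ArithmeticFunction.one_apply] at h3
  rw [← h3]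
  have : k * e = k ↔ e = 1 := by
    constructor
    · intro h; exact Nat.eq_of_mul_eq_mul_left hk (by simpa using h)
    · rintro rfl; simp
  simp [this]

theorem sum_selbergWeight_div {q z k : ℕ} (hk : k ∈ sieveSupport q z) :
    ∑ d ∈ (sieveSupport q z).filter (k ∣ ·), selbergWeight q z d / d = selbergDiag q z k := by
  have h1 : ∀ d ∈ (sieveSupport q z).filter (k ∣ ·), selbergWeight q z d / d =
      ∑ m ∈ sieveSupport q z, if d ∣ m then
        (ArithmeticFunction.moebius (m / d) : ℝ) * selbergDiag q z m else 0 := by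
    intro d hd
    have : (0 : ℝ) < d := by exact_mod_cast pos_of_mem_sieveSupport (mem_filter.1 hd).1
    rw [selbergWeight, mul_div_cancel_left₀ _ this.ne', sum_filter]
  rw [sum_congr rfl h1, sum_comm]
  have h2 : ∀ m ∈ sieveSupport q z, (∑ d ∈ (sieveSupport q z).filter (k ∣ ·), if d ∣ m then
      (ArithmeticFunction.moebius (m / d) : ℝ) * selbergDiag q z m else 0) =
      if m = k then selbergDiag q z m else 0 := by
    intro m hm
    have hm0 := pos_of_mem_sieveSupport hm
    rw [← sum_filter, ← sum_mul, filter_filter]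
    have h3 : (sieveSupport q z).filter (fun d => k ∣ d ∧ d ∣ m) =
        m.divisors.filter (k ∣ ·) := by
      ext d
      simp only [mem_filter, Nat.mem_divisors]
      exact ⟨fun h => ⟨⟨h.2.2, hm0.ne'⟩, h.2.1⟩,
        fun h => ⟨mem_sieveSupport_of_dvd hm h.1.1, h.2, h.1.1⟩⟩
    rw [h3]
    by_cases hkm : k ∣ m
    · have := congrArg (Int.cast : ℤ → ℝ) (sum_moebius_div_eq hm0 hkm)
      push_cast at this
      rw [this]
      split_ifs <;> simp
    · have hne : m ≠ k := fun h => hkm (h ▸ dvd_rfl)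
      have hemp : m.divisors.filter (k ∣ ·) = ∅ := by
        rw [filter_eq_empty_iff]
        intro d hd hkd
        exact hkm (hkd.trans (Nat.dvd_of_mem_divisors hd))
      rw [hemp, if_neg hne]; simp
  rw [sum_congr rfl h2, sum_ite_eq' _ k, if_pos hk]

theorem sum_sum_selbergWeight_div_lcm {q z : ℕ} (hz : 1 ≤ z) :
    ∑ d ∈ sieveSupport q z, ∑ e ∈ sieveSupport q z,
      selbergWeight q z d * selbergWeight q z e / (d.lcm e : ℝ) = 1 / selbergSum q z := by
  have hG := selbergSum_pos (q := q) hz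
  have h1 : ∀ d ∈ sieveSupport q z, ∀ e ∈ sieveSupport q z,
      selbergWeight q z d * selbergWeight q z e / (d.lcm e : ℝ) =
      ∑ k ∈ sieveSupport q z, (k.totient : ℝ) *
        ((if k ∣ d then selbergWeight q z d / d else 0) *
          (if k ∣ e then selbergWeight q z e / e else 0)) := by
    intro d hd e he
    have hd0 := pos_of_mem_sieveSupport hd
    have he0 := pos_of_mem_sieveSupport he
    have hg0 : 0 < d.gcd e := Nat.gcd_pos_of_pos_left _ hd0
    have h2 : ∀ k ∈ sieveSupport q z, (k.totient : ℝ) *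
        ((if k ∣ d then selbergWeight q z d / d else 0) *
          (if k ∣ e then selbergWeight q z e / e else 0)) =
        if k ∣ d.gcd e then
          (k.totient : ℝ) * (selbergWeight q z d / d * (selbergWeight q z e / e)) else 0 := by
      intro k _
      simp only [Nat.dvd_gcd_iff]
      by_cases h : k ∣ d <;> by_cases h' : k ∣ e <;> simp [h, h']
    rw [sum_congr rfl h2, ← sum_filter, ← sum_mul]
    have h3 : (sieveSupport q z).filter (· ∣ d.gcd e) = (d.gcd e).divisors := by
      ext k
      simp only [mem_filter, Nat.mem_divisors]
      exact ⟨fun h => ⟨h.2, hg0.ne'⟩,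
        fun h => ⟨mem_sieveSupport_of_dvd hd (h.1.trans (Nat.gcd_dvd_left d e)), h.1⟩⟩
    rw [h3]
    have h4 : ∑ k ∈ (d.gcd e).divisors, (k.totient : ℝ) = d.gcd e := by
      exact_mod_cast Nat.sum_totient (d.gcd e)
    rw [h4]
    have h5 : (d.gcd e : ℝ) * d.lcm e = d * e := by exact_mod_cast Nat.gcd_mul_lcm d e
    have hl0 : (0 : ℝ) < d.lcm e := by exact_mod_cast Nat.lcm_pos hd0 he0
    have hd0' : (0 : ℝ) < d := by exact_mod_cast hd0
    have he0' : (0 : ℝ) < e := by exact_mod_cast he0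
    field_simp
    linear_combination (selbergWeight q z d * selbergWeight q z e) * (-h5)
  rw [sum_congr rfl fun d hd => sum_congr rfl fun e he => h1 d hd e he]
  have h6 : ∀ d ∈ sieveSupport q z, ∑ e ∈ sieveSupport q z, ∑ k ∈ sieveSupport q z,
      (k.totient : ℝ) * ((if k ∣ d then selbergWeight q z d / d else 0) *
          (if k ∣ e then selbergWeight q z e / e else 0)) =
      ∑ k ∈ sieveSupport q z, (k.totient : ℝ) *
        ((if k ∣ d then selbergWeight q z d / d else 0) * selbergDiag q z k) := by
    intro d _
    rw [sum_comm]
    refine sum_congr rfl fun k hk => ?_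
    rw [← mul_sum, ← mul_sum, ← sum_filter, sum_selbergWeight_div hk]
  rw [sum_congr rfl h6, sum_comm]
  have h7 : ∀ k ∈ sieveSupport q z, ∑ d ∈ sieveSupport q z, (k.totient : ℝ) *
        ((if k ∣ d then selbergWeight q z d / d else 0) * selbergDiag q z k) =
      1 / k.totient * (1 / selbergSum q z ^ 2) := by
    intro k hk
    rw [← mul_sum, ← sum_mul, ← sum_filter, sum_selbergWeight_div hk, selbergDiag]
    have hk0 : (0 : ℝ) < k.totient := by
      exact_mod_cast Nat.totient_pos.2 (pos_of_mem_sieveSupport hk)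
    rw [div_mul_div_comm, ← sq, moebius_sq_of_mem_sieveSupport hk]
    field_simp
  rw [sum_congr rfl h7, ← sum_mul, ← selbergSum]
  field_simp

theorem sum_mul_abs_selbergWeight_le {q z : ℕ} (hz : 1 ≤ z) :
    ∑ d ∈ sieveSupport q z, d * |selbergWeight q z d| ≤
      (∑ m ∈ sieveSupport q z, (∑ d ∈ m.divisors, (d : ℝ) ^ 2) / m.totient) / selbergSum q z := by
  have hG := selbergSum_pos (q := q) hz
  have h1 : ∀ d ∈ sieveSupport q z, d * |selbergWeight q z d| ≤
      ∑ m ∈ sieveSupport q z, if d ∣ m then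
        (d : ℝ) ^ 2 * (1 / (m.totient * selbergSum q z)) else 0 := by
    intro d _
    rw [selbergWeight, abs_mul, Nat.abs_cast, ← sum_filter, ← mul_sum, ← mul_assoc, ← sq]
    refine mul_le_mul_of_nonneg_left ?_ (sq_nonneg _)
    refine (abs_sum_le_sum_abs _ _).trans (sum_le_sum fun m hm => ?_)
    have hmu : ∀ n : ℕ, |(ArithmeticFunction.moebius n : ℝ)| ≤ 1 := fun n => by
      exact_mod_cast ArithmeticFunction.abs_moebius_le_one
    have : (0 : ℝ) < m.totient := by
      exact_mod_cast Nat.totient_pos.2 (pos_of_mem_sieveSupport (mem_filter.1 hm).1)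
    rw [abs_mul, selbergDiag, abs_div, abs_of_pos (by positivity : 0 < m.totient * selbergSum q z)]
    calc _ ≤ 1 * (1 / (m.totient * selbergSum q z)) := by
          gcongr
          · exact hmu _
          · exact hmu _
      _ = _ := one_mul _
  refine (sum_le_sum h1).trans ?_
  rw [sum_comm, sum_div]
  refine sum_le_sum fun m hm => ?_
  have hm0 := pos_of_mem_sieveSupport hm
  rw [← sum_filter, ← sum_mul]
  have h3 : (sieveSupport q z).filter (· ∣ m) = m.divisors := by
    ext k
    simp only [mem_filter, Nat.mem_divisors]
    exact ⟨fun h => ⟨h.2, hm0.ne'⟩, fun h => ⟨mem_sieveSupport_of_dvd hm h.1, h.1⟩⟩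
  rw [h3, div_div, mul_one_div]

theorem abs_sum_trapezoid_modEq_dvd_sub_le (N a : ℕ) {q e : ℕ} (hq : 0 < q) (he : 0 < e)
    (hqe : q.Coprime e) :
    |∑ n ∈ (range N).filter (fun n => n ≡ a [MOD q] ∧ e ∣ n), (trapezoid N n : ℝ)
      - 0.15 * N ^ 2 / (q * e)| ≤ (5 * (q * e) / 8 : ℝ) := by
  obtain ⟨c, hc1, hc2⟩ := Nat.chineseRemainder hqe a 0
  have h := abs_sum_trapezoid_modEq_sub_le N c (Nat.mul_pos hq he)
  push_cast at h
  rw [show (range N).filter (fun n => n ≡ a [MOD q] ∧ e ∣ n) =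
    (range N).filter (· ≡ c [MOD q * e]) from ?_]
  · exact h
  refine filter_congr fun n _ => ?_
  rw [← Nat.modEq_and_modEq_iff_modEq_mul hqe, ← Nat.modEq_zero_iff_dvd]
  exact and_congr ⟨fun h => h.trans hc1.symm, fun h => h.trans hc1⟩
    ⟨fun h => h.trans hc2.symm, fun h => h.trans hc2⟩

/-- Selberg's sieve for the trapezoidally weighted primes in a residue class. -/
theorem sum_prime_modEq_trapezoid_le (N a : ℕ) {q z : ℕ} (hq : 0 < q) (hz : 1 ≤ z) :
    ∑ p ∈ (range N).filter (fun p => p ≡ a [MOD q] ∧ p.Prime ∧ z < p), (trapezoid N p : ℝ) ≤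
      0.15 * N ^ 2 / (q * selbergSum q z) + 5 * q / 8 *
        ((∑ m ∈ sieveSupport q z, (∑ d ∈ m.divisors, (d : ℝ) ^ 2) / m.totient) /
          selbergSum q z) ^ 2 := by
  set S := sieveSupport q z with hS
  let c : ℕ → ℝ := fun n => ∑ d ∈ S, if d ∣ n then selbergWeight q z d else 0
  let W : ℕ → ℝ := fun e =>
    ∑ n ∈ (range N).filter (fun n => n ≡ a [MOD q] ∧ e ∣ n), (trapezoid N n : ℝ)
  have h1 : ∑ p ∈ (range N).filter (fun p => p ≡ a [MOD q] ∧ p.Prime ∧ z < p),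
      (trapezoid N p : ℝ) ≤ ∑ n ∈ (range N).filter (· ≡ a [MOD q]), trapezoid N n * c n ^ 2 := by
    have h : ∀ p ∈ (range N).filter (fun p => p ≡ a [MOD q] ∧ p.Prime ∧ z < p),
        (trapezoid N p : ℝ) = trapezoid N p * c p ^ 2 := by
      intro p hp
      obtain ⟨-, -, hpp, hzp⟩ := mem_filter.1 hp
      have : c p = 1 := by
        simp only [c]
        rw [sum_eq_single 1]
        · rw [if_pos (one_dvd p), selbergWeight_one hz]
        · intro d hd hd1
          rw [if_neg]
          intro hdp
          rcases (Nat.dvd_prime hpp).1 hdp with h | h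
          · exact hd1 h
          · have := (mem_sieveSupport.1 hd).1.2
            omega
        · intro h
          exact absurd (one_mem_sieveSupport hz) h
      rw [this]; ring
    rw [sum_congr rfl h]
    refine sum_le_sum_of_subset_of_nonneg ?_ fun _ _ _ => by positivity
    intro p hp
    simp only [mem_filter] at hp ⊢
    exact ⟨hp.1, hp.2.1⟩
  have h2 : ∑ n ∈ (range N).filter (· ≡ a [MOD q]), trapezoid N n * c n ^ 2 =
      ∑ d ∈ S, ∑ e ∈ S, selbergWeight q z d * selbergWeight q z e * W (d.lcm e) := by
    have h : ∀ n, (trapezoid N n : ℝ) * c n ^ 2 = ∑ d ∈ S, ∑ e ∈ S,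
        selbergWeight q z d * selbergWeight q z e *
          (if d.lcm e ∣ n then (trapezoid N n : ℝ) else 0) := by
      intro n
      simp only [c]
      rw [sq, sum_mul_sum, mul_sum]
      refine sum_congr rfl fun d _ => ?_
      rw [mul_sum]
      refine sum_congr rfl fun e _ => ?_
      simp only [Nat.lcm_dvd_iff]
      by_cases h : d ∣ n <;> by_cases h' : e ∣ n <;> simp [h, h']
      ring
    rw [sum_congr rfl fun n _ => h n, sum_comm]
    refine sum_congr rfl fun d _ => ?_
    rw [sum_comm]
    refine sum_congr rfl fun e _ => ?_
    rw [← mul_sum, ← sum_filter, filter_filter]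
  have h3 : ∀ d ∈ S, ∀ e ∈ S, selbergWeight q z d * selbergWeight q z e * W (d.lcm e) ≤
      0.15 * N ^ 2 / q * (selbergWeight q z d * selbergWeight q z e / (d.lcm e : ℝ)) +
      5 * q / 8 * ((d * |selbergWeight q z d|) * (e * |selbergWeight q z e|)) := by
    intro d hd e he
    have hd0 := pos_of_mem_sieveSupport hd
    have he0 := pos_of_mem_sieveSupport he
    have hl0 := Nat.lcm_pos hd0 he0
    have hcop : q.Coprime (d.lcm e) :=
      ((mem_sieveSupport.1 hd).2.2.mul_left (mem_sieveSupport.1 he).2.2).symm.coprime_dvd_right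
        (Nat.lcm_dvd_mul d e)
    have hW := abs_sum_trapezoid_modEq_dvd_sub_le N a hq hl0 hcop
    have hle : (d.lcm e : ℝ) ≤ d * e := by
      exact_mod_cast Nat.le_of_dvd (Nat.mul_pos hd0 he0) (Nat.lcm_dvd_mul d e)
    set x := selbergWeight q z d * selbergWeight q z e with hx
    have h4 : x * (W (d.lcm e) - 0.15 * N ^ 2 / (q * (d.lcm e : ℕ))) ≤
        |x| * (5 * (q * (d * e)) / 8) := by
      refine (le_abs_self _).trans ?_
      rw [abs_mul]
      refine mul_le_mul_of_nonneg_left (hW.trans ?_) (abs_nonneg _)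
      gcongr
    have hq0 : (0 : ℝ) < q := by exact_mod_cast hq
    have hl0' : (0 : ℝ) < (d.lcm e : ℕ) := by exact_mod_cast hl0
    calc x * W (d.lcm e) = 0.15 * N ^ 2 / q * (x / (d.lcm e : ℕ)) +
          x * (W (d.lcm e) - 0.15 * N ^ 2 / (q * (d.lcm e : ℕ))) := by field_simp; ring
      _ ≤ 0.15 * N ^ 2 / q * (x / (d.lcm e : ℕ)) + |x| * (5 * (q * (d * e)) / 8) := by gcongr
      _ = _ := by rw [hx, abs_mul]; ring
  have hG := selbergSum_pos (q := q) hz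
  have hq0 : (0 : ℝ) < q := by exact_mod_cast hq
  rw [h2] at h1
  refine h1.trans ((sum_le_sum fun d hd => sum_le_sum fun e he => h3 d hd e he).trans ?_)
  simp only [sum_add_distrib, ← mul_sum]
  rw [sum_sum_selbergWeight_div_lcm hz, ← sum_mul, ← sq]
  have h5 := sum_mul_abs_selbergWeight_le (q := q) hz
  have h6 : 0 ≤ ∑ d ∈ S, d * |selbergWeight q z d| :=
    sum_nonneg fun d _ => by positivity
  refine add_le_add (le_of_eq ?_) ?_
  · field_simp
  · gcongr

theorem totient_div_eq_prod (n : ℕ) (hn : n ≠ 0) :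
    (n : ℝ) / n.totient = ∏ p ∈ n.primeFactors, (1 - (p : ℝ)⁻¹)⁻¹ := by
  have h := congrArg (Rat.cast : ℚ → ℝ) (Nat.totient_eq_mul_prod_factors n)
  push_cast at h
  rw [h, prod_inv_distrib]
  have : (n : ℝ) ≠ 0 := by exact_mod_cast hn
  field_simp

theorem sum_one_div_le_div_totient {n : ℕ} (hn : n ≠ 0) {S : Finset ℕ}
    (hS : ∀ m ∈ S, m ≠ 0 ∧ m.primeFactors ⊆ n.primeFactors) :
    ∑ m ∈ S, 1 / (m : ℝ) ≤ n / n.totient := by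
  let f : ℕ →* ℝ := (invMonoidWithZeroHom : ℝ →*₀ ℝ).toMonoidHom.comp
    (Nat.castRingHom ℝ).toMonoidHom
  have hf : ∀ m, f m = 1 / (m : ℝ) := fun m => (one_div _).symm
  obtain ⟨h1, h2⟩ := EulerProduct.summable_and_hasSum_factoredNumbers_prod_filter_prime_geometric
    (f := f) (fun {p} hp => by
      rw [hf, one_div, norm_inv, Real.norm_natCast]
      exact inv_lt_one_of_one_lt₀ (by exact_mod_cast hp.one_lt)) n.primeFactors
  have h3 : n.primeFactors.filter Nat.Prime = n.primeFactors :=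
    filter_true_of_mem fun p hp => Nat.prime_of_mem_primeFactors hp
  have h4 : ∏ p ∈ n.primeFactors.filter Nat.Prime, (1 - f p)⁻¹ = n / n.totient := by
    rw [h3, totient_div_eq_prod n hn]
    simp [hf]
  rw [← h4]
  have h5 : ∑ m ∈ S, 1 / (m : ℝ) = ∑ m ∈ S.attach.map
      ⟨fun m => (⟨m.1, Nat.mem_factoredNumbers_iff_primeFactors_subset.2 (hS m.1 m.2)⟩ :
        Nat.factoredNumbers n.primeFactors), fun a b h => Subtype.ext (congrArg (·.1) h)⟩,
          f m := by
    rw [sum_map, ← sum_attach]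
    exact sum_congr rfl fun m _ => (hf _).symm
  rw [h5]
  refine sum_le_hasSum _ (fun m _ => ?_) h2
  rw [hf]; positivity

/-- The product of the primes dividing `n` but not `q`. -/
def coprimeRadical (q n : ℕ) : ℕ := ∏ p ∈ n.primeFactors.filter (¬ · ∣ q), p

theorem primeFactors_coprimeRadical (q n : ℕ) :
    (coprimeRadical q n).primeFactors = n.primeFactors.filter (¬ · ∣ q) :=
  Nat.primeFactors_prod fun _ hp => Nat.prime_of_mem_primeFactors (mem_filter.1 hp).1

theorem coprimeRadical_dvd (q n : ℕ) : coprimeRadical q n ∣ n :=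
  (prod_dvd_prod_of_subset _ _ _ (filter_subset _ _)).trans (Nat.prod_primeFactors_dvd n)

theorem coprimeRadical_pos (q n : ℕ) : 0 < coprimeRadical q n :=
  prod_pos fun _ hp => (Nat.prime_of_mem_primeFactors (mem_filter.1 hp).1).pos

theorem coprime_coprimeRadical (q n : ℕ) : (coprimeRadical q n).Coprime q :=
  Nat.Coprime.prod_left fun _ hp =>
    (Nat.prime_of_mem_primeFactors (mem_filter.1 hp).1).coprime_iff_not_dvd.2 (mem_filter.1 hp).2

theorem squarefree_coprimeRadical (q n : ℕ) : Squarefree (coprimeRadical q n) := by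
  refine Finset.squarefree_prod_of_pairwise_isCoprime ?_ ?_
  · intro p hp r hr hpr
    have hp := Nat.prime_of_mem_primeFactors (mem_filter.1 hp).1
    have hr := Nat.prime_of_mem_primeFactors (mem_filter.1 hr).1
    exact Nat.coprime_iff_isRelPrime.1 ((Nat.coprime_primes hp hr).2 hpr)
  · exact fun p hp => (Nat.prime_of_mem_primeFactors (mem_filter.1 hp).1).squarefree

theorem sum_fiber_coprimeRadical_le {q : ℕ} (hq : q ≠ 0) {k : ℕ} {S : Finset ℕ}
    (hS : ∀ n ∈ S, n ≠ 0 ∧ coprimeRadical q n = k) :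
    ∑ n ∈ S, 1 / (n : ℝ) ≤ q / q.totient * (1 / k.totient) := by
  rcases S.eq_empty_or_nonempty with rfl | ⟨n₀, hn₀⟩
  · simp; positivity
  have hk : 0 < k := (hS n₀ hn₀).2 ▸ coprimeRadical_pos q n₀
  have hkq : k.Coprime q := (hS n₀ hn₀).2 ▸ coprime_coprimeRadical q n₀
  have hdvd : ∀ n ∈ S, k ∣ n := fun n hn => (hS n hn).2 ▸ coprimeRadical_dvd q n
  have h1 : ∀ n ∈ S, 1 / (n : ℝ) = 1 / k * (1 / ((n / k : ℕ) : ℝ)) := by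
    intro n hn
    rw [Nat.cast_div (hdvd n hn) (by exact_mod_cast hk.ne')]
    field_simp
  have h2 : ∑ n ∈ S, 1 / ((n / k : ℕ) : ℝ) = ∑ m ∈ S.image (· / k), 1 / (m : ℝ) := by
    rw [sum_image]
    intro a ha b hb hab
    rw [← Nat.div_mul_cancel (hdvd a ha), ← Nat.div_mul_cancel (hdvd b hb)]
    exact congrArg (· * k) hab
  have h3 := sum_one_div_le_div_totient (Nat.mul_ne_zero hk.ne' hq) (S := S.image (· / k)) (by
    intro m hm
    obtain ⟨n, hn, rfl⟩ := mem_image.1 hm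
    refine ⟨(Nat.div_pos (Nat.le_of_dvd (Nat.pos_of_ne_zero (hS n hn).1) (hdvd n hn)) hk).ne', ?_⟩
    refine (Nat.primeFactors_mono (Nat.div_dvd_of_dvd (hdvd n hn)) (hS n hn).1).trans ?_
    intro p hp
    have hpp := Nat.prime_of_mem_primeFactors hp
    rw [Nat.primeFactors_mul hk.ne' hq, mem_union]
    by_cases h : p ∣ q
    · exact Or.inr (Nat.mem_primeFactors.2 ⟨hpp, h, hq⟩)
    · left
      rw [← (hS n hn).2, primeFactors_coprimeRadical]
      exact mem_filter.2 ⟨hp, h⟩)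
  rw [sum_congr rfl h1, ← mul_sum, h2]
  rw [Nat.totient_mul hkq] at h3
  push_cast at h3
  have hk' : (0 : ℝ) < k := by exact_mod_cast hk
  calc _ ≤ 1 / (k : ℝ) * (k * q / (k.totient * q.totient)) := by gcongr
    _ = _ := by field_simp

theorem sum_one_div_le_selbergSum {q z : ℕ} (hq : q ≠ 0) {T : Finset ℕ}
    (hT : ∀ n ∈ T, n ≠ 0 ∧ coprimeRadical q n ≤ z) :
    ∑ n ∈ T, 1 / (n : ℝ) ≤ q / q.totient * selbergSum q z := by
  have hmap : ∀ n ∈ T, coprimeRadical q n ∈ sieveSupport q z := fun n hn =>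
    mem_sieveSupport.2 ⟨⟨coprimeRadical_pos q n, (hT n hn).2⟩, squarefree_coprimeRadical q n,
      coprime_coprimeRadical q n⟩
  rw [← sum_fiberwise_of_maps_to hmap, selbergSum, mul_sum]
  refine sum_le_sum fun k _ => sum_fiber_coprimeRadical_le hq fun n hn => ?_
  exact ⟨(hT n (mem_filter.1 hn).1).1, (mem_filter.1 hn).2⟩

theorem le_sum_one_div_odd {J : ℕ} (hJ : 12 ≤ J) :
    Real.log (2 * J + 1) / 2 + 0.614 ≤ ∑ j ∈ range J, 1 / (2 * j + 1 : ℝ) := by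
  induction J, hJ using Nat.le_induction with
  | base =>
    have h1 : 31 * Real.log 5 ≤ 72 * Real.log 2 := by
      have : Real.log ((5 : ℝ) ^ 31) ≤ Real.log ((2 : ℝ) ^ 72) :=
        Real.log_le_log (by norm_num) (by norm_num)
      simpa [Real.log_pow] using this
    have h2 := Real.log_two_lt_d9
    have h3 : Real.log (2 * (12 : ℕ) + 1) = 2 * Real.log 5 := by
      rw [show (2 * (12 : ℕ) + 1 : ℝ) = 5 ^ 2 by norm_num, Real.log_pow]; norm_num
    have h4 : (2.2243 : ℝ) ≤ ∑ j ∈ range 12, 1 / (2 * j + 1 : ℝ) := by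
      norm_num [sum_range_succ]
    rw [h3]
    linarith
  | succ J hJ ih =>
    rw [sum_range_succ]
    have hJ' : (0 : ℝ) < 2 * J + 1 := by positivity
    have h1 : Real.log (2 * ((J + 1 : ℕ) : ℝ) + 1) =
        Real.log (2 * J + 1) + Real.log (1 + 2 / (2 * J + 1)) := by
      rw [← Real.log_mul (by positivity) (by positivity)]
      congr 1
      push_cast
      field_simp
      ring
    have h2 := Real.log_le_sub_one_of_pos (show (0 : ℝ) < 1 + 2 / (2 * J + 1) by positivity)
    have h3 : (2 / (2 * J + 1) : ℝ) = 2 * (1 / (2 * J + 1)) := by ring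
    linarith

theorem two_pow_mul_odd_injective :
    Function.Injective fun a : ℕ × ℕ => 2 ^ a.1 * (2 * a.2 + 1) := by
  rintro ⟨a, j⟩ ⟨b, i⟩ h
  have key : ∀ a j : ℕ, (2 ^ a * (2 * j + 1)).factorization 2 = a := by
    intro a j
    rw [Nat.factorization_mul (by positivity) (by positivity)]
    have : (2 * j + 1).factorization 2 = 0 :=
      Nat.factorization_eq_zero_of_not_dvd (by omega)
    simp [this, Nat.prime_two.factorization_self]
  have hab : a = b := by rw [← key a j, ← key b i]; exact congrArg (·.factorization 2) h
  subst hab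
  have h' := Nat.eq_of_mul_eq_mul_left (by positivity) h
  simp only [Prod.mk.injEq, true_and]
  omega

theorem coprimeRadical_two_pow_mul_le {q a j z : ℕ} (h : 2 * (2 * j + 1) ≤ z) :
    coprimeRadical q (2 ^ a * (2 * j + 1)) ≤ z := by
  refine le_trans (Nat.le_of_dvd (by positivity) ?_) h
  rw [coprimeRadical]
  refine (prod_dvd_prod_of_subset _ _ _ (filter_subset _ _)).trans ?_
  have h1 : (2 ^ a * (2 * j + 1)).primeFactors ⊆ (2 * (2 * j + 1)).primeFactors := by
    rw [Nat.primeFactors_mul (by positivity) (by positivity),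
      Nat.primeFactors_mul (by positivity) (by positivity)]
    exact union_subset_union (fun p hp => Nat.mem_primeFactors.2
      ⟨Nat.prime_of_mem_primeFactors hp, (Nat.prime_of_mem_primeFactors hp).dvd_of_dvd_pow
        (Nat.dvd_of_mem_primeFactors hp), two_ne_zero⟩) Subset.rfl
  exact (prod_dvd_prod_of_subset _ _ _ h1).trans (Nat.prod_primeFactors_dvd _)

theorem sum_half_pow (z : ℕ) : ∑ a ∈ Icc 1 z, (1 / 2 ^ a : ℝ) = 1 - 1 / 2 ^ z := by
  induction z with
  | zero => simp
  | succ z ih =>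
    rw [sum_Icc_succ_top (by omega), ih, pow_succ]
    field_simp
    ring

theorem log_add_le_selbergSum {q z : ℕ} (hq : q ≠ 0) (hz : 100 ≤ z) :
    Real.log z + 0.88 ≤ q / q.totient * selbergSum q z := by
  set f : ℕ × ℕ → ℕ := fun a => 2 ^ a.1 * (2 * a.2 + 1) with hf
  set U : Finset (ℕ × ℕ) := ({0} ×ˢ range ((z + 1) / 2)) ∪ (Icc 1 z ×ˢ range ((z / 2 + 1) / 2))
  have h1 := sum_one_div_le_selbergSum (q := q) (z := z) hq (T := U.image f) (by
    intro n hn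
    obtain ⟨⟨a, j⟩, hb, rfl⟩ := mem_image.1 hn
    refine ⟨by simp [hf], ?_⟩
    simp only [U, mem_union, mem_product, mem_singleton, mem_range, mem_Icc] at hb
    rcases hb with ⟨rfl, hj⟩ | ⟨ha, hj⟩
    · refine (Nat.le_of_dvd (by simp [hf]) (coprimeRadical_dvd _ _)).trans ?_
      simp only [hf]; omega
    · exact coprimeRadical_two_pow_mul_le (by omega))
  rw [sum_image fun a _ b _ h => two_pow_mul_odd_injective h, sum_union (by
    rw [disjoint_left]
    rintro ⟨a, j⟩ h h'
    simp only [mem_product, mem_singleton, mem_Icc] at h h'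
    omega), sum_product, sum_product, sum_singleton] at h1
  have h2 : ∀ a j : ℕ, 1 / ((2 ^ a * (2 * j + 1) : ℕ) : ℝ) = 1 / 2 ^ a * (1 / (2 * j + 1)) := by
    intro a j
    push_cast
    field_simp
  simp only [h2, ← mul_sum, ← sum_mul, sum_half_pow] at h1
  rw [pow_zero, div_one, one_mul] at h1
  have h3 := le_sum_one_div_odd (J := (z + 1) / 2) (by omega)
  have h4 := le_sum_one_div_odd (J := (z / 2 + 1) / 2) (by omega)
  have hz' : (100 : ℝ) ≤ z := by exact_mod_cast hz
  have h5 : Real.log z ≤ Real.log (2 * (((z + 1) / 2 : ℕ) : ℝ) + 1) := by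
    refine Real.log_le_log (by positivity) ?_
    exact_mod_cast (by omega : z ≤ 2 * ((z + 1) / 2) + 1)
  have h6 : Real.log z - Real.log 2 ≤ Real.log (2 * (((z / 2 + 1) / 2 : ℕ) : ℝ) + 1) := by
    rw [← Real.log_div (by positivity) (by norm_num)]
    refine Real.log_le_log (by positivity) ?_
    rw [div_le_iff₀ (by norm_num)]
    exact_mod_cast (by omega : z ≤ (2 * ((z / 2 + 1) / 2) + 1) * 2)
  have h7 : (z : ℝ) * 10000 ≤ 2 ^ z := by
    have : ∀ n : ℕ, 100 ≤ n → n * 10000 ≤ 2 ^ n := by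
      intro n hn
      induction n, hn using Nat.le_induction with
      | base => norm_num
      | succ n hn ih => rw [pow_succ]; linarith
    exact_mod_cast this z hz
  have h8 := Real.log_le_sub_one_of_pos (show (0 : ℝ) < z by positivity)
  have h9 := Real.log_two_lt_d9
  have h9' := Real.log_two_gt_d9
  have h10 : 1 / 2 ^ z * (Real.log z / 2 - Real.log 2 / 2 + 0.614) ≤ (0.0001 : ℝ) := by
    rw [div_mul_eq_mul_div, div_le_iff₀ (by positivity)]
    linarith
  have h11 : (1 : ℝ) / 2 ^ z ≤ 1 := by
    rw [div_le_one (by positivity)]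
    exact one_le_pow₀ (by norm_num)
  have h12 : (1 - 1 / 2 ^ z) * (Real.log z / 2 - Real.log 2 / 2 + 0.614) ≤ (1 - 1 / 2 ^ z) *
      ∑ j ∈ range ((z / 2 + 1) / 2), 1 / (2 * j + 1 : ℝ) :=
    mul_le_mul_of_nonneg_left (by linarith) (by linarith)
  linarith

/-- The function `j` with `(p ^ 2 + 1) / (p - 1) = p * (1 + j p)`. -/
noncomputable def divisorExcess (p : ℕ) : ℝ := (p + 1) / (p * (p - 1))

theorem divisorExcess_nonneg (p : ℕ) : 0 ≤ divisorExcess p := by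
  rcases Nat.eq_zero_or_pos p with rfl | hp
  · simp [divisorExcess]
  have : (1 : ℝ) ≤ p := by exact_mod_cast hp
  exact div_nonneg (by positivity) (mul_nonneg (by positivity) (by linarith))

theorem sum_sq_divisors_div_totient {m : ℕ} (hm : Squarefree m) :
    (∑ d ∈ m.divisors, (d : ℝ) ^ 2) / m.totient =
      m * ∑ e ∈ m.divisors, ∏ p ∈ e.primeFactors, divisorExcess p := by
  have h1 : ∑ d ∈ m.divisors, (d : ℝ) ^ 2 = ∏ p ∈ m.primeFactors, (1 + (p : ℝ) ^ 2) := by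
    have hmul : (ArithmeticFunction.prodPrimeFactors fun p : ℕ => (p : ℝ) ^ 2).IsMultiplicative :=
      ArithmeticFunction.IsMultiplicative.prodPrimeFactors _
    have := hmul.prodPrimeFactors_one_add_of_squarefree hm
    rw [prod_congr rfl fun p hp => ?_, this]
    · refine sum_congr rfl fun d hd => ?_
      have hd' := hm.squarefree_of_dvd (Nat.dvd_of_mem_divisors hd)
      rw [ArithmeticFunction.prodPrimeFactors_apply hd'.ne_zero, prod_pow, ← Nat.cast_prod,
        Nat.prod_primeFactors_of_squarefree hd']
    · have hp := Nat.prime_of_mem_primeFactors hp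
      rw [ArithmeticFunction.prodPrimeFactors_apply hp.ne_zero, hp.primeFactors, prod_singleton]
  have h2 : ∑ e ∈ m.divisors, ∏ p ∈ e.primeFactors, divisorExcess p =
      ∏ p ∈ m.primeFactors, (1 + divisorExcess p) := by
    have hmul : (ArithmeticFunction.prodPrimeFactors divisorExcess).IsMultiplicative :=
      ArithmeticFunction.IsMultiplicative.prodPrimeFactors _
    have := hmul.prodPrimeFactors_one_add_of_squarefree hm
    rw [prod_congr rfl fun p hp => ?_, this]
    · refine sum_congr rfl fun d hd => ?_
      rw [ArithmeticFunction.prodPrimeFactors_apply (Nat.pos_of_mem_divisors hd).ne']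
    · have hp := Nat.prime_of_mem_primeFactors hp
      rw [ArithmeticFunction.prodPrimeFactors_apply hp.ne_zero, hp.primeFactors, prod_singleton]
  have h3 : (m.totient : ℝ) = ∏ p ∈ m.primeFactors, ((p : ℝ) - 1) := by
    have := Nat.totient_mul_prod_primeFactors m
    rw [Nat.prod_primeFactors_of_squarefree hm, mul_comm] at this
    rw [Nat.eq_of_mul_eq_mul_left (Nat.pos_of_ne_zero hm.ne_zero) this, Nat.cast_prod]
    exact prod_congr rfl fun p hp =>
      Nat.cast_pred (Nat.prime_of_mem_primeFactors hp).pos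
  have h4 : (m : ℝ) = ∏ p ∈ m.primeFactors, (p : ℝ) := by
    rw [← Nat.cast_prod, Nat.prod_primeFactors_of_squarefree hm]
  rw [h1, h2, h3, h4, ← prod_div_distrib, ← prod_mul_distrib]
  refine prod_congr rfl fun p hp => ?_
  have hp1 : (1 : ℝ) < p := by exact_mod_cast (Nat.prime_of_mem_primeFactors hp).one_lt
  have : (p : ℝ) - 1 ≠ 0 := by linarith
  rw [divisorExcess]
  field_simp
  ring

/-- The primes up to `z` not dividing `q`. -/
def primesCoprimeTo (q z : ℕ) : Finset ℕ := (Icc 1 z).filter fun p => p.Prime ∧ ¬ p ∣ q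

theorem sum_sieveSupport_prod_le (q z : ℕ) {g : ℕ → ℝ} (hg : ∀ p, 0 ≤ g p) :
    ∑ e ∈ sieveSupport q z, ∏ p ∈ e.primeFactors, g p ≤ ∏ p ∈ primesCoprimeTo q z, (1 + g p) := by
  rw [prod_one_add, ← sum_image (s := sieveSupport q z) (g := Nat.primeFactors)
    (f := fun s => ∏ p ∈ s, g p)]
  · refine sum_le_sum_of_subset_of_nonneg ?_ fun s _ _ => prod_nonneg fun p _ => hg p
    · intro s hs
      obtain ⟨e, he, rfl⟩ := mem_image.1 hs
      obtain ⟨⟨h1, h2⟩, -, h4⟩ := mem_sieveSupport.1 he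
      rw [mem_powerset]
      intro p hp
      have hpp := Nat.prime_of_mem_primeFactors hp
      have hpe := Nat.dvd_of_mem_primeFactors hp
      exact mem_filter.2 ⟨mem_Icc.2 ⟨hpp.pos, (Nat.le_of_dvd h1 hpe).trans h2⟩, hpp,
        hpp.coprime_iff_not_dvd.1 (h4.coprime_dvd_left hpe)⟩
  · intro a ha b hb hab
    rw [← Nat.prod_primeFactors_of_squarefree (mem_sieveSupport.1 ha).2.1,
      ← Nat.prod_primeFactors_of_squarefree (mem_sieveSupport.1 hb).2.1]
    exact congrArg (fun s => ∏ p ∈ s, p) hab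

theorem sum_multiples_le (e z : ℕ) (he : 0 < e) (S : Finset ℕ)
    (hS : ∀ m ∈ S, 1 ≤ m ∧ m ≤ z ∧ e ∣ m) :
    ∑ m ∈ S, (m : ℝ) ≤ (z : ℝ) ^ 2 / 2 * (1 / e) + z / 2 := by
  have h1 : S ⊆ (range (z / e + 1)).image (e * ·) := by
    intro m hm
    obtain ⟨-, h2, c, rfl⟩ := hS m hm
    refine mem_image.2 ⟨c, mem_range.2 (Nat.lt_succ_of_le ?_), rfl⟩
    exact (Nat.le_div_iff_mul_le he).2 (by rwa [mul_comm])
  have h2 : ∑ c ∈ range (z / e + 1), (c : ℝ) = (z / e : ℕ) * ((z / e : ℕ) + 1) / 2 := by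
    generalize z / e = k
    induction k with
    | zero => simp
    | succ k ih => rw [sum_range_succ, ih]; push_cast; ring
  calc ∑ m ∈ S, (m : ℝ) ≤ ∑ m ∈ (range (z / e + 1)).image (e * ·), (m : ℝ) :=
        sum_le_sum_of_subset_of_nonneg h1 fun _ _ _ => Nat.cast_nonneg _
    _ = e * ((z / e : ℕ) * ((z / e : ℕ) + 1) / 2) := by
        rw [sum_image fun a _ b _ h => Nat.eq_of_mul_eq_mul_left he h, ← h2, mul_sum]
        exact sum_congr rfl fun c _ => by push_cast; ring
    _ ≤ e * (z / e * (z / e + 1) / 2) := by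
        have : ((z / e : ℕ) : ℝ) ≤ z / e := Nat.cast_div_le
        gcongr
    _ = _ := by
        have : (e : ℝ) ≠ 0 := by exact_mod_cast he.ne'
        field_simp

theorem sum_divisors_sq_div_totient_le (q z : ℕ) :
    ∑ m ∈ sieveSupport q z, (∑ d ∈ m.divisors, (d : ℝ) ^ 2) / m.totient ≤
      (z : ℝ) ^ 2 / 2 * ∏ p ∈ primesCoprimeTo q z, (1 + divisorExcess p / p) +
        z / 2 * ∏ p ∈ primesCoprimeTo q z, (1 + divisorExcess p) := by
  set J : ℕ → ℝ := fun e => ∏ p ∈ e.primeFactors, divisorExcess p with hJ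
  have hJ0 : ∀ e, 0 ≤ J e := fun e => prod_nonneg fun p _ => divisorExcess_nonneg p
  have h1 : ∀ m ∈ sieveSupport q z, (∑ d ∈ m.divisors, (d : ℝ) ^ 2) / m.totient =
      ∑ e ∈ sieveSupport q z, if e ∣ m then (m : ℝ) * J e else 0 := by
    intro m hm
    rw [sum_sq_divisors_div_totient (mem_sieveSupport.1 hm).2.1, mul_sum, ← sum_filter]
    refine sum_congr ?_ fun _ _ => rfl
    ext e
    rw [mem_filter, Nat.mem_divisors]
    exact ⟨fun h => ⟨mem_sieveSupport_of_dvd hm h.1, h.1⟩,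
      fun h => ⟨h.2, (pos_of_mem_sieveSupport hm).ne'⟩⟩
  rw [sum_congr rfl h1, sum_comm]
  have h2 : ∀ e ∈ sieveSupport q z,
      (∑ m ∈ sieveSupport q z, if e ∣ m then (m : ℝ) * J e else 0) ≤
      (z : ℝ) ^ 2 / 2 * (∏ p ∈ e.primeFactors, divisorExcess p / p) + z / 2 * J e := by
    intro e he
    have he0 := pos_of_mem_sieveSupport he
    rw [← sum_filter, ← sum_mul, prod_div_distrib, ← Nat.cast_prod,
      Nat.prod_primeFactors_of_squarefree (mem_sieveSupport.1 he).2.1]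
    have := sum_multiples_le e z he0 ((sieveSupport q z).filter (e ∣ ·)) fun m hm => by
      rw [mem_filter, mem_sieveSupport] at hm
      exact ⟨hm.1.1.1, hm.1.1.2, hm.2⟩
    calc _ ≤ ((z : ℝ) ^ 2 / 2 * (1 / e) + z / 2) * J e := by gcongr; exact hJ0 e
      _ = _ := by rw [hJ]; ring
  refine (sum_le_sum h2).trans ?_
  rw [sum_add_distrib, ← mul_sum, ← mul_sum]
  have h3 := sum_sieveSupport_prod_le q z divisorExcess_nonneg
  have h4 := sum_sieveSupport_prod_le q z (g := fun p => divisorExcess p / p) fun p =>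
    div_nonneg (divisorExcess_nonneg p) (Nat.cast_nonneg p)
  gcongr

theorem prod_primes_le_of_step {g b : ℕ → ℝ} (hg : ∀ p, 1 ≤ g p) {k : ℕ}
    (base : ∏ p ∈ (Icc 1 (2 * k + 2)).filter Nat.Prime, g p ≤ b k)
    (step : ∀ i ≥ k, b i * g (2 * i + 3) ≤ b (i + 1)) {i : ℕ} (hi : k ≤ i) :
    ∏ p ∈ (Icc 1 (2 * i + 2)).filter Nat.Prime, g p ≤ b i := by
  induction i, hi using Nat.le_induction with
  | base => exact base
  | succ i hi ih =>
    refine le_trans ?_ ((mul_le_mul_of_nonneg_right ih (by linarith [hg (2 * i + 3)])).trans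
      (step i hi))
    rw [mul_comm _ (g _), ← prod_insert (by simp)]
    refine prod_mono_set_of_one_le hg fun p hp => ?_
    obtain ⟨h1, h2⟩ := mem_filter.1 hp
    rw [mem_Icc] at h1
    rw [mem_insert, mem_filter, mem_Icc]
    have : p ≠ 2 * i + 4 := fun h => by
      have := (Nat.prime_dvd_prime_iff_eq Nat.prime_two h2).1 ⟨i + 2, by omega⟩
      omega
    rcases eq_or_ne p (2 * i + 3) with h | h
    · exact Or.inl h
    · exact Or.inr ⟨by omega, h2⟩

theorem prod_one_add_divisorExcess_le {z : ℕ} (hz : 4 ≤ z) (q : ℕ) :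
    ∏ p ∈ primesCoprimeTo q z, (1 + divisorExcess p) ≤ 3 * √z := by
  have hg : ∀ p, 1 ≤ 1 + divisorExcess p := fun p => by linarith [divisorExcess_nonneg p]
  have h1 := prod_primes_le_of_step (g := fun p => 1 + divisorExcess p)
    (b := fun i => 25 / 6 * √i) hg (k := 1) (by
      rw [show (Icc 1 (2 * 1 + 2)).filter Nat.Prime = {2, 3} by decide]
      norm_num [divisorExcess]) (by
      intro i hi
      have hi' : (1 : ℝ) ≤ i := by exact_mod_cast hi
      rw [mul_assoc]
      refine mul_le_mul_of_nonneg_left (Real.le_sqrt_of_sq_le ?_) (by norm_num)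
      rw [mul_pow, Real.sq_sqrt (by positivity), divisorExcess]
      push_cast
      have h2 : (1 + (2 * (i : ℝ) + 3 + 1) / ((2 * i + 3) * (2 * i + 3 - 1))) =
          ((2 * i + 3) ^ 2 + 1) / ((2 * i + 3) * (2 * i + 2)) := by
        have : 2 * (i : ℝ) + 3 - 1 ≠ 0 := by linarith
        field_simp
        ring
      rw [h2, div_pow, ← mul_div_assoc, div_le_iff₀ (by positivity)]
      nlinarith [pow_pos (show (0 : ℝ) < i by linarith) 2, pow_pos (show (0 : ℝ) < i by linarith) 3])
    (i := (z - 1) / 2) (by omega)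
  refine le_trans (prod_mono_set_of_one_le hg fun p hp => ?_) (h1.trans ?_)
  · obtain ⟨h2, h3, -⟩ := mem_filter.1 hp
    rw [mem_Icc] at h2
    exact mem_filter.2 ⟨mem_Icc.2 (by omega), h3⟩
  · refine (pow_le_pow_iff_left₀ (by positivity) (by positivity) two_ne_zero).1 ?_
    rw [mul_pow, mul_pow, Real.sq_sqrt (by positivity), Real.sq_sqrt (by positivity)]
    have : (((z - 1) / 2 : ℕ) : ℝ) * 2 ≤ z := by exact_mod_cast (by omega : (z - 1) / 2 * 2 ≤ z)
    linarith

/-- An upper bound for both the factor at `p` in the main term of the remainder sum (for `p ∤ q`)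
and `p / (p - 1)` divided by `p ^ (1 / 16)` (for `p ∣ q`). -/
noncomputable def localFactor (p : ℕ) : ℝ :=
  if p = 2 then 49 / 16 else if p = 3 then 3 / 2 else if p = 5 then 1.131 else
    if p = 7 then 1.056 else (1 + divisorExcess p / p) ^ 2

theorem one_le_one_add_divisorExcess_div (p : ℕ) : 1 ≤ 1 + divisorExcess p / p := by
  linarith [div_nonneg (divisorExcess_nonneg p) (Nat.cast_nonneg p)]

theorem one_le_localFactor (p : ℕ) : 1 ≤ localFactor p := by
  rw [localFactor]
  split_ifs
  iterate 4 norm_num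
  exact one_le_pow₀ (one_le_one_add_divisorExcess_div p)

theorem one_add_divisorExcess_div_sq_le (p : ℕ) :
    (1 + divisorExcess p / p) ^ 2 ≤ localFactor p := by
  rw [localFactor]
  split_ifs with h h h h
  iterate 4 subst h; norm_num [divisorExcess]
  exact le_rfl

theorem div_sub_one_le_localFactor {p : ℕ} (hp : p.Prime) :
    (1 - (p : ℝ)⁻¹)⁻¹ ≤ localFactor p * (p : ℝ) ^ ((1 : ℝ) / 16) := by
  have h1 : ∀ c : ℝ, 0 ≤ c → c ^ 16 ≤ p → c ≤ (p : ℝ) ^ ((1 : ℝ) / 16) := by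
    intro c hc h
    rw [show c = (c ^ 16) ^ ((1 : ℝ) / 16) by
      rw [← Real.rpow_natCast, ← Real.rpow_mul hc]; norm_num]
    exact Real.rpow_le_rpow (by positivity) h (by norm_num)
  by_cases h11 : 11 ≤ p
  · have hp' : (11 : ℝ) ≤ p := by exact_mod_cast h11
    have h2 := h1 1.1 (by norm_num) (by norm_num; linarith)
    have h3 : (1 - (p : ℝ)⁻¹)⁻¹ ≤ 1.1 := by
      rw [inv_le_comm₀ (by linarith [inv_lt_one_of_one_lt₀ (show (1 : ℝ) < p by linarith)])
        (by norm_num)]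
      have := inv_anti₀ (by norm_num) hp'
      norm_num at this ⊢
      linarith
    calc _ ≤ 1 * (p : ℝ) ^ ((1 : ℝ) / 16) := by linarith
      _ ≤ _ := by gcongr; exact one_le_localFactor p
  · have h2 : p = 2 ∨ p = 3 ∨ p = 5 ∨ p = 7 := by
      have := hp.two_le
      interval_cases p <;> first | omega | (exfalso; revert hp; norm_num)
    rcases h2 with rfl | rfl | rfl | rfl
    · have := h1 1 (by norm_num) (by norm_num)
      norm_num [localFactor] at this ⊢
      linarith
    · have := h1 1 (by norm_num) (by norm_num)
      norm_num [localFactor] at this ⊢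
      linarith
    · have := h1 (1250 / 1131) (by norm_num) (by norm_num)
      norm_num [localFactor] at this ⊢
      linarith
    · have := h1 1.12 (by norm_num) (by norm_num)
      norm_num [localFactor] at this ⊢
      linarith

theorem prod_localFactor_le (W : ℕ) : ∏ p ∈ (Icc 1 W).filter Nat.Prime, localFactor p ≤ 6.16 := by
  set c : ℕ → ℝ := fun i => 1 - 1 / (2 * (2 * i + 1)) with hc
  have h1 := prod_primes_le_of_step one_le_localFactor
    (b := fun i => 5.487 * (18 / 17 * c i) ^ 2) (k := 4) (by
      rw [show (Icc 1 (2 * 4 + 2)).filter Nat.Prime = {2, 3, 5, 7} by decide]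
      norm_num [localFactor, hc]) (by
      intro i hi
      have hi' : (4 : ℝ) ≤ i := by exact_mod_cast hi
      rw [mul_assoc]
      simp only [localFactor]
      rw [if_neg (by omega), if_neg (by omega), if_neg (by omega), if_neg (by omega),
        ← mul_pow, mul_assoc (18 / 17)]
      have hpos : 0 ≤ c i := by
        simp only [hc]
        rw [sub_nonneg, div_le_one (by positivity)]
        linarith
      have : c i * (1 + divisorExcess (2 * i + 3) / (2 * i + 3 : ℕ)) ≤ c (i + 1) := by
        have h2 : divisorExcess (2 * i + 3) / (2 * i + 3 : ℕ) ≤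
            1 / ((2 * i + 1) * (2 * i + 3)) := by
          rw [divisorExcess, div_div]
          push_cast
          rw [div_le_div_iff₀ (by have : 0 < 2 * (i : ℝ) + 3 - 1 := by linarith
                                  positivity) (by positivity)]
          nlinarith
        have h3 : c (i + 1) = c i + 1 / ((2 * i + 1) * (2 * i + 3)) := by
          simp only [hc]
          push_cast
          field_simp
          ring
        have h4 : c i ≤ 1 := by
          simp only [hc]
          rw [sub_le_self_iff]
          positivity
        rw [h3, mul_add, mul_one]
        have := div_nonneg (divisorExcess_nonneg (2 * i + 3)) (Nat.cast_nonneg (2 * i + 3))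
        nlinarith
      have h0 := one_le_one_add_divisorExcess_div (2 * i + 3)
      gcongr)
    (i := W + 4) (by omega)
  refine le_trans (prod_mono_set_of_one_le one_le_localFactor fun p hp => ?_) (h1.trans ?_)
  · obtain ⟨h2, h3⟩ := mem_filter.1 hp
    rw [mem_Icc] at h2
    exact mem_filter.2 ⟨mem_Icc.2 (by omega), h3⟩
  · have h2 : c (W + 4) ≤ 1 := by
      simp only [hc]
      rw [sub_le_self_iff]
      positivity
    have h3 : 0 ≤ c (W + 4) := by
      simp only [hc]
      rw [sub_nonneg, div_le_one (by positivity)]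
      push_cast
      linarith [show (0 : ℝ) ≤ W from Nat.cast_nonneg W]
    calc _ ≤ 5.487 * (18 / 17 * 1 : ℝ) ^ 2 := by gcongr
      _ ≤ _ := by norm_num

theorem prod_sq_mul_div_totient_le {q : ℕ} (hq : q ≠ 0) (z : ℕ) :
    (∏ p ∈ primesCoprimeTo q z, (1 + divisorExcess p / p)) ^ 2 * (q / q.totient) ≤
      6.16 * (q : ℝ) ^ ((1 : ℝ) / 16) := by
  have h1 : (∏ p ∈ primesCoprimeTo q z, (1 + divisorExcess p / p)) ^ 2 ≤
      ∏ p ∈ primesCoprimeTo q z, localFactor p := by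
    rw [← prod_pow]
    exact prod_le_prod (fun p _ => sq_nonneg _) fun p _ => one_add_divisorExcess_div_sq_le p
  have h2 : (q : ℝ) / q.totient ≤
      (∏ p ∈ q.primeFactors, localFactor p) * (q : ℝ) ^ ((1 : ℝ) / 16) := by
    rw [totient_div_eq_prod q hq]
    calc _ ≤ ∏ p ∈ q.primeFactors, (localFactor p * (p : ℝ) ^ ((1 : ℝ) / 16)) := by
          refine prod_le_prod (fun p hp => ?_) fun p hp =>
            div_sub_one_le_localFactor (Nat.prime_of_mem_primeFactors hp)
          have : (1 : ℝ) < p := by exact_mod_cast (Nat.prime_of_mem_primeFactors hp).one_lt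
          exact inv_nonneg.2 (by linarith [inv_lt_one_of_one_lt₀ this])
      _ ≤ _ := by
          rw [prod_mul_distrib, Real.finsetProd_rpow _ _ fun _ _ => Nat.cast_nonneg _]
          refine mul_le_mul_of_nonneg_left (Real.rpow_le_rpow (by positivity) ?_ (by norm_num))
            (prod_nonneg fun p _ => zero_le_one.trans (one_le_localFactor p))
          rw [← Nat.cast_prod]
          exact_mod_cast Nat.le_of_dvd (Nat.pos_of_ne_zero hq) (Nat.prod_primeFactors_dvd q)
  have h3 : (∏ p ∈ primesCoprimeTo q z, localFactor p) * ∏ p ∈ q.primeFactors, localFactor p ≤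
      6.16 := by
    rw [← prod_union (by
      rw [disjoint_left]
      intro p hp hp'
      exact (mem_filter.1 hp).2.2 (Nat.dvd_of_mem_primeFactors hp'))]
    refine le_trans (prod_mono_set_of_one_le one_le_localFactor fun p hp => ?_)
      (prod_localFactor_le (z + q))
    rw [mem_filter, mem_Icc]
    rcases mem_union.1 hp with h | h
    · obtain ⟨h4, h5, -⟩ := mem_filter.1 h
      rw [mem_Icc] at h4
      exact ⟨by omega, h5⟩
    · have h4 := Nat.prime_of_mem_primeFactors h
      have h5 := Nat.le_of_mem_primeFactors h
      exact ⟨⟨h4.pos, by omega⟩, h4⟩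
  have h4 : 0 ≤ ∏ p ∈ primesCoprimeTo q z, localFactor p :=
    prod_nonneg fun p _ => zero_le_one.trans (one_le_localFactor p)
  calc _ ≤ (∏ p ∈ primesCoprimeTo q z, localFactor p) *
        ((∏ p ∈ q.primeFactors, localFactor p) * (q : ℝ) ^ ((1 : ℝ) / 16)) := by gcongr
    _ ≤ _ := by rw [← mul_assoc]; gcongr

theorem sum_divisors_sq_div_totient_sq_le (q : ℕ) {z : ℕ} (hz : 10 ^ 6 ≤ z) :
    (∑ m ∈ sieveSupport q z, (∑ d ∈ m.divisors, (d : ℝ) ^ 2) / m.totient) ^ 2 ≤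
      1.01 / 4 * (z : ℝ) ^ 4 * (∏ p ∈ primesCoprimeTo q z, (1 + divisorExcess p / p)) ^ 2 := by
  set C := ∏ p ∈ primesCoprimeTo q z, (1 + divisorExcess p / p) with hC
  have h1 := sum_divisors_sq_div_totient_le q z
  rw [← hC] at h1
  have hC1 : 1 ≤ C := by
    simpa using prod_mono_set_of_one_le one_le_one_add_divisorExcess_div (empty_subset (primesCoprimeTo q z))
  have h2 := prod_one_add_divisorExcess_le (by omega : 4 ≤ z) q
  have hz' : (10 : ℝ) ^ 6 ≤ z := by exact_mod_cast hz
  have h3 : √(z : ℝ) * 1000 ≤ z := by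
    have : (1000 : ℝ) ≤ √z := Real.le_sqrt_of_sq_le (by linarith)
    nlinarith [Real.sq_sqrt (show (0 : ℝ) ≤ z by positivity)]
  have h4 : ∑ m ∈ sieveSupport q z, (∑ d ∈ m.divisors, (d : ℝ) ^ 2) / m.totient ≤
      1.003 / 2 * (z : ℝ) ^ 2 * C := by
    refine h1.trans ?_
    have : (z : ℝ) / 2 * ∏ p ∈ primesCoprimeTo q z, (1 + divisorExcess p) ≤
        z / 2 * (3 * (z / 1000) * C) := by
      refine mul_le_mul_of_nonneg_left (h2.trans ?_) (by positivity)
      nlinarith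
    nlinarith
  calc _ ≤ (1.003 / 2 * (z : ℝ) ^ 2 * C) ^ 2 := by
        gcongr
    _ = 1.003 ^ 2 / 4 * z ^ 4 * C ^ 2 := by ring
    _ ≤ _ := by gcongr; norm_num

/-- The Brun–Titchmarsh type bound used for each residue class. -/
theorem sum_prime_modEq_trapezoid_le_log (N a : ℕ) {q z : ℕ} (hq : 0 < q) (hz : 10 ^ 6 ≤ z) :
    ∑ p ∈ (range N).filter (fun p => p ≡ a [MOD q] ∧ p.Prime ∧ z < p), (trapezoid N p : ℝ) ≤
      (0.15 * (N : ℝ) ^ 2 / (Real.log z + 0.88) +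
        0.973 * (z : ℝ) ^ 4 * ((q : ℝ) ^ 2 * (q : ℝ) ^ ((1 : ℝ) / 16)) /
          (Real.log z + 0.88) ^ 2) / q.totient := by
  refine (sum_prime_modEq_trapezoid_le N a hq (by omega : 1 ≤ z)).trans ?_
  have hG := log_add_le_selbergSum hq.ne' (by omega : 100 ≤ z)
  have hH := sum_divisors_sq_div_totient_sq_le q hz
  have hK := prod_sq_mul_div_totient_le hq.ne' z
  set G := selbergSum q z
  set H := ∑ m ∈ sieveSupport q z, (∑ d ∈ m.divisors, (d : ℝ) ^ 2) / m.totient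
  set C := ∏ p ∈ primesCoprimeTo q z, (1 + divisorExcess p / p)
  set l := Real.log z + 0.88 with hl
  have hz' : (1 : ℝ) ≤ z := by exact_mod_cast (by omega : 1 ≤ z)
  have hl0 : 0 < l := by linarith [Real.log_nonneg hz']
  have hq0 : (0 : ℝ) < q := by exact_mod_cast hq
  have hφ : (0 : ℝ) < q.totient := by exact_mod_cast Nat.totient_pos.2 hq
  have hG' : l * q.totient / q ≤ G := by
    rw [div_le_iff₀ hq0]
    calc l * q.totient ≤ q / q.totient * G * q.totient := by gcongr
      _ = G * q := by field_simp
  have h1 : 0.15 * (N : ℝ) ^ 2 / (q * G) ≤ 0.15 * (N : ℝ) ^ 2 / l / q.totient := by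
    rw [div_div]
    refine div_le_div_of_nonneg_left (by positivity) (by positivity) ?_
    rw [div_le_iff₀ hq0] at hG'
    linarith
  have h2 : 5 * q / 8 * (H / G) ^ 2 ≤
      0.973 * (z : ℝ) ^ 4 * ((q : ℝ) ^ 2 * (q : ℝ) ^ ((1 : ℝ) / 16)) / l ^ 2 / q.totient := by
    rw [div_pow]
    calc 5 * q / 8 * (H ^ 2 / G ^ 2)
        ≤ 5 * q / 8 * ((1.01 / 4 * (z : ℝ) ^ 4 * C ^ 2) / (l * q.totient / q) ^ 2) := by gcongr
      _ = 5.05 / 32 * (z : ℝ) ^ 4 * q ^ 2 * (C ^ 2 * (q / q.totient)) / l ^ 2 / q.totient := by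
          field_simp
          ring
      _ ≤ 5.05 / 32 * (z : ℝ) ^ 4 * q ^ 2 * (6.16 * (q : ℝ) ^ ((1 : ℝ) / 16)) / l ^ 2 /
          q.totient := by gcongr
      _ = (5.05 / 32 * 6.16) * ((z : ℝ) ^ 4 * ((q : ℝ) ^ 2 * (q : ℝ) ^ ((1 : ℝ) / 16))) / l ^ 2 /
          q.totient := by ring
      _ ≤ 0.973 * ((z : ℝ) ^ 4 * ((q : ℝ) ^ 2 * (q : ℝ) ^ ((1 : ℝ) / 16))) / l ^ 2 /
          q.totient := by gcongr; norm_num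
      _ = _ := by ring
  rw [add_div]
  exact add_le_add h1 h2

theorem log_le_mul_exp_half {L : ℝ} (hL : 36 ≤ L) : L ≤ 0.00001 * Real.exp (L / 2) := by
  have h1 : Real.exp (L / 2) = Real.exp 1 ^ 18 * Real.exp (L / 2 - 18) := by
    rw [← Real.exp_nat_mul, ← Real.exp_add]
    congr 1
    push_cast
    ring
  have h2 : (60000000 : ℝ) ≤ Real.exp 1 ^ 18 := by
    calc (60000000 : ℝ) ≤ 2.718 ^ 18 := by norm_num
      _ ≤ _ := by gcongr; linarith [Real.exp_one_gt_d9]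
  have h3 := Real.add_one_le_exp (L / 2 - 18)
  rw [h1]
  nlinarith

/-- The lower bound for the sum over primes exceeds the sieve bound for `2 / 5` of the classes
together with the contribution of the exceptional primes. -/
theorem main_inequality {L l N s y : ℝ} (hL : 36 ≤ L) (hs : s = Real.exp (L / 2))
    (hN : N = 2 * s ^ 2) (hl : 0.40332 * L + 0.4214 ≤ l) (hy0 : 0 ≤ y)
    (hy : y ≤ 2 * s) :
    L * (0.4 * (0.15 * N ^ 2 / l + 0.03892 * N ^ 2 / l ^ 2) + 0.6 * N * y) <
      0.14895 * N ^ 2 - 6 * N * (Real.log N + 2) - 1.2 * N * √N * Real.log N := by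
  have h1 := log_le_mul_exp_half hL
  rw [← hs] at h1
  have hs0 : 0 < s := hs ▸ Real.exp_pos _
  have hs1 : 3600000 ≤ s := by linarith
  have hN0 : 0 < N := by rw [hN]; positivity
  have hlog : Real.log N ≤ L + 0.7 := by
    rw [hN, Real.log_mul (by norm_num) (by positivity), Real.log_pow, hs, Real.log_exp]
    have := Real.log_two_lt_d9
    push_cast
    linarith
  have hlog' : Real.log N ≤ 0.00002 * s := by linarith
  have hs2 : s ^ 2 = N / 2 := by linarith
  have hlog0 : 0 ≤ Real.log N := Real.log_nonneg (by nlinarith)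
  have hsqrt : √N ≤ 1.5 * s := by
    rw [Real.sqrt_le_left (by positivity), hN]
    nlinarith
  have hl0 : 0 < l := by linarith
  have e1 : 6 * N * (Real.log N + 2) ≤ 0.00001 * N ^ 2 := by
    have : 6 * (Real.log N + 2) ≤ 0.00001 * N := by
      have : 0.00001 * (2 * s ^ 2) ≥ 36 * s := by nlinarith
      linarith
    nlinarith
  have e2 : 1.2 * N * √N * Real.log N ≤ 0.00002 * N ^ 2 := by
    calc 1.2 * N * √N * Real.log N ≤ 1.2 * N * (1.5 * s) * (0.00002 * s) := by gcongr
      _ = 0.000036 * N * s ^ 2 := by ring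
      _ ≤ _ := by rw [hs2]; nlinarith
  have e3 : L * (0.6 * N * y) ≤ 0.00001 * N ^ 2 := by
    calc L * (0.6 * N * y) ≤ (0.00001 * s) * (0.6 * N * (2 * s)) := by gcongr
      _ = 0.000012 * N * s ^ 2 := by ring
      _ ≤ _ := by rw [hs2]; nlinarith
  have e4 : L * (0.4 * (0.15 * N ^ 2 / l + 0.03892 * N ^ 2 / l ^ 2)) ≤ 0.1489 * N ^ 2 := by
    have : L * (0.4 * (0.15 / l + 0.03892 / l ^ 2)) ≤ 0.1489 := by
      have h2 : L * (0.4 * (0.15 / l + 0.03892 / l ^ 2)) = L * (0.06 * l + 0.015568) / l ^ 2 := by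
        field_simp
        ring
      rw [h2, div_le_iff₀ (by positivity)]
      nlinarith
    calc _ = L * (0.4 * (0.15 / l + 0.03892 / l ^ 2)) * N ^ 2 := by ring
      _ ≤ _ := by gcongr
  have : 0 < N ^ 2 := by positivity
  nlinarith

theorem exists_sieve_level {q X : ℕ} (hq : 0 < q) (hX : 9 * 10 ^ 15 ≤ X)
    (h : q ^ 16 ≤ (X + 30) ^ 3) :
    ∃ z : ℕ, 10 ^ 6 ≤ z ∧ (z + q : ℝ) ≤ 2 * Real.exp (Real.log X / 2) ∧
      (z : ℝ) ^ 4 * ((q : ℝ) ^ 2 * (q : ℝ) ^ ((1 : ℝ) / 16)) ≤ 0.16 * X ^ 2 ∧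
      36 ≤ Real.log X ∧ 0.40332 * Real.log X + 0.4214 ≤ Real.log z + 0.88 := by
  have hX' : (9000000000000000 : ℝ) ≤ X := by
    have : ((9 * 10 ^ 15 : ℕ) : ℝ) ≤ X := by exact_mod_cast hX
    norm_num at this ⊢
    exact this
  have hX0 : (0 : ℝ) < X := by linarith
  have hq0 : (0 : ℝ) < q := by exact_mod_cast hq
  set L := Real.log X with hLdef
  set ℓ := Real.log q with hℓdef
  have hL : 36 ≤ L := by
    rw [hLdef, Real.le_log_iff_exp_le hX0, show (36 : ℝ) = (36 : ℕ) * 1 by norm_num,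
      Real.exp_nat_mul]
    calc Real.exp 1 ^ 36 ≤ 2.7183 ^ 36 := by gcongr; linarith [Real.exp_one_lt_d9]
      _ ≤ 9000000000000000 := by norm_num
      _ ≤ _ := hX'
  have hℓ : 16 * ℓ ≤ 3 * L + 0.000001 := by
    have h1 : Real.log ((q : ℝ) ^ 16) ≤ Real.log ((X + 30 : ℝ) ^ 3) :=
      Real.log_le_log (by positivity) (by exact_mod_cast h)
    rw [Real.log_pow, Real.log_pow, show (X + 30 : ℝ) = X * (1 + 30 / X) by field_simp,
      Real.log_mul hX0.ne' (by positivity)] at h1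
    have h2 := Real.log_le_sub_one_of_pos (show (0 : ℝ) < 1 + 30 / X by positivity)
    have h3 : 30 / (X : ℝ) ≤ 0.0000001 := by
      rw [div_le_iff₀ hX0]
      linarith
    push_cast at h1
    linarith
  have hℓ0 : 0 ≤ ℓ := Real.log_nonneg (by exact_mod_cast hq)
  have hlog : -0.917 ≤ Real.log 0.4 ∧ Real.log 0.4 ≤ 0 := by
    refine ⟨?_, Real.log_nonpos (by norm_num) (by norm_num)⟩
    have h1 : Real.log ((2 : ℝ)⁻¹ ^ 41) ≤ Real.log ((0.4 : ℝ) ^ 31) :=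
      Real.log_le_log (by norm_num) (by norm_num)
    rw [Real.log_pow, Real.log_pow, Real.log_inv] at h1
    have := Real.log_two_lt_d9
    push_cast at h1
    linarith
  set t := (L + Real.log 0.4 - 33 / 32 * ℓ) / 2 with ht
  have ht14 : 14 ≤ t := by linarith
  have hT : (1100000 : ℝ) ≤ Real.exp t := by
    calc (1100000 : ℝ) ≤ 2.718 ^ 14 := by norm_num
      _ ≤ Real.exp 1 ^ 14 := by gcongr; linarith [Real.exp_one_gt_d9]
      _ = Real.exp 14 := by rw [← Real.exp_nat_mul]; norm_num
      _ ≤ _ := Real.exp_le_exp.2 ht14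
  have hzle : (⌊Real.exp t⌋₊ : ℝ) ≤ Real.exp t := Nat.floor_le (Real.exp_pos _).le
  have hzgt := Nat.lt_floor_add_one (Real.exp t)
  set z := ⌊Real.exp t⌋₊
  have hz6 : (1000000 : ℝ) ≤ z := by linarith
  refine ⟨z, ?_, ?_, ?_, hL, ?_⟩
  · have : ((10 ^ 6 : ℕ) : ℝ) ≤ z := by norm_num at hz6 ⊢; exact hz6
    exact_mod_cast this
  · have h1 : (q : ℝ) ≤ Real.exp (L / 2) := by
      rw [← Real.exp_log hq0]
      exact Real.exp_le_exp.2 (by linarith)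
    have h2 : Real.exp t ≤ Real.exp (L / 2) := Real.exp_le_exp.2 (by linarith)
    linarith
  · calc (z : ℝ) ^ 4 * ((q : ℝ) ^ 2 * (q : ℝ) ^ ((1 : ℝ) / 16))
        ≤ Real.exp t ^ 4 * ((q : ℝ) ^ 2 * (q : ℝ) ^ ((1 : ℝ) / 16)) := by gcongr
      _ = Real.exp (4 * t + (2 * ℓ + ℓ * (1 / 16))) := by
        rw [Real.exp_add, Real.exp_add, Real.rpow_def_of_pos hq0, ← hℓdef,
          show (q : ℝ) ^ 2 = Real.exp (2 * ℓ) by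
            rw [mul_comm, Real.exp_mul, hℓdef, Real.exp_log hq0]; norm_cast,
          ← Real.exp_nat_mul]
        norm_num
      _ = Real.exp (2 * (Real.log 0.4 + L)) := by congr 1; rw [ht]; ring
      _ = 0.16 * X ^ 2 := by
        rw [mul_comm, Real.exp_mul, Real.exp_add, hLdef, Real.exp_log hX0,
          Real.exp_log (by norm_num), Real.rpow_two]
        ring
  · have h1 : t - Real.log z ≤ 0.000001 := by
      have hz0 : (0 : ℝ) < z := by linarith
      rw [← Real.log_exp t, ← Real.log_div (Real.exp_pos _).ne' hz0.ne']
      refine (Real.log_le_sub_one_of_pos (by positivity)).trans ?_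
      rw [sub_le_iff_le_add, div_le_iff₀ hz0]
      linarith
    linarith

/-- The invertible classes modulo `q` of the primes up to `X`. -/
noncomputable def primeClasses (q X : ℕ) [NeZero q] : Finset (ZMod q)ˣ := by
  classical
  exact univ.filter fun u => ∃ p : ℕ, p.Prime ∧ p ≤ X ∧ (p : ZMod q) = u

theorem mem_primeClasses {q X : ℕ} [NeZero q] {u : (ZMod q)ˣ} :
    u ∈ primeClasses q X ↔ ∃ p : ℕ, p.Prime ∧ p ≤ X ∧ (p : ZMod q) = u := by
  simp [primeClasses]

/-- The primes up to `X = 30 * M` occupy more than `2 / 5` of the invertible classes modulo `q`, for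
`q` up to roughly `X ^ (3 / 16)`. -/
theorem two_mul_totient_lt_five_mul_card_primeClasses {q M : ℕ} [NeZero q]
    (hM : 9 * 10 ^ 15 ≤ 30 * M) (h : q ^ 16 ≤ (30 * M + 30) ^ 3) :
    2 * q.totient < 5 * #(primeClasses q (30 * M)) := by
  classical
  have hq : 0 < q := Nat.pos_of_ne_zero (NeZero.ne q)
  obtain ⟨z, hz, hzq, hzQ, hL, hl⟩ := exists_sieve_level hq hM h
  set X := 30 * M with hX
  set N := 60 * M with hN
  set A := primeClasses q X
  by_contra! hA
  have hw (n : ℕ) : (trapezoid N n : ℝ) ≤ 0.6 * N := by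
    have : (5 * trapezoid N n : ℝ) ≤ 3 * N := by exact_mod_cast five_mul_trapezoid_le N n
    linarith
  have hcover : (Icc 1 X).filter Nat.Prime ⊆
      (A.biUnion fun u => (range N).filter
        fun p => p ≡ (u : ZMod q).val [MOD q] ∧ p.Prime ∧ z < p) ∪ (Icc 1 z ∪ Icc 1 q) := by
    intro p hp
    simp only [mem_filter, mem_Icc] at hp
    obtain ⟨⟨hp1, hpX⟩, hp⟩ := hp
    simp only [mem_union, mem_biUnion, mem_filter, mem_range, mem_Icc]
    by_cases hpz : p ≤ z
    · exact Or.inr (Or.inl ⟨hp1, hpz⟩)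
    by_cases hpq : p ∣ q
    · exact Or.inr (Or.inr ⟨hp1, Nat.le_of_dvd hq hpq⟩)
    refine Or.inl ⟨ZMod.unitOfCoprime p ((Nat.Prime.coprime_iff_not_dvd hp).2 hpq),
      mem_primeClasses.2 ⟨p, hp, hpX, by simp⟩, by omega, ?_, hp, by omega⟩
    rw [← ZMod.natCast_eq_natCast_iff]
    simp
  have hφ : (0 : ℝ) < q.totient := by exact_mod_cast Nat.totient_pos.2 hq
  set l := Real.log z + 0.88
  set Q : ℝ := (q : ℝ) ^ 2 * (q : ℝ) ^ ((1 : ℝ) / 16)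
  have hL0 : 0 < Real.log (X : ℝ) := by linarith
  have hl0 : 0 < l := by linarith
  set B : ℝ := 0.15 * (N : ℝ) ^ 2 / l + 0.03892 * (N : ℝ) ^ 2 / l ^ 2 with hB
  have hNX : (N : ℝ) = 2 * X := by
    rw [hN, hX]
    push_cast
    ring
  have hclass (a : ℕ) : ∑ p ∈ (range N).filter (fun p => p ≡ a [MOD q] ∧ p.Prime ∧ z < p),
      (trapezoid N p : ℝ) ≤ B / q.totient := by
    refine (sum_prime_modEq_trapezoid_le_log N a hq hz).trans ?_
    rw [hB]
    gcongr ((_ + ?_ / _) / _)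
    rw [hNX]
    linarith
  have hsum : ∑ p ∈ (Icc 1 X).filter Nat.Prime, (trapezoid N p : ℝ) ≤
      0.4 * B + 0.6 * N * (z + q) := by
    have hB0 : 0 ≤ B := by positivity
    have hA' : 5 * (#A : ℝ) ≤ 2 * q.totient := by exact_mod_cast hA
    calc _ ≤ _ := sum_le_sum_of_subset_of_nonneg hcover fun _ _ _ => Nat.cast_nonneg _
      _ ≤ ∑ p ∈ A.biUnion fun u => (range N).filter
            fun p => p ≡ (u : ZMod q).val [MOD q] ∧ p.Prime ∧ z < p, (trapezoid N p : ℝ) +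
          ∑ p ∈ Icc 1 z ∪ Icc 1 q, (trapezoid N p : ℝ) := by
        rw [← sum_union_inter]
        exact le_add_of_nonneg_right (sum_nonneg fun _ _ => Nat.cast_nonneg _)
      _ ≤ ∑ u ∈ A, B / q.totient + (#(Icc 1 z ∪ Icc 1 q)) • (0.6 * N : ℝ) := by
        refine add_le_add ?_ (sum_le_card_nsmul _ _ _ fun p _ => hw p)
        rw [sum_biUnion]
        · exact sum_le_sum fun u _ => hclass _
        · intro u _ v _ huv
          rw [Function.onFun, disjoint_left]
          intro p hpu hpv
          refine huv (Units.ext (ZMod.val_injective q ?_))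
          have := ((mem_filter.1 hpu).2.1.symm.trans (mem_filter.1 hpv).2.1)
          exact Nat.ModEq.eq_of_lt_of_lt this (ZMod.val_lt _) (ZMod.val_lt _)
      _ ≤ _ := by
        refine add_le_add ?_ ?_
        · rw [sum_const, nsmul_eq_mul, mul_div_assoc', div_le_iff₀ hφ]
          nlinarith
        · have : (#(Icc 1 z ∪ Icc 1 q) : ℝ) ≤ z + q := by
            have := card_union_le (Icc 1 z) (Icc 1 q)
            simp only [Nat.card_Icc, Nat.add_sub_cancel] at this
            exact_mod_cast this
          rw [nsmul_eq_mul, mul_comm]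
          gcongr
  have hX0 : (0 : ℝ) < X := by
    have : 0 < X := by omega
    exact_mod_cast this
  have hlow := le_log_mul_sum_prime_trapezoid M (by omega)
  have hup := main_inequality hL rfl (N := N) (by
    rw [← Real.exp_nat_mul]
    push_cast
    rw [mul_div_cancel₀ _ two_ne_zero, Real.exp_log hX0, hNX]) hl (by positivity) hzq
  have := mul_le_mul_of_nonneg_left hsum hL0.le
  exact (hlow.trans this).not_gt hup

theorem exists_primes_mul_mul_modEq {q M a : ℕ} (hq : 1000 ≤ q)
    (hM : 9 * 10 ^ 15 ≤ 30 * M) (h : q ^ 16 ≤ (30 * M + 30) ^ 3) (ha : a.Coprime q) :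
    ∃ p₁ p₂ p₃ : ℕ, p₁.Prime ∧ p₂.Prime ∧ p₃.Prime ∧ p₁ ≤ 30 * M ∧ p₂ ≤ 30 * M ∧
      p₃ ≤ 30 * M ∧ p₁ * p₂ * p₃ ≡ a [MOD q] := by
  classical
  have : NeZero q := ⟨by omega⟩
  have hqX : (2 * q * (1 + q)) ^ 2 + q ≤ 30 * M := by
    by_contra! hlt
    have h1 : 30 * M + 30 ≤ 6 * q ^ 4 := by nlinarith [pow_le_pow_left₀ (by omega) hq 3]
    have h2 : q ^ 16 ≤ 216 * q ^ 12 :=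
      h.trans ((Nat.pow_le_pow_left h1 3).trans_eq (by ring))
    have h3 : 1000 ^ 4 ≤ q ^ 4 := Nat.pow_le_pow_left hq 4
    have h4 : 0 < q ^ 12 := by positivity
    nlinarith
  have key : primeClasses q (30 * M) * primeClasses q (30 * M) * primeClasses q (30 * M) =
      univ := by
    by_contra hne
    obtain ⟨H, hH, hin | hout⟩ := exists_index_two_of_mul_mul_ne_univ _
      (by rw [ZMod.card_units_eq_totient]
          exact two_mul_totient_lt_five_mul_card_primeClasses hM h) hne
    · obtain ⟨p, hp, hpq, hcop, hpH⟩ := exists_prime_notMem_of_index_two (NeZero.ne q) hH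
      exact hpH (hin _ (mem_primeClasses.2 ⟨p, hp, by omega, by simp⟩))
    · obtain ⟨p, hp, hpq, hcop, hpH⟩ := exists_prime_mem_of_index_two (NeZero.ne q) hH
      exact hout _ (mem_primeClasses.2 ⟨p, hp, by omega, by simp⟩) hpH
  have hmem := mem_univ (ZMod.unitOfCoprime a ha)
  simp only [← key, mem_mul, mem_primeClasses] at hmem
  obtain ⟨_, ⟨u, ⟨p₁, hp₁, hle₁, hu⟩, v, ⟨p₂, hp₂, hle₂, hv⟩, rfl⟩,
    w, ⟨p₃, hp₃, hle₃, hw⟩, heq⟩ := hmem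
  refine ⟨p₁, p₂, p₃, hp₁, hp₂, hp₃, hle₁, hle₂, hle₃, ?_⟩
  rw [← ZMod.natCast_eq_natCast_iff]
  push_cast
  rw [hu, hv, hw, ← Units.val_mul, ← Units.val_mul, heq, ZMod.coe_unitOfCoprime]

/-- The number whose `i`-th bit, for `i < 2 ^ k`, tells whether `1 < n + i` is coprime to
`363!`. -/
def primeMask : ℕ → ℕ → ℕ
  | 0, n => bif Nat.blt 1 n && Nat.gcd n (Nat.factorial 363) == 1 then 1 else 0
  | k + 1, n => primeMask k n ||| primeMask k (n + 2 ^ k) <<< 2 ^ k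

theorem prime_of_coprime_factorial {n m : ℕ} (hn : 1 < n) (hnm : n < m ^ 2)
    (h : n.Coprime m.factorial) : n.Prime := by
  by_contra hp
  have h1 := Nat.minFac_sq_le_self (by omega) hp
  have h2 : n.minFac ≤ m := (lt_of_pow_lt_pow_left' 2 (h1.trans_lt hnm)).le
  have hprime := Nat.minFac_prime hn.ne'
  exact Nat.not_coprime_of_dvd_of_dvd hprime.one_lt n.minFac_dvd
    (hprime.dvd_factorial.2 h2) h

theorem prime_of_testBit_primeMask {k n i : ℕ} (hk : n + 2 ^ k ≤ 131072)
    (h : (primeMask k n).testBit i) : (n + i).Prime ∧ i < 2 ^ k := by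
  induction k generalizing n i with
  | zero =>
    rw [primeMask] at h
    cases hc : (Nat.blt 1 n && Nat.gcd n (Nat.factorial 363) == 1)
    · simp [hc] at h
    · rw [hc, cond_true, Nat.testBit_one_eq_true_iff_self_eq_zero] at h
      subst h
      simp only [Bool.and_eq_true, Nat.blt_eq, beq_iff_eq] at hc
      exact ⟨prime_of_coprime_factorial (m := 363) hc.1 (by simp at hk ⊢; omega) hc.2, by simp⟩
  | succ k ih =>
    rw [pow_succ] at hk ⊢
    rw [primeMask, Nat.testBit_or, Nat.testBit_shiftLeft, Bool.or_eq_true, Bool.and_eq_true,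
      decide_eq_true_eq] at h
    rcases h with h | ⟨hi, h⟩
    · obtain ⟨h1, h2⟩ := ih (by omega) h
      exact ⟨h1, by omega⟩
    · obtain ⟨h1, h2⟩ := ih (by omega) h
      rw [show n + 2 ^ k + (i - 2 ^ k) = n + i by omega] at h1
      exact ⟨h1, by omega⟩

/-- Superposes the blocks of length `q` of the bits of `P`, if there are at most `2 ^ j` blocks. -/
def foldBits (q : ℕ) : ℕ → ℕ → ℕ
  | 0, P => P
  | j + 1, P => foldBits q j (P ||| P >>> (q * 2 ^ j))

theorem exists_testBit_of_testBit_foldBits {q j P i : ℕ} (h : (foldBits q j P).testBit i) :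
    ∃ n, n ≡ i [MOD q] ∧ P.testBit n := by
  induction j generalizing P with
  | zero => exact ⟨i, rfl, h⟩
  | succ j ih =>
    obtain ⟨n, hn, hP⟩ := ih h
    rw [Nat.testBit_or, Nat.testBit_shiftRight, Bool.or_eq_true] at hP
    rcases hP with hP | hP
    · exact ⟨n, hn, hP⟩
    · exact ⟨_, (by simp [Nat.ModEq] : q * 2 ^ j + n ≡ n [MOD q]).trans hn, hP⟩

/-- The number whose `i`-th bit, for `i < 2 ^ j * d`, tells whether `d ∣ i`. -/
def multiplesMask (d : ℕ) : ℕ → ℕ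
  | 0 => 1
  | j + 1 => multiplesMask d j ||| multiplesMask d j <<< (d * 2 ^ j)

theorem dvd_of_testBit_multiplesMask {d j i : ℕ} (h : (multiplesMask d j).testBit i) : d ∣ i := by
  induction j generalizing i with
  | zero =>
    rw [multiplesMask, Nat.testBit_one_eq_true_iff_self_eq_zero] at h
    exact h ▸ dvd_zero d
  | succ j ih =>
    rw [multiplesMask, Nat.testBit_or, Nat.testBit_shiftLeft, Bool.or_eq_true, Bool.and_eq_true,
      decide_eq_true_eq] at h
    rcases h with h | ⟨hi, h⟩
    · exact ih h
    · rw [← Nat.sub_add_cancel hi]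
      exact dvd_add (ih h) (dvd_mul_right _ _)

/-- A number whose `i`-th bit is set only if `i` is divisible by a divisor `d > 1` of `q`. -/
def noncoprimeMask (q : ℕ) : List ℕ → ℕ
  | [] => 0
  | r :: l => bif q % r == 0 then
      (bif q / r == 1 then 0 else multiplesMask (q / r) 10) |||
        (bif r == 1 then 0 else multiplesMask r 10) ||| noncoprimeMask q l
    else noncoprimeMask q l

theorem not_coprime_of_testBit_noncoprimeMask {q i : ℕ} {l : List ℕ}
    (h : (noncoprimeMask q l).testBit i) : ¬ i.Coprime q := by
  have key {d : ℕ} (hd : d ≠ 1) (hdq : d ∣ q) (h : (multiplesMask d 10).testBit i) :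
      ¬ i.Coprime q := fun hc =>
    hd (Nat.dvd_one.1 (hc ▸ Nat.dvd_gcd (dvd_of_testBit_multiplesMask h) hdq))
  induction l with
  | nil => simp [noncoprimeMask] at h
  | cons r l ih =>
    rw [noncoprimeMask] at h
    cases hr : q % r == 0
    · exact ih (by simpa [hr] using h)
    have hrq : r ∣ q := Nat.dvd_of_mod_eq_zero (by simpa using hr)
    simp only [hr, cond_true, Nat.testBit_or, Bool.or_eq_true] at h
    rcases h with (h | h) | h
    · cases h1 : q / r == 1
      · exact key (by simpa using h1) (Nat.div_dvd_of_dvd hrq) (by simpa [h1] using h)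
      · simp [h1] at h
    · cases h1 : r == 1
      · exact key (by simpa using h1) hrq (by simpa [h1] using h)
      · simp [h1] at h
    · exact ih h

/-- Whether the primes below `131072` found by `primeMask` represent all the classes coprime to
`q`. -/
def coversCoprimeClasses (q : ℕ) : Bool :=
  (foldBits q 17 (primeMask 17 0) ||| noncoprimeMask q (List.range 32)) % 2 ^ q == 2 ^ q - 1

/-- For every positive `q < 1000`, each coprime class modulo `q` contains a prime below `131072`. -/
theorem coversCoprimeClasses_of_lt :
    (List.range 1000).all (fun q => q == 0 || coversCoprimeClasses q) = true := by
  decide +kernel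

theorem exists_prime_modEq_of_lt {q a : ℕ} (hq : 0 < q) (hq' : q < 1000) (ha : a.Coprime q) :
    ∃ p, p.Prime ∧ p < 131072 ∧ p ≡ a [MOD q] := by
  have h := List.all_eq_true.1 coversCoprimeClasses_of_lt q (List.mem_range.2 hq')
  have hq0 : (q == 0) = false := by simpa using hq.ne'
  rw [hq0, Bool.false_or, coversCoprimeClasses, beq_iff_eq] at h
  have hbit := congrArg (fun n => n.testBit (a % q)) h
  simp only [Nat.testBit_mod_two_pow, Nat.testBit_two_pow_sub_one, Nat.mod_lt a hq, decide_true,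
    Bool.true_and, Nat.testBit_or, Bool.or_eq_true] at hbit
  rcases hbit with hbit | hbit
  · obtain ⟨p, hp, hP⟩ := exists_testBit_of_testBit_foldBits hbit
    obtain ⟨h1, h2⟩ := prime_of_testBit_primeMask (by norm_num) hP
    rw [zero_add] at h1
    exact ⟨p, h1, by simpa using h2, hp.trans (Nat.mod_modEq a q)⟩
  · refine absurd ?_ (not_coprime_of_testBit_noncoprimeMask hbit)
    rwa [Nat.Coprime, Nat.mod_modEq a q |>.gcd_eq]

theorem exists_primes_mul_mul_modEq_of_lt {q a : ℕ} (hq : 0 < q) (hq' : q < 1000)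
    (ha : a.Coprime q) :
    ∃ p₁ p₂ p₃ : ℕ, p₁.Prime ∧ p₂.Prime ∧ p₃.Prime ∧ p₁ < 131072 ∧ p₂ < 131072 ∧ p₃ < 131072 ∧
      p₁ * p₂ * p₃ ≡ a [MOD q] := by
  obtain ⟨p, hp, hlt, hpq⟩ := exists_prime_modEq_of_lt hq hq' (Nat.coprime_one_left q)
  obtain ⟨r, hr, hrlt, hrq⟩ := exists_prime_modEq_of_lt hq hq' ha
  exact ⟨p, p, r, hp, hp, hr, hlt, hlt, hrlt, by simpa using (hpq.mul hpq).mul hrq⟩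

theorem stmt_19 (x : ℝ) (hx : (10 : ℝ) ^ 16 ≤ x) (q : ℕ) (hq : 0 < q)
    (hqx : (q : ℝ) ≤ x ^ ((1 : ℝ) / 16)) (a : ℕ) (ha : a.Coprime q) :
    ∃ p₁ p₂ p₃ : ℕ, p₁.Prime ∧ p₂.Prime ∧ p₃.Prime ∧
      (p₁ : ℝ) ≤ x ^ ((1 : ℝ) / 3) ∧ (p₂ : ℝ) ≤ x ^ ((1 : ℝ) / 3) ∧
      (p₃ : ℝ) ≤ x ^ ((1 : ℝ) / 3) ∧ p₁ * p₂ * p₃ ≡ a [MOD q] := by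
  have hx0 : 0 ≤ x := by linarith [show (0 : ℝ) ≤ 10 ^ 16 by norm_num]
  set y := x ^ ((1 : ℝ) / 3)
  have hy0 : 0 ≤ y := Real.rpow_nonneg hx0 _
  have hy3 : y ^ 3 = x := by
    rw [← Real.rpow_natCast, ← Real.rpow_mul hx0]
    norm_num
  suffices H : ∃ B : ℕ, (B : ℝ) ≤ y ∧ ∃ p₁ p₂ p₃ : ℕ, p₁.Prime ∧ p₂.Prime ∧ p₃.Prime ∧
      p₁ ≤ B ∧ p₂ ≤ B ∧ p₃ ≤ B ∧ p₁ * p₂ * p₃ ≡ a [MOD q] by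
    obtain ⟨B, hB, p₁, p₂, p₃, h₁, h₂, h₃, hle₁, hle₂, hle₃, hmod⟩ := H
    have hle {p : ℕ} (hp : p ≤ B) : (p : ℝ) ≤ y := le_trans (by exact_mod_cast hp) hB
    exact ⟨p₁, p₂, p₃, h₁, h₂, h₃, hle hle₁, hle hle₂, hle hle₃, hmod⟩
  rcases lt_or_ge q 1000 with hq' | hq'
  · obtain ⟨p₁, p₂, p₃, h₁, h₂, h₃, hlt₁, hlt₂, hlt₃, hmod⟩ :=
      exists_primes_mul_mul_modEq_of_lt hq hq' ha
    refine ⟨131072, ?_, p₁, p₂, p₃, h₁, h₂, h₃, hlt₁.le, hlt₂.le, hlt₃.le, hmod⟩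
    refine le_of_pow_le_pow_left₀ three_ne_zero hy0 (le_trans ?_ (hx.trans_eq hy3.symm))
    norm_num
  · have hqx' : (q : ℝ) ^ 16 ≤ x := by
      calc (q : ℝ) ^ 16 ≤ (x ^ ((1 : ℝ) / 16)) ^ 16 := by gcongr
        _ = x := by
          rw [← Real.rpow_natCast, ← Real.rpow_mul hx0]
          norm_num
    have hy : (10 : ℝ) ^ 16 ≤ y := by
      refine le_of_pow_le_pow_left₀ three_ne_zero hy0 ?_
      rw [hy3]
      calc ((10 : ℝ) ^ 16) ^ 3 = 1000 ^ 16 := by norm_num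
        _ ≤ (q : ℝ) ^ 16 := by gcongr; exact_mod_cast hq'
        _ ≤ x := hqx'
    have hMle : (⌊y / 30⌋₊ : ℝ) ≤ y / 30 := Nat.floor_le (by positivity)
    have hMlt := Nat.lt_floor_add_one (y / 30)
    set M := ⌊y / 30⌋₊
    refine ⟨30 * M, by push_cast; linarith, exists_primes_mul_mul_modEq hq' ?_ ?_ ha⟩
    · have : (9 * 10 ^ 15 : ℝ) ≤ 30 * M := by norm_num at hy ⊢; linarith
      exact_mod_cast this
    · have : (q : ℝ) ^ 16 ≤ (30 * M + 30) ^ 3 := by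
        refine hqx'.trans (hy3.symm.trans_le ?_)
        gcongr
        linarith
      exact_mod_cast this
end
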